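/- Let q ≥ 3 be an integer and fix 0 ≤ β < β_s(q), and set α₁ = α₁(β,q) = 1/(2(1−2β/q)). Then the Glauber dynamics for the q-state Curie–Weiss Potts model exhibits cutoff at time α₁ n log n with window of order n: for every ε ∈ (0,1/2) there exists γ = γ(ε) > 0 such that for all sufficiently large n, t_mix(ε)(n) ≤ α₁ n log n + γ n and t_mix(1−ε)(n) ≥ α₁ n log n − γ n. -/

import Mathlib

open Finset Filter

/-- The (unnormalized) Curie–Weiss Potts weight of a configuration
`σ : Fin n → Fin q` at inverse temperature `β`:
`exp((β/n) * Σ_{u,v} 1[σ u = σ v])`. -/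
noncomputable def pottsWeight (q n : ℕ) (β : ℝ) (σ : Fin n → Fin q) : ℝ :=
  Real.exp ((β / (n : ℝ)) * ∑ u : Fin n, ∑ v : Fin n, if σ u = σ v then (1 : ℝ) else 0)

/-- The Curie–Weiss Potts probability measure `μ_n` on configurations. -/
noncomputable def pottsMeasure (q n : ℕ) (β : ℝ) (σ : Fin n → Fin q) : ℝ :=
  pottsWeight q n β σ / ∑ τ : Fin n → Fin q, pottsWeight q n β τ

/-- The transition matrix `P_n` of the Glauber dynamics: pick a uniform vertex `u`
and resample its color according to the conditional Potts distribution given the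
colors of all other vertices. -/
noncomputable def glauberKernel (q n : ℕ) (β : ℝ) :
    Matrix (Fin n → Fin q) (Fin n → Fin q) ℝ :=
  fun σ τ =>
    (1 / (n : ℝ)) * ∑ u : Fin n,
      if ∀ v : Fin n, v ≠ u → τ v = σ v then
        pottsMeasure q n β τ / ∑ k : Fin q, pottsMeasure q n β (Function.update σ u k)
      else 0

/-- Total-variation distance between two (probability) functions on a finite set:
`max_{A ⊆ S} |ν(A) − ν'(A)|`. -/
noncomputable def tvDist {S : Type*} [Fintype S] (ν ν' : S → ℝ) : ℝ :=
  ⨆ A : Finset S, |∑ x ∈ A, ν x - ∑ x ∈ A, ν' x|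

/-- Worst-case total-variation distance to stationarity after `t` steps:
`d_t(n) = max_{σ₀} ‖P_n^t(σ₀,·) − μ_n‖_TV`. -/
noncomputable def glauberDist (q n : ℕ) (β : ℝ) (t : ℕ) : ℝ :=
  ⨆ σ₀ : Fin n → Fin q,
    tvDist (fun τ => (glauberKernel q n β ^ t) σ₀ τ) (pottsMeasure q n β)

/-- The `ε`-mixing time `t_mix(ε)(n) = inf {t : d_t(n) ≤ ε}`. -/
noncomputable def mixingTime (q n : ℕ) (β : ℝ) (ε : ℝ) : ℕ :=
  sInf {t : ℕ | glauberDist q n β t ≤ ε}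

/-- The drift function `D_β(x) = −x + (1 + (q−1) e^{2β(1−qx)/(q−1)})⁻¹`. -/
noncomputable def Dfun (q : ℕ) (β x : ℝ) : ℝ :=
  -x + (1 + ((q : ℝ) - 1) * Real.exp (2 * β * (1 - (q : ℝ) * x) / ((q : ℝ) - 1)))⁻¹

/-- The dynamical (spinodal) critical inverse temperature
`β_s(q) = sup {β ≥ 0 : D_β(x) ≠ 0 for all x ∈ (1/q,1)}`. -/
noncomputable def betaS (q : ℕ) : ℝ :=
  sSup {β : ℝ | 0 ≤ β ∧ ∀ x ∈ Set.Ioo (1 / (q : ℝ)) 1, Dfun q β x ≠ 0}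

/-- The constant `α₁(β,q) = 1/(2(1 − 2β/q))`. -/
noncomputable def alpha1 (β : ℝ) (q : ℕ) : ℝ := 1 / (2 * (1 - 2 * β / (q : ℝ)))

/-- The static critical inverse temperature `β_c(q) = (q−1)log(q−1)/(q−2)`
for `q ≥ 3`, with `β_c(2) = 1`. -/
noncomputable def betaC (q : ℕ) : ℝ :=
  if q = 2 then 1 else ((q : ℝ) - 1) * Real.log ((q : ℝ) - 1) / ((q : ℝ) - 2)

/-!
Upper bound. Below `β_s` the drift pushes the color proportions towards `1/q`, so a Lyapunov
function shows that the squared deviations decay like `(1 - κ/n) ^ (2t)` with `κ = 1 - 2β/q`, down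
to order `1/n`. Under a coupling of two copies that agree as often as possible at each update, the
expected number of disagreements contracts at the same rate, so that after `α₁ n log n` steps from
any start it is of order `√n` against a stationary copy. The remaining disagreement is erased in
`O(n)` further steps: on test functions invariant under the permutations of sites that fix the
starting configuration, the dynamics at time `n` is smooth at scale `√n`, by a reverse Poincaré
inequality.

Lower bound. Tilting the deviation of one color by a multiple of the Lyapunov function makes it a
submartingale up to the factor `(1 - κ/n) ^ t`, with second moment fluctuations of order `1/n`.
Started at a constant distance from equilibrium, its mean at time `α₁ n log n - γ n` is `e^{κγ}/√n`
up to a constant, far above the equilibrium fluctuations of order `1/√n`.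
-/

namespace CurieWeissPotts

/-! ### Expectation functionals and Markov operators -/

section Markov

variable {A B : Type*}

/-- A normalized positive functional on real functions, that is, the expectation under a
(finitely additive) probability on `A`. -/
structure IsExpectation (E : (A → ℝ) →ₗ[ℝ] ℝ) : Prop where
  monotone : Monotone E
  map_one : E 1 = 1

/-- A normalized positive operator on real functions, that is, `L f b` is the mean of `f` under a
probability depending on `b`. -/
structure IsMarkov (L : (A → ℝ) →ₗ[ℝ] (B → ℝ)) : Prop where
  monotone : Monotone L
  map_one : L 1 = 1

namespace IsExpectation

variable {E : (A → ℝ) →ₗ[ℝ] ℝ} (hE : IsExpectation E)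
include hE

lemma map_const (c : ℝ) : E (fun _ ↦ c) = c := by
  have : (fun _ ↦ c) = c • (1 : A → ℝ) := by ext; simp
  rw [this, map_smul, hE.map_one, smul_eq_mul, mul_one]

lemma map_nonneg {f : A → ℝ} (hf : 0 ≤ f) : 0 ≤ E f := by
  simpa using hE.monotone hf

lemma map_affine (c d : ℝ) (f : A → ℝ) : E (fun a ↦ c * f a + d) = c * E f + d := by
  have : (fun a ↦ c * f a + d) = c • f + fun _ ↦ d := rfl
  rw [this, map_add, map_smul, hE.map_const, smul_eq_mul]

lemma map_sq_sub_sq (f : A → ℝ) (m : ℝ) :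
    E (fun a ↦ (f a - m) ^ 2) = E (f ^ 2) - (2 * m * E f - m ^ 2) := by
  have : (fun a ↦ (f a - m) ^ 2) = f ^ 2 + fun a ↦ -(2 * m) * f a + m ^ 2 := by
    ext a; simp only [Pi.add_apply, Pi.pow_apply]; ring
  rw [this, map_add, hE.map_affine]; ring

lemma sq_map_le (f : A → ℝ) : E f ^ 2 ≤ E (f ^ 2) := by
  have := hE.map_nonneg (f := fun a ↦ (f a - E f) ^ 2) fun a ↦ sq_nonneg _
  rw [hE.map_sq_sub_sq] at this
  linarith

lemma le_of_drift {f g : A → ℝ} {r d : ℝ} (hinv : E g = E f) (hr : r < 1)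
    (h : ∀ a, g a ≤ r * f a + d) : E f ≤ d / (1 - r) := by
  have hmean : E g ≤ r * E f + d := hE.map_affine r d f ▸ hE.monotone h
  rw [le_div_iff₀ (sub_pos.2 hr)]
  linarith

lemma comp {L : (B → ℝ) →ₗ[ℝ] (A → ℝ)} (hL : IsMarkov L) : IsExpectation (E ∘ₗ L) :=
  ⟨hE.monotone.comp hL.monotone, by rw [LinearMap.comp_apply, hL.map_one, hE.map_one]⟩

end IsExpectation

namespace IsMarkov

lemma isExpectation {L : (A → ℝ) →ₗ[ℝ] (B → ℝ)} (hL : IsMarkov L) (b : B) :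
    IsExpectation (LinearMap.proj b ∘ₗ L) :=
  ⟨fun _ _ h ↦ hL.monotone h b, congrFun hL.map_one b⟩

variable {P : (A → ℝ) →ₗ[ℝ] (A → ℝ)} (hP : IsMarkov P)
include hP

lemma pow (t : ℕ) : IsMarkov (P ^ t) := by
  induction t with
  | zero => exact ⟨monotone_id, rfl⟩
  | succ t ih =>
    rw [pow_succ]
    exact ⟨ih.monotone.comp hP.monotone, by rw [Module.End.mul_apply, hP.map_one, ih.map_one]⟩

lemma pow_apply_affine (t : ℕ) (c d : ℝ) (f : A → ℝ) (a : A) :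
    (P ^ t) (fun x ↦ c * f x + d) a = c * (P ^ t) f a + d :=
  ((hP.pow t).isExpectation a).map_affine c d f

lemma pow_apply_le_of_drift {F : A → ℝ} {r d : ℝ} (hr0 : 0 ≤ r) (hr1 : r < 1) (hd : 0 ≤ d)
    (h : ∀ a, P F a ≤ r * F a + d) (t : ℕ) (a : A) :
    (P ^ t) F a ≤ r ^ t * F a + d / (1 - r) := by
  have h1r : 0 < 1 - r := by linarith
  induction t with
  | zero => simp only [pow_zero, Module.End.one_apply, one_mul]; linarith [div_nonneg hd h1r.le]
  | succ t ih =>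
    calc (P ^ (t + 1)) F a = (P ^ t) (P F) a := by rw [pow_succ, Module.End.mul_apply]
      _ ≤ (P ^ t) (fun x ↦ r * F x + d) a := (hP.pow t).monotone h a
      _ = r * (P ^ t) F a + d := hP.pow_apply_affine t r d F a
      _ ≤ r * (r ^ t * F a + d / (1 - r)) + d := by gcongr
      _ = r ^ (t + 1) * F a + d / (1 - r) := by field_simp; ring

variable {Γ : (A → ℝ) → A → ℝ} {κ r : ℝ}

lemma pow_gradient_le (hr : 0 ≤ r) (hgrad : ∀ f, Γ (P f) ≤ r • P (Γ f)) (t : ℕ) (f : A → ℝ) :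
    Γ ((P ^ t) f) ≤ r ^ t • (P ^ t) (Γ f) := by
  induction t generalizing f with
  | zero => simp
  | succ t ih =>
    calc Γ ((P ^ (t + 1)) f) = Γ ((P ^ t) (P f)) := by rw [pow_succ, Module.End.mul_apply]
      _ ≤ r ^ t • (P ^ t) (Γ (P f)) := ih _
      _ ≤ r ^ t • (P ^ t) (r • P (Γ f)) := by
        gcongr
        exact (hP.pow t).monotone (hgrad f)
      _ = r ^ (t + 1) • (P ^ (t + 1)) (Γ f) := by
        rw [map_smul, smul_smul, ← pow_succ, pow_succ P, Module.End.mul_apply]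

/- Writing `P ^ (t + 1) f² - (P ^ (t + 1) f)²` as a telescoping sum, each of its `t + 1` increments
controls `κ Γ (P ^ t f)` up to the factor `r ^ t` by which `Γ` may grow. -/
theorem reverse_poincare (hΓ : ∀ f, 0 ≤ Γ f) (hκ : 0 ≤ κ) (hr : 1 ≤ r)
    (hvar : ∀ f, κ • Γ f ≤ P (f ^ 2) - P f ^ 2) (hgrad : ∀ f, Γ (P f) ≤ r • P (Γ f))
    (t : ℕ) (f : A → ℝ) :
    ((t + 1) * κ) • Γ ((P ^ t) f) ≤ r ^ t • ((P ^ (t + 1)) (f ^ 2) - (P ^ (t + 1)) f ^ 2) := by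
  have hr0 : 0 ≤ r := zero_le_one.trans hr
  induction t generalizing f with
  | zero => simpa using hvar f
  | succ t ih =>
    intro a
    have hpow (s : ℕ) (g : A → ℝ) : (P ^ s) (P g) = (P ^ (s + 1)) g := by
      rw [pow_succ, Module.End.mul_apply]
    have hold : ((t + 1) * κ) * Γ ((P ^ (t + 1)) f) a ≤
        r ^ t * ((P ^ (t + 1)) (P f ^ 2) a - (P ^ (t + 2)) f a ^ 2) := by
      simpa [hpow] using ih (P f) a
    have hold' : ((t + 1) * κ) * Γ ((P ^ (t + 1)) f) a ≤
        r ^ (t + 1) * ((P ^ (t + 1)) (P f ^ 2) a - (P ^ (t + 2)) f a ^ 2) := by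
      rw [pow_succ' r, mul_assoc r]
      have h0 : 0 ≤ ((t + 1) * κ) * Γ ((P ^ (t + 1)) f) a :=
        mul_nonneg (by positivity) (hΓ _ a)
      exact hold.trans (le_mul_of_one_le_left (h0.trans hold) hr)
    have hnew : κ * Γ ((P ^ (t + 1)) f) a ≤
        r ^ (t + 1) * ((P ^ (t + 2)) (f ^ 2) a - (P ^ (t + 1)) (P f ^ 2) a) := by
      have hgr := hP.pow_gradient_le hr0 hgrad (t + 1) f a
      have hvr := (hP.pow (t + 1)).monotone (hvar f) a
      simp only [map_smul, map_sub, hpow, Pi.smul_apply, Pi.sub_apply, smul_eq_mul] at hgr hvr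
      calc κ * Γ ((P ^ (t + 1)) f) a ≤ κ * (r ^ (t + 1) * (P ^ (t + 1)) (Γ f) a) := by gcongr
        _ = r ^ (t + 1) * (κ * (P ^ (t + 1)) (Γ f) a) := by ring
        _ ≤ _ := by gcongr
    simp only [Pi.smul_apply, Pi.sub_apply, Pi.pow_apply, smul_eq_mul]
    push_cast
    linarith

end IsMarkov

end Markov

open Function (update)

/-! ### Single-site dynamics -/

section SingleSite

variable {V C : Type*} [Fintype V] [Fintype C] [DecidableEq V]

/-- The rule of a single-site dynamics on `V → C`: when the site `u` is selected in the
configuration `σ`, it receives the color `k` with probability `p σ u k`. -/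
structure IsUpdateRule (p : (V → C) → V → C → ℝ) : Prop where
  nonneg : ∀ σ u k, 0 ≤ p σ u k
  sum_eq_one : ∀ σ u, ∑ k, p σ u k = 1

/-- An update rule whose probabilities are at least `c`, do not see the color being replaced, and
depend on the color of every other site by at most `L / |V|`. -/
structure IsHeatBath (c L : ℝ) (p : (V → C) → V → C → ℝ) : Prop extends IsUpdateRule p where
  le_prob : ∀ σ u k, c ≤ p σ u k
  update_self : ∀ σ u b, p (update σ u b) u = p σ u
  influence : ∀ σ u w b k, |p (update σ w b) u k - p σ u k| ≤ L / Fintype.card V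

/-- The mean over one move `(u, k)` of the dynamics from `σ`: the site `u` is uniform and the
color `k` has law `p σ u`. -/
noncomputable def moveMean (p : (V → C) → V → C → ℝ) (σ : V → C) : (V × C → ℝ) →ₗ[ℝ] ℝ :=
  (Fintype.card V : ℝ)⁻¹ • ∑ m : V × C, p σ m.1 m.2 • LinearMap.proj m

/-- The transition operator of the single-site dynamics with update rule `p`. -/
noncomputable def updateOp (p : (V → C) → V → C → ℝ) : ((V → C) → ℝ) →ₗ[ℝ] ((V → C) → ℝ) :=
  LinearMap.pi fun σ ↦ moveMean p σ ∘ₗ LinearMap.funLeft ℝ ℝ fun m ↦ update σ m.1 m.2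

/-- The squared discrete gradient of `g`: the sum of its squared increments over all single-site
changes. -/
def gradSq (g : (V → C) → ℝ) (z : V → C) : ℝ :=
  ∑ m : V × C, (g (update z m.1 m.2) - g z) ^ 2

lemma gradSq_nonneg (g : (V → C) → ℝ) : 0 ≤ gradSq g :=
  fun _ ↦ sum_nonneg fun _ _ ↦ sq_nonneg _

variable {p : (V → C) → V → C → ℝ} {c L : ℝ}

omit [DecidableEq V] in
lemma moveMean_apply (σ : V → C) (g : V × C → ℝ) :
    moveMean p σ g = (Fintype.card V : ℝ)⁻¹ * ∑ m : V × C, p σ m.1 m.2 * g m := by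
  simp [moveMean, LinearMap.sum_apply]

lemma updateOp_apply (f : (V → C) → ℝ) (σ : V → C) :
    updateOp p f σ = moveMean p σ fun m ↦ f (update σ m.1 m.2) := rfl

namespace IsUpdateRule

variable (hp : IsUpdateRule p)
include hp

omit [DecidableEq V] in
lemma isExpectation_moveMean [Nonempty V] (σ : V → C) : IsExpectation (moveMean p σ) where
  monotone f g h := by
    rw [moveMean_apply, moveMean_apply]
    gcongr with m
    · exact hp.nonneg σ m.1 m.2
    · exact h m
  map_one := by
    simp [moveMean_apply, Fintype.sum_prod_type, hp.sum_eq_one]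

lemma isMarkov_updateOp [Nonempty V] : IsMarkov (updateOp p) where
  monotone _ _ h σ := (hp.isExpectation_moveMean σ).monotone fun _ ↦ h _
  map_one := funext fun σ ↦ (hp.isExpectation_moveMean σ).map_one

end IsUpdateRule

namespace IsHeatBath

variable (hp : IsHeatBath c L p)
include hp

lemma sum_le_moveMean (σ : V → C) {g : V × C → ℝ} (hg : 0 ≤ g) :
    c / Fintype.card V * ∑ m, g m ≤ moveMean p σ g := by
  rw [moveMean_apply, div_eq_inv_mul, mul_assoc, mul_sum _ _ c]
  gcongr with m
  · exact hg m
  · exact hp.le_prob σ m.1 m.2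

end IsHeatBath

/-- The contribution to the increment of `updateOp p g` under the change `m` of `z` that comes
from the moves made simultaneously at another site of `z` and of its change. -/
noncomputable def transportTerm (p : (V → C) → V → C → ℝ) (g : (V → C) → ℝ) (z : V → C)
    (m : V × C) : ℝ :=
  moveMean p z fun l ↦ if l.1 = m.1 then 0 else
    g (update (update z l.1 l.2) m.1 m.2) - g (update z l.1 l.2)

/-- The contribution to the increment of `updateOp p g` under the change `m` of `z` that comes
from the change of the update probabilities. -/
noncomputable def rateTerm (p : (V → C) → V → C → ℝ) (g : (V → C) → ℝ) (z : V → C)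
    (m : V × C) : ℝ :=
  (Fintype.card V : ℝ)⁻¹ * ∑ l : V × C, (p (update z m.1 m.2) l.1 l.2 - p z l.1 l.2) *
    (g (update (update z m.1 m.2) l.1 l.2) - g (update z m.1 m.2))

namespace IsHeatBath

variable (hp : IsHeatBath c L p)
include hp

lemma updateOp_update_sub (g : (V → C) → ℝ) (z : V → C) (m : V × C) :
    updateOp p g (update z m.1 m.2) - updateOp p g z =
      transportTerm p g z m + rateTerm p g z m := by
  obtain ⟨w, b⟩ := m
  simp only [updateOp_apply, transportTerm, rateTerm, moveMean_apply, ← mul_sub, ← mul_add,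
    Fintype.sum_prod_type, ← sum_sub_distrib, ← sum_add_distrib]
  congr 1
  refine sum_congr rfl fun u _ ↦ ?_
  rcases eq_or_ne u w with rfl | hu
  · simp [hp.update_self]
  · have hbase : ∑ k, (p (update z w b) u k - p z u k) * g (update z w b) = 0 := by
      rw [← sum_mul, sum_sub_distrib, hp.sum_eq_one, hp.sum_eq_one, sub_self, zero_mul]
    rw [← sub_eq_zero, ← sum_sub_distrib, ← hbase]
    refine sum_congr rfl fun k _ ↦ ?_
    rw [if_neg hu, Function.update_comm hu]
    ring

lemma sum_sq_transportTerm_le [Nonempty V] (g : (V → C) → ℝ) (z : V → C) :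
    ∑ m, transportTerm p g z m ^ 2 ≤ updateOp p (gradSq g) z := by
  have hE := hp.isExpectation_moveMean z
  have hsum : updateOp p (gradSq g) z = ∑ m : V × C, moveMean p z fun l ↦
      (g (update (update z l.1 l.2) m.1 m.2) - g (update z l.1 l.2)) ^ 2 := by
    rw [updateOp_apply, ← map_sum]
    congr 1
    ext l
    simp [gradSq]
  rw [hsum]
  refine sum_le_sum fun m _ ↦ (hE.sq_map_le _).trans (hE.monotone fun l ↦ ?_)
  simp only [Pi.pow_apply]
  split_ifs
  · simpa using sq_nonneg _
  · exact le_rfl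

lemma sq_rateTerm_le [Nonempty V] (g : (V → C) → ℝ) (z : V → C) (m : V × C) :
    rateTerm p g z m ^ 2 ≤
      L ^ 2 * Fintype.card C / Fintype.card V ^ 3 * gradSq g (update z m.1 m.2) := by
  set N := (Fintype.card V : ℝ)
  have hN : 0 < N := by simpa [N] using Fintype.card_pos (α := V)
  have hterm (l : V × C) : ((p (update z m.1 m.2) l.1 l.2 - p z l.1 l.2) *
      (g (update (update z m.1 m.2) l.1 l.2) - g (update z m.1 m.2))) ^ 2 ≤
      (L / N) ^ 2 * (g (update (update z m.1 m.2) l.1 l.2) - g (update z m.1 m.2)) ^ 2 := by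
    rw [mul_pow]
    gcongr 1
    exact sq_le_sq' (abs_le.1 (hp.influence z l.1 m.1 m.2 l.2)).1
      (abs_le.1 (hp.influence z l.1 m.1 m.2 l.2)).2
  calc rateTerm p g z m ^ 2
      ≤ N⁻¹ ^ 2 * ((N * Fintype.card C) * ((L / N) ^ 2 * gradSq g (update z m.1 m.2))) := by
        rw [rateTerm, mul_pow]
        gcongr
        refine sq_sum_le_card_mul_sum_sq.trans ?_
        rw [card_univ, Fintype.card_prod, Nat.cast_mul, gradSq, mul_sum _ _ ((L / N) ^ 2)]
        gcongr with l
        exact hterm l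
    _ = _ := by field_simp

lemma sum_sq_rateTerm_le [Nonempty V] (hc : 0 < c) (g : (V → C) → ℝ) (z : V → C) :
    ∑ m, rateTerm p g z m ^ 2 ≤
      L ^ 2 * Fintype.card C / c / Fintype.card V ^ 2 * updateOp p (gradSq g) z := by
  have : (0 : ℝ) < Fintype.card V := by simpa using Fintype.card_pos (α := V)
  calc ∑ m, rateTerm p g z m ^ 2
      ≤ ∑ m : V × C, L ^ 2 * Fintype.card C / Fintype.card V ^ 3 *
          gradSq g (update z m.1 m.2) := sum_le_sum fun m _ ↦ hp.sq_rateTerm_le g z m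
    _ = L ^ 2 * Fintype.card C / c / Fintype.card V ^ 2 *
          (c / Fintype.card V * ∑ m : V × C, gradSq g (update z m.1 m.2)) := by
        rw [← mul_sum]; field_simp
    _ ≤ _ := by
        gcongr
        exact hp.sum_le_moveMean z fun m ↦ gradSq_nonneg g _

lemma gradSq_updateOp_le [Nonempty V] (hc : 0 < c) (g : (V → C) → ℝ) :
    gradSq (updateOp p g) ≤ (1 + (1 + 2 * (L ^ 2 * Fintype.card C / c)) / Fintype.card V) •
      updateOp p (gradSq g) := by
  intro z
  set N := (Fintype.card V : ℝ)
  set D := L ^ 2 * Fintype.card C / c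
  have hN : 1 ≤ N := by simpa [N] using Nat.one_le_iff_ne_zero.2 (Fintype.card_ne_zero (α := V))
  have hD0 : 0 ≤ D := by positivity
  have hG : 0 ≤ updateOp p (gradSq g) z :=
    (hp.isExpectation_moveMean z).map_nonneg fun _ ↦ gradSq_nonneg g _
  have young (a b : ℝ) : (a + b) ^ 2 ≤ (1 + 1 / N) * a ^ 2 + (1 + N) * b ^ 2 := by
    have : (1 + 1 / N) * a ^ 2 + (1 + N) * b ^ 2 - (a + b) ^ 2 = 1 / N * (a - N * b) ^ 2 := by
      field_simp; ring
    linarith [show 0 ≤ 1 / N * (a - N * b) ^ 2 by positivity]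
  calc gradSq (updateOp p g) z
      = ∑ m, (transportTerm p g z m + rateTerm p g z m) ^ 2 :=
        sum_congr rfl fun m _ ↦ by rw [hp.updateOp_update_sub]
    _ ≤ ∑ m, ((1 + 1 / N) * transportTerm p g z m ^ 2 + (1 + N) * rateTerm p g z m ^ 2) :=
        sum_le_sum fun m _ ↦ young _ _
    _ = (1 + 1 / N) * ∑ m, transportTerm p g z m ^ 2 + (1 + N) * ∑ m, rateTerm p g z m ^ 2 := by
        rw [sum_add_distrib, mul_sum, mul_sum]
    _ ≤ (1 + 1 / N) * updateOp p (gradSq g) z +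
          (1 + N) * (D / N ^ 2 * updateOp p (gradSq g) z) := by
        gcongr
        · exact hp.sum_sq_transportTerm_le g z
        · exact hp.sum_sq_rateTerm_le hc g z
    _ = (1 + (1 + D + D / N) / N) * updateOp p (gradSq g) z := by field_simp; ring
    _ ≤ (1 + (1 + 2 * D) / N) * updateOp p (gradSq g) z := by
        have : D / N ≤ D := div_le_self hD0 hN
        gcongr ?_ * _
        rw [two_mul, ← add_assoc]
        gcongr

lemma gradSq_le_variance [Nonempty V] (hc : 0 < c) (g : (V → C) → ℝ) :
    (c / (2 + 2 * Fintype.card C) / Fintype.card V) • gradSq g ≤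
      updateOp p (g ^ 2) - updateOp p g ^ 2 := by
  intro z
  have hE := hp.isExpectation_moveMean z
  set q := (Fintype.card C : ℝ)
  set μ := updateOp p g z with hμ
  set T := ∑ m : V × C, (g (update z m.1 m.2) - μ) ^ 2
  have hstay : Fintype.card V * (g z - μ) ^ 2 ≤ T := by
    rw [← nsmul_eq_mul, ← card_univ, ← sum_const]
    simp only [T, Fintype.sum_prod_type]
    refine sum_le_sum fun u _ ↦ ?_
    simpa using single_le_sum (f := fun k ↦ (g (update z u k) - μ) ^ 2)
      (fun k _ ↦ sq_nonneg _) (mem_univ (z u))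
  have hgrad : gradSq g z ≤ (2 + 2 * q) * T := by
    calc gradSq g z
        ≤ ∑ m : V × C, (2 * (g (update z m.1 m.2) - μ) ^ 2 + 2 * (g z - μ) ^ 2) :=
          sum_le_sum fun m _ ↦ by
            linarith [sq_nonneg (g (update z m.1 m.2) - μ + (g z - μ))]
      _ = 2 * T + 2 * q * (Fintype.card V * (g z - μ) ^ 2) := by
          rw [sum_add_distrib, ← mul_sum, sum_const, card_univ, Fintype.card_prod, nsmul_eq_mul,
            Nat.cast_mul]
          ring
      _ ≤ 2 * T + 2 * q * T := by gcongr
      _ = (2 + 2 * q) * T := by ring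
  calc c / (2 + 2 * q) / Fintype.card V * gradSq g z
      ≤ c / (2 + 2 * q) / Fintype.card V * ((2 + 2 * q) * T) := by gcongr
    _ = c / Fintype.card V * T := by
        rw [div_right_comm, ← mul_assoc, div_mul_cancel₀ _ (by positivity)]
    _ ≤ moveMean p z fun m ↦ (g (update z m.1 m.2) - μ) ^ 2 :=
        hp.sum_le_moveMean z fun m ↦ sq_nonneg _
    _ = updateOp p (g ^ 2) z - μ ^ 2 := by
        rw [hE.map_sq_sub_sq, ← updateOp_apply, ← hμ, updateOp_apply]
        simp only [Pi.pow_def]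
        ring

theorem gradSq_pow_card_le [Nonempty V] (hc : 0 < c) {f : (V → C) → ℝ} (hf0 : 0 ≤ f)
    (hf1 : f ≤ 1) (z : V → C) :
    gradSq ((updateOp p ^ Fintype.card V) f) z ≤
      Real.exp (1 + 2 * (L ^ 2 * Fintype.card C / c)) * (2 + 2 * Fintype.card C) / c := by
  set N := Fintype.card V
  set q := (Fintype.card C : ℝ)
  set D := 1 + 2 * (L ^ 2 * q / c)
  have hN : (0 : ℝ) < N := by simpa [N] using Fintype.card_pos (α := V)
  have : 0 ≤ D := by positivity
  have hM := hp.isMarkov_updateOp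
  have hexp : (1 + D / N) ^ N ≤ Real.exp D := by
    calc (1 + D / N) ^ N ≤ Real.exp (D / N) ^ N := by
          gcongr; rw [add_comm]; exact Real.add_one_le_exp _
      _ = Real.exp D := by rw [← Real.exp_nat_mul, mul_div_cancel₀ _ hN.ne']
  have hvar : (updateOp p ^ (N + 1)) (f ^ 2) z - (updateOp p ^ (N + 1)) f z ^ 2 ≤ 1 := by
    have : (updateOp p ^ (N + 1)) (f ^ 2) z ≤ (updateOp p ^ (N + 1)) 1 z :=
      (hM.pow _).monotone (fun x ↦ pow_le_one₀ (hf0 x) (hf1 x)) z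
    rw [(hM.pow _).map_one, Pi.one_apply] at this
    linarith [sq_nonneg ((updateOp p ^ (N + 1)) f z)]
  have hrev : (N + 1) * (c / (2 + 2 * q) / N) * gradSq ((updateOp p ^ N) f) z ≤
      (1 + D / N) ^ N *
        ((updateOp p ^ (N + 1)) (f ^ 2) z - (updateOp p ^ (N + 1)) f z ^ 2) :=
    hM.reverse_poincare gradSq_nonneg (by positivity) (le_add_of_nonneg_right (by positivity))
      (hp.gradSq_le_variance hc) (hp.gradSq_updateOp_le hc) N f z
  rw [le_div_iff₀ hc, ← div_le_iff₀ (by positivity)]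
  calc gradSq ((updateOp p ^ N) f) z * c / (2 + 2 * q)
      = N * (c / (2 + 2 * q) / N) * gradSq ((updateOp p ^ N) f) z := by field_simp
    _ ≤ (N + 1) * (c / (2 + 2 * q) / N) * gradSq ((updateOp p ^ N) f) z := by
        have := gradSq_nonneg ((updateOp p ^ N) f) z
        gcongr
        linarith
    _ ≤ (1 + D / N) ^ N * 1 := hrev.trans (by gcongr)
    _ ≤ Real.exp D := by rwa [mul_one]

end IsHeatBath

end SingleSite

/-! ### The softmax map -/

section Softmax

variable {ι : Type*} [Fintype ι]

/-- The probability vector proportional to `exp ∘ x`. -/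
noncomputable def softmax (x : ι → ℝ) (k : ι) : ℝ :=
  Real.exp (x k) / ∑ j, Real.exp (x j)

lemma sum_exp_pos [Nonempty ι] (x : ι → ℝ) : 0 < ∑ j, Real.exp (x j) :=
  sum_pos (fun _ _ ↦ Real.exp_pos _) univ_nonempty

lemma softmax_nonneg (x : ι → ℝ) (k : ι) : 0 ≤ softmax x k := by
  unfold softmax; positivity

variable [Nonempty ι]

lemma sum_softmax (x : ι → ℝ) : ∑ k, softmax x k = 1 := by
  unfold softmax
  rw [← sum_div, div_self (sum_exp_pos x).ne']

lemma softmax_le_one (x : ι → ℝ) (k : ι) : softmax x k ≤ 1 :=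
  sum_softmax x ▸ single_le_sum (fun j _ ↦ softmax_nonneg x j) (mem_univ k)

lemma exp_neg_div_card_le_softmax {x : ι → ℝ} {R : ℝ} (h0 : ∀ j, 0 ≤ x j) (hR : ∀ j, x j ≤ R)
    (k : ι) : Real.exp (-R) / Fintype.card ι ≤ softmax x k := by
  have hcard : (0 : ℝ) < Fintype.card ι := by simpa using Fintype.card_pos (α := ι)
  rw [softmax, div_le_div_iff₀ hcard (sum_exp_pos x)]
  calc Real.exp (-R) * ∑ j, Real.exp (x j) ≤ Real.exp (-R) * ∑ _j : ι, Real.exp R := by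
        gcongr with j; exact hR j
    _ = 1 * Fintype.card ι := by
        rw [sum_const, card_univ, nsmul_eq_mul, mul_left_comm, ← Real.exp_add]; simp
    _ ≤ Real.exp (x k) * Fintype.card ι := by gcongr; exact Real.one_le_exp (h0 k)

omit [Nonempty ι] in
lemma softmax_le_exp_mul {x y : ι → ℝ} {d : ℝ} (h : ∀ j, |x j - y j| ≤ d) (k : ι) :
    softmax x k ≤ Real.exp (2 * d) * softmax y k := by
  have : Nonempty ι := ⟨k⟩
  have hnum : Real.exp (x k) ≤ Real.exp d * Real.exp (y k) := by
    rw [← Real.exp_add, Real.exp_le_exp]; linarith [(abs_le.1 (h k)).2]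
  have hden : ∑ j, Real.exp (y j) ≤ Real.exp d * ∑ j, Real.exp (x j) := by
    rw [mul_sum]
    gcongr with j
    rw [← Real.exp_add, Real.exp_le_exp]; linarith [(abs_le.1 (h j)).1]
  rw [softmax, softmax, mul_div_assoc', div_le_div_iff₀ (sum_exp_pos x) (sum_exp_pos y)]
  calc Real.exp (x k) * ∑ j, Real.exp (y j)
      ≤ (Real.exp d * Real.exp (y k)) * (Real.exp d * ∑ j, Real.exp (x j)) := by gcongr
    _ = Real.exp (2 * d) * Real.exp (y k) * ∑ j, Real.exp (x j) := by
        rw [two_mul, Real.exp_add]; ring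

lemma exp_sub_one_le_mul_exp (x : ℝ) : Real.exp x - 1 ≤ x * Real.exp x := by
  have hinv : Real.exp (-x) * Real.exp x = 1 := by rw [← Real.exp_add]; simp
  nlinarith [Real.add_one_le_exp (-x), Real.exp_pos x]

omit [Nonempty ι] in
lemma abs_softmax_sub_le {x y : ι → ℝ} {d D : ℝ} (h : ∀ j, |x j - y j| ≤ d) (hD : d ≤ D) (k : ι) :
    |softmax x k - softmax y k| ≤ 2 * d * Real.exp (2 * D) := by
  have : Nonempty ι := ⟨k⟩
  have hd : 0 ≤ d := (abs_nonneg _).trans (h k)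
  have hexp : Real.exp (2 * d) - 1 ≤ 2 * d * Real.exp (2 * D) :=
    (exp_sub_one_le_mul_exp _).trans (by gcongr)
  have hone : 1 ≤ Real.exp (2 * d) := Real.one_le_exp (by positivity)
  have hsub (x y : ι → ℝ) (h : ∀ j, |x j - y j| ≤ d) :
      softmax x k - softmax y k ≤ Real.exp (2 * d) - 1 := by
    nlinarith [softmax_le_exp_mul h k, softmax_le_one y k]
  rw [abs_sub_le_iff]
  exact ⟨(hsub x y h).trans hexp, (hsub y x fun j ↦ abs_sub_comm (x j) _ ▸ h j).trans hexp⟩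

omit [Nonempty ι] in
lemma softmax_add_const (x : ι → ℝ) (c : ℝ) (k : ι) :
    softmax (fun j ↦ x j + c) k = softmax x k := by
  simp only [softmax, Real.exp_add, ← sum_mul]
  exact mul_div_mul_right _ _ (Real.exp_ne_zero c)

end Softmax

/-! ### Color counts -/

section ColorCount

variable {V C : Type*} [DecidableEq C]

/-- The number of sites of `s` that have color `k` in the configuration `σ`. -/
def colorCount (s : Finset V) (σ : V → C) (k : C) : ℝ :=
  ∑ v ∈ s, if σ v = k then 1 else 0

lemma colorCount_nonneg (s : Finset V) (σ : V → C) (k : C) : 0 ≤ colorCount s σ k :=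
  sum_nonneg fun v _ ↦ by positivity

lemma colorCount_le_card (s : Finset V) (σ : V → C) (k : C) : colorCount s σ k ≤ #s := by
  simpa [colorCount] using sum_le_card_nsmul s (fun v ↦ if σ v = k then (1 : ℝ) else 0) 1
    fun v _ ↦ by split_ifs <;> norm_num

lemma sum_colorCount [Fintype C] (s : Finset V) (σ : V → C) : ∑ k, colorCount s σ k = #s := by
  simp only [colorCount]
  rw [sum_comm]
  simp

variable [DecidableEq V] {s : Finset V} {u : V}

lemma colorCount_update_of_notMem (hu : u ∉ s) (σ : V → C) (b : C) :
    colorCount s (update σ u b) = colorCount s σ := by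
  ext k
  refine sum_congr rfl fun v hv ↦ ?_
  rw [Function.update_of_ne (ne_of_mem_of_not_mem hv hu)]

lemma colorCount_eq_erase_add (hu : u ∈ s) (σ : V → C) (k : C) :
    colorCount s σ k = colorCount (s.erase u) σ k + if σ u = k then 1 else 0 :=
  (sum_erase_add _ _ hu).symm

lemma colorCount_update_of_mem (hu : u ∈ s) (σ : V → C) (b k : C) :
    colorCount s (update σ u b) k =
      colorCount s σ k + ((if b = k then 1 else 0) - if σ u = k then 1 else 0) := by
  rw [colorCount_eq_erase_add hu, colorCount_eq_erase_add hu σ,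
    colorCount_update_of_notMem (notMem_erase u s), Function.update_self]
  ring

lemma abs_colorCount_update_sub_le (s : Finset V) (σ : V → C) (u : V) (b k : C) :
    |colorCount s (update σ u b) k - colorCount s σ k| ≤ 1 := by
  by_cases hu : u ∈ s
  · rw [colorCount_update_of_mem hu, add_sub_cancel_left]
    split_ifs <;> norm_num
  · simp [colorCount_update_of_notMem hu]

lemma IsUpdateRule.moveMean_colorCount_update_sub [Fintype V] [Fintype C]
    {p : (V → C) → V → C → ℝ} (hp : IsUpdateRule p) (s : Finset V) (σ : V → C) (k : C) :
    moveMean p σ (fun m ↦ colorCount s (update σ m.1 m.2) k - colorCount s σ k) =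
      (Fintype.card V : ℝ)⁻¹ * ((∑ u ∈ s, p σ u k) - colorCount s σ k) := by
  have hsite (u : V) : ∑ j, p σ u j * (colorCount s (update σ u j) k - colorCount s σ k) =
      if u ∈ s then p σ u k - (if σ u = k then 1 else 0) else 0 := by
    by_cases hu : u ∈ s
    · simp [hu, colorCount_update_of_mem hu, mul_sub, sum_sub_distrib, hp.sum_eq_one]
    · simp [hu, colorCount_update_of_notMem hu]
  simp only [moveMean_apply, Fintype.sum_prod_type, hsite]
  rw [sum_ite_mem, univ_inter, sum_sub_distrib, colorCount]

lemma sum_pairs_eq_erase_add [Fintype V] (σ : V → C) (u : V) :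
    ∑ a, ∑ b, (if σ a = σ b then (1 : ℝ) else 0) =
      (∑ a ∈ univ.erase u, colorCount (univ.erase u) σ (σ a)) + 1 +
        2 * colorCount (univ.erase u) σ (σ u) := by
  have hrow (a : V) : ∑ b, (if σ a = σ b then (1 : ℝ) else 0) =
      colorCount (univ.erase u) σ (σ a) + if σ u = σ a then 1 else 0 := by
    rw [← colorCount_eq_erase_add (mem_univ u)]
    simp only [colorCount, eq_comm]
  have hcol : ∑ a ∈ univ.erase u, (if σ u = σ a then (1 : ℝ) else 0) =
      colorCount (univ.erase u) σ (σ u) := by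
    simp only [colorCount, eq_comm]
  rw [← sum_erase_add _ _ (mem_univ u), hrow, sum_congr rfl fun a _ ↦ hrow a, sum_add_distrib,
    hcol, if_pos rfl]
  ring

end ColorCount

/-! ### The Glauber dynamics as a single-site dynamics -/

section Glauber

variable {q n : ℕ}

/-- The conditional law of the color of `u` under the Potts measure given the other colors of
`σ`. -/
noncomputable def pottsRate (β : ℝ) (σ : Fin n → Fin q) (u : Fin n) : Fin q → ℝ :=
  softmax fun j ↦ 2 * β / n * colorCount (univ.erase u) σ j

/-- The transition operator of the Glauber dynamics. -/
noncomputable abbrev glauberOp (q n : ℕ) (β : ℝ) :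
    ((Fin n → Fin q) → ℝ) →ₗ[ℝ] ((Fin n → Fin q) → ℝ) :=
  updateOp (pottsRate β)

/-- The expectation under the Potts measure. -/
noncomputable def pottsMean (q n : ℕ) (β : ℝ) : ((Fin n → Fin q) → ℝ) →ₗ[ℝ] ℝ :=
  ∑ σ, pottsMeasure q n β σ • LinearMap.proj σ

lemma pottsMean_apply (β : ℝ) (f : (Fin n → Fin q) → ℝ) :
    pottsMean q n β f = ∑ σ, pottsMeasure q n β σ * f σ := by
  simp [pottsMean, LinearMap.sum_apply]

lemma abs_pottsRate_sub_softmax_le [NeZero n] {β : ℝ} (hβ : 0 ≤ β) (σ : Fin n → Fin q) (u : Fin n)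
    {y : Fin q → ℝ} (h : ∀ j, |colorCount (univ.erase u) σ j - y j| ≤ 1) (k : Fin q) :
    |pottsRate β σ u k - softmax (fun j ↦ 2 * β / n * y j) k| ≤ 4 * β * Real.exp (4 * β) / n := by
  have hn : (1 : ℝ) ≤ n := by exact_mod_cast NeZero.one_le
  have hdist (j : Fin q) :
      |2 * β / n * colorCount (univ.erase u) σ j - 2 * β / n * y j| ≤ 2 * β / n := by
    rw [← mul_sub, abs_mul, abs_of_nonneg (by positivity : 0 ≤ 2 * β / (n : ℝ))]
    exact mul_le_of_le_one_right (by positivity) (h j)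
  refine (abs_softmax_sub_le hdist (div_le_self (by positivity) hn) k).trans_eq ?_
  ring_nf

variable [NeZero q]

lemma isUpdateRule_pottsRate (β : ℝ) : IsUpdateRule (pottsRate (q := q) (n := n) β) where
  nonneg _ _ := softmax_nonneg _
  sum_eq_one _ _ := sum_softmax _

lemma isHeatBath_pottsRate [NeZero n] {β : ℝ} (hβ : 0 ≤ β) :
    IsHeatBath (Real.exp (-(2 * β)) / q) (4 * β * Real.exp (4 * β))
      (pottsRate (q := q) (n := n) β) where
  toIsUpdateRule := isUpdateRule_pottsRate β
  le_prob σ u k := by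
    have hn : (0 : ℝ) < n := by exact_mod_cast NeZero.pos n
    have hfield0 (j : Fin q) : 0 ≤ 2 * β / n * colorCount (univ.erase u) σ j :=
      mul_nonneg (by positivity) (colorCount_nonneg _ _ _)
    have hfield (j : Fin q) : 2 * β / n * colorCount (univ.erase u) σ j ≤ 2 * β := by
      have hcount : colorCount (univ.erase u) σ j ≤ n :=
        (colorCount_le_card _ _ _).trans (by exact_mod_cast (card_le_univ _).trans (by simp))
      calc 2 * β / n * colorCount (univ.erase u) σ j ≤ 2 * β / n * n := by gcongr
        _ = 2 * β := div_mul_cancel₀ _ hn.ne'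
    simpa [pottsRate] using exp_neg_div_card_le_softmax hfield0 hfield k
  update_self σ u b := by
    simp only [pottsRate, colorCount_update_of_notMem (notMem_erase u univ)]
  influence σ u w b k := by
    simpa [pottsRate] using abs_pottsRate_sub_softmax_le hβ _ u
      (fun j ↦ abs_colorCount_update_sub_le (univ.erase u) σ w b j) k

lemma isMarkov_glauberOp [NeZero n] (β : ℝ) : IsMarkov (glauberOp q n β) :=
  (isUpdateRule_pottsRate β).isMarkov_updateOp

lemma sum_pottsWeight_pos (β : ℝ) : 0 < ∑ τ : Fin n → Fin q, pottsWeight q n β τ :=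
  sum_pos (fun _ _ ↦ Real.exp_pos _) univ_nonempty

lemma pottsMeasure_nonneg (β : ℝ) (σ : Fin n → Fin q) : 0 ≤ pottsMeasure q n β σ :=
  div_nonneg (Real.exp_pos _).le (sum_pottsWeight_pos β).le

lemma sum_pottsMeasure (β : ℝ) : ∑ σ : Fin n → Fin q, pottsMeasure q n β σ = 1 := by
  unfold pottsMeasure
  rw [← sum_div, div_self (sum_pottsWeight_pos β).ne']

lemma isExpectation_pottsMean (β : ℝ) : IsExpectation (pottsMean q n β) where
  monotone f g h := by
    rw [pottsMean_apply, pottsMean_apply]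
    gcongr with σ
    · exact pottsMeasure_nonneg β σ
    · exact h σ
  map_one := by simp [pottsMean_apply, sum_pottsMeasure]

omit [NeZero q] in
lemma exists_pottsWeight_update_eq (β : ℝ) (σ : Fin n → Fin q) (u : Fin n) :
    ∃ c : ℝ, 0 < c ∧ ∀ k, pottsWeight q n β (update σ u k) =
      c * Real.exp (2 * β / n * colorCount (univ.erase u) σ k) := by
  refine ⟨Real.exp (β / n * ((∑ a ∈ univ.erase u, colorCount (univ.erase u) σ (σ a)) + 1)),
    Real.exp_pos _, fun k ↦ ?_⟩
  have hrest : ∑ a ∈ univ.erase u, colorCount (univ.erase u) σ (update σ u k a) =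
      ∑ a ∈ univ.erase u, colorCount (univ.erase u) σ (σ a) :=
    sum_congr rfl fun a ha ↦ by rw [Function.update_of_ne (ne_of_mem_erase ha)]
  rw [pottsWeight, sum_pairs_eq_erase_add _ u, colorCount_update_of_notMem (notMem_erase u univ),
    Function.update_self, hrest, ← Real.exp_add]
  ring_nf

lemma pottsMeasure_update_div_sum (β : ℝ) (σ : Fin n → Fin q) (u : Fin n) (k : Fin q) :
    pottsMeasure q n β (update σ u k) / ∑ j, pottsMeasure q n β (update σ u j) =
      pottsRate β σ u k := by
  obtain ⟨c, hc, h⟩ := exists_pottsWeight_update_eq β σ u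
  have hZ := sum_pottsWeight_pos (q := q) (n := n) β
  simp only [pottsMeasure, pottsRate, softmax, h]
  rw [← sum_div, div_div_div_cancel_right₀ hZ.ne', ← mul_sum, mul_div_mul_left _ _ hc.ne']

omit [NeZero q] in
lemma sum_ite_eq_off_site (σ : Fin n → Fin q) (u : Fin n) (F : (Fin n → Fin q) → ℝ) :
    ∑ τ, (if ∀ v, v ≠ u → τ v = σ v then F τ else 0) = ∑ k, F (update σ u k) := by
  rw [← sum_filter]
  refine sum_nbij' (fun τ ↦ τ u) (fun k ↦ update σ u k) (by simp)
    (fun k _ ↦ by simp +contextual [Function.update_of_ne]) ?_ (by simp) ?_ <;>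
  · intro τ hτ
    have hτ' : update σ u (τ u) = τ :=
      Function.update_eq_iff.2 ⟨rfl, fun v hv ↦ ((mem_filter.1 hτ).2 v hv).symm⟩
    simp only [hτ']

lemma glauberKernel_mulVec (β : ℝ) (f : (Fin n → Fin q) → ℝ) :
    (glauberKernel q n β).mulVec f = glauberOp q n β f := by
  ext σ
  simp only [updateOp_apply, moveMean_apply, Fintype.sum_prod_type, Matrix.mulVec, dotProduct,
    glauberKernel, mul_assoc, ← mul_sum, sum_mul, ite_mul, zero_mul, Fintype.card_fin, one_div]
  rw [sum_comm]
  simp only [sum_ite_eq_off_site, pottsMeasure_update_div_sum]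

lemma glauberKernel_pow_mulVec (β : ℝ) (t : ℕ) (f : (Fin n → Fin q) → ℝ) :
    (glauberKernel q n β ^ t).mulVec f = (glauberOp q n β ^ t) f := by
  induction t generalizing f with
  | zero => simp
  | succ t ih =>
    rw [pow_succ, ← Matrix.mulVec_mulVec, glauberKernel_mulVec, ih, pow_succ,
      Module.End.mul_apply]

omit [NeZero q] in
lemma pottsMeasure_mul_glauberKernel_comm (β : ℝ) (σ τ : Fin n → Fin q) :
    pottsMeasure q n β σ * glauberKernel q n β σ τ =
      pottsMeasure q n β τ * glauberKernel q n β τ σ := by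
  unfold glauberKernel
  rw [mul_left_comm, mul_left_comm (pottsMeasure q n β τ)]
  congr 1
  rw [mul_sum, mul_sum]
  refine sum_congr rfl fun u _ ↦ ?_
  by_cases h : ∀ v, v ≠ u → τ v = σ v
  · have hupdate (k : Fin q) : update σ u k = update τ u k :=
      Function.update_eq_iff.2 ⟨by simp, fun v hv ↦ by simp [hv, h v hv]⟩
    rw [if_pos h, if_pos fun v hv ↦ (h v hv).symm]
    simp only [hupdate]
    ring
  · rw [if_neg h, if_neg fun h' ↦ h fun v hv ↦ (h' v hv).symm, mul_zero, mul_zero]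

variable [NeZero n]

lemma pottsMean_glauberOp (β : ℝ) (f : (Fin n → Fin q) → ℝ) :
    pottsMean q n β (glauberOp q n β f) = pottsMean q n β f := by
  have hrow (τ : Fin n → Fin q) : ∑ σ, glauberKernel q n β τ σ = 1 := by
    have := congrFun (glauberKernel_mulVec β (1 : (Fin n → Fin q) → ℝ)) τ
    rw [(isMarkov_glauberOp β).map_one] at this
    simpa [Matrix.mulVec, dotProduct] using this
  simp only [← glauberKernel_mulVec, pottsMean_apply, Matrix.mulVec, dotProduct, mul_sum]
  rw [sum_comm]
  refine sum_congr rfl fun τ _ ↦ ?_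
  simp only [← mul_assoc, pottsMeasure_mul_glauberKernel_comm β _ τ]
  rw [← sum_mul, ← mul_sum, hrow, mul_one]

lemma pottsMean_glauberOp_pow (β : ℝ) (t : ℕ) (f : (Fin n → Fin q) → ℝ) :
    pottsMean q n β ((glauberOp q n β ^ t) f) = pottsMean q n β f := by
  induction t generalizing f with
  | zero => simp
  | succ t ih => rw [pow_succ, Module.End.mul_apply, ih, pottsMean_glauberOp]

end Glauber

open scoped Topology

/-! ### The drift function -/

section Drift

/-- The linear rate `-D_β'(1/q)` at which the proportions relax to `1/q`; thus
`alpha1 β q = 1 / (2 * relaxationRate q β)`. -/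
noncomputable def relaxationRate (q : ℕ) (β : ℝ) : ℝ := 1 - 2 * β / q

variable {q : ℕ} (hq : 1 < q) (β : ℝ)
include hq

lemma one_add_mul_exp_pos (x : ℝ) : 0 < 1 + ((q : ℝ) - 1) * Real.exp x := by
  have : (0 : ℝ) < q - 1 := by simpa using hq
  positivity

lemma continuous_Dfun : Continuous (Dfun q β) :=
  continuous_neg.add (Continuous.inv₀ (by fun_prop) fun _ ↦ (one_add_mul_exp_pos hq _).ne')

lemma Dfun_inv_card : Dfun q β (1 / q) = 0 := by
  have : (q : ℝ) ≠ 0 := by exact_mod_cast (zero_lt_one.trans hq).ne'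
  simp [Dfun, this]

lemma Dfun_one_neg : Dfun q β 1 < 0 := by
  have : (0 : ℝ) < q - 1 := by simpa using hq
  have hden : 1 < 1 + ((q : ℝ) - 1) * Real.exp (2 * β * (1 - q * 1) / (q - 1)) := by
    linarith [mul_pos this (Real.exp_pos (2 * β * (1 - q * 1) / (q - 1)))]
  unfold Dfun
  linarith [inv_lt_one_of_one_lt₀ hden]

lemma hasDerivAt_Dfun_inv_card : HasDerivAt (Dfun q β) (-relaxationRate q β) (1 / q) := by
  have hq0 : (q : ℝ) ≠ 0 := by exact_mod_cast (zero_lt_one.trans hq).ne'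
  have hq1 : (q : ℝ) - 1 ≠ 0 := sub_ne_zero.2 (by exact_mod_cast hq.ne')
  have hexponent : HasDerivAt (fun x : ℝ ↦ 2 * β * (1 - q * x) / (q - 1))
      (2 * β * -q / (q - 1)) (1 / q) := by
    simpa using ((((hasDerivAt_id (1 / (q : ℝ))).const_mul (q : ℝ)).const_sub 1).const_mul
      (2 * β)).div_const ((q : ℝ) - 1)
  have hzero : 2 * β * (1 - (q : ℝ) * (1 / q)) / (q - 1) = 0 := by simp [hq0]
  have hderiv := (hasDerivAt_id (1 / (q : ℝ))).neg.add
    (((hexponent.exp.const_mul ((q : ℝ) - 1)).const_add 1).inv (one_add_mul_exp_pos hq _).ne')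
  refine HasDerivAt.congr_deriv (f := Dfun q β) hderiv ?_
  simp only [hzero, relaxationRate, Real.exp_zero, mul_one, add_sub_cancel, one_mul]
  field_simp
  ring

variable {β}

lemma Dfun_mono {b : ℝ} (h : β ≤ b) {x : ℝ} (hx : 1 / (q : ℝ) < x) : Dfun q β x ≤ Dfun q b x := by
  have hq1 : (0 : ℝ) < q - 1 := by simpa using hq
  have hqx : 1 - q * x ≤ 0 := by
    rw [div_lt_iff₀ (by linarith)] at hx; linarith
  unfold Dfun
  gcongr -x + (1 + _ * Real.exp (?_ / _))⁻¹
  exact mul_le_mul_of_nonpos_right (by linarith) hqx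

lemma Dfun_neg_of_ne_zero (h : ∀ x ∈ Set.Ioo (1 / (q : ℝ)) 1, Dfun q β x ≠ 0) {x : ℝ}
    (hx : x ∈ Set.Ioc (1 / (q : ℝ)) 1) : Dfun q β x < 0 := by
  by_contra! hpos
  obtain ⟨y, hy, hy0⟩ := intermediate_value_Icc' hx.2 (continuous_Dfun hq β).continuousOn
    ⟨(Dfun_one_neg hq β).le, hpos⟩
  rcases hy.2.eq_or_lt with rfl | hy1
  · exact (Dfun_one_neg hq β).ne hy0
  · exact h y ⟨hx.1.trans_le hy.1, hy1⟩ hy0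

lemma relaxationRate_nonneg (h : ∀ x ∈ Set.Ioc (1 / (q : ℝ)) 1, Dfun q β x < 0) :
    0 ≤ relaxationRate q β := by
  have hslope : Tendsto (slope (Dfun q β) (1 / q)) (𝓝[>] (1 / q)) (𝓝 (-relaxationRate q β)) :=
    (hasDerivWithinAt_iff_tendsto_slope' Set.self_notMem_Ioi).1
      (hasDerivAt_Dfun_inv_card hq β).hasDerivWithinAt
  have hmem : ∀ᶠ x in 𝓝[>] (1 / (q : ℝ)), x ∈ Set.Ioo (1 / (q : ℝ)) 1 :=
    Ioo_mem_nhdsGT ((div_lt_one (by positivity)).2 (by exact_mod_cast hq))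
  refine neg_nonpos.1 (le_of_tendsto hslope (hmem.mono fun x hx ↦ ?_))
  rw [slope_def_field, Dfun_inv_card hq, sub_zero]
  exact div_nonpos_of_nonpos_of_nonneg (h x ⟨hx.1, hx.2.le⟩).le (sub_nonneg.2 hx.1.le)

omit hq in
lemma exists_gt_of_lt_betaS (hβ0 : 0 ≤ β) (hβ : β < betaS q) :
    ∃ b, β < b ∧ ∀ x ∈ Set.Ioo (1 / (q : ℝ)) 1, Dfun q b x ≠ 0 := by
  have hne : {β : ℝ | 0 ≤ β ∧ ∀ x ∈ Set.Ioo (1 / (q : ℝ)) 1, Dfun q β x ≠ 0}.Nonempty := by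
    by_contra! hempty
    rw [betaS, hempty, Real.sSup_empty] at hβ
    linarith
  obtain ⟨b, hb, hβb⟩ := exists_lt_of_lt_csSup hne hβ
  exact ⟨b, hβb, hb.2⟩

lemma Dfun_neg_of_lt_betaS (hβ0 : 0 ≤ β) (hβ : β < betaS q) {x : ℝ}
    (hx : x ∈ Set.Ioc (1 / (q : ℝ)) 1) : Dfun q β x < 0 := by
  obtain ⟨b, hβb, hb⟩ := exists_gt_of_lt_betaS hβ0 hβ
  exact (Dfun_mono hq hβb.le hx.1).trans_lt (Dfun_neg_of_ne_zero hq hb hx)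

lemma relaxationRate_pos (hβ0 : 0 ≤ β) (hβ : β < betaS q) : 0 < relaxationRate q β := by
  obtain ⟨b, hβb, hb⟩ := exists_gt_of_lt_betaS hβ0 hβ
  calc 0 ≤ relaxationRate q b := relaxationRate_nonneg hq fun x ↦ Dfun_neg_of_ne_zero hq hb
    _ < relaxationRate q β := by unfold relaxationRate; gcongr

omit hq in
lemma relaxationRate_le_one (hβ0 : 0 ≤ β) : relaxationRate q β ≤ 1 :=
  sub_le_self _ (by positivity)

end Drift

/-! ### The scalar Lyapunov function -/

section Lyapunov

/-- The function `y ↦ (y⁺)² exp (K y⁺)`. It vanishes for negative `y`, where the drift has no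
useful sign, and its exponential factor absorbs the nonlinearity of the drift when `K` is large. -/
noncomputable def lyapunov (K y : ℝ) : ℝ := max y 0 ^ 2 * Real.exp (K * max y 0)

/-- The derivative of `lyapunov K`. -/
noncomputable def lyapunovDeriv (K y : ℝ) : ℝ :=
  (2 * max y 0 + K * max y 0 ^ 2) * Real.exp (K * max y 0)

variable {K y : ℝ}

lemma lyapunov_nonneg (K y : ℝ) : 0 ≤ lyapunov K y := by unfold lyapunov; positivity

lemma max_zero_sq_le_sq (y : ℝ) : max y 0 ^ 2 ≤ y ^ 2 := by
  rw [← sq_abs y]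
  gcongr
  exact max_le (le_abs_self y) (abs_nonneg y)

variable (hK : 0 ≤ K)
include hK

lemma lyapunovDeriv_nonneg (y : ℝ) : 0 ≤ lyapunovDeriv K y := by
  unfold lyapunovDeriv; positivity

lemma max_zero_sq_le_lyapunov (y : ℝ) : max y 0 ^ 2 ≤ lyapunov K y :=
  le_mul_of_one_le_right (sq_nonneg _) (Real.one_le_exp (by positivity))

lemma mul_max_zero_le (hy : y ≤ 1) : K * max y 0 ≤ K :=
  mul_le_of_le_one_right hK (max_le hy zero_le_one)

lemma lyapunov_le (hy : y ≤ 1) : lyapunov K y ≤ Real.exp K * y ^ 2 := by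
  rw [lyapunov, mul_comm]
  gcongr Real.exp ?_ * ?_
  exacts [mul_max_zero_le hK hy, max_zero_sq_le_sq y]

lemma lyapunovDeriv_le (hy : y ≤ 1) : lyapunovDeriv K y ≤ (2 + K) * Real.exp K := by
  have h1 : max y 0 ≤ 1 := max_le hy zero_le_one
  have hpoly : 2 * max y 0 + K * max y 0 ^ 2 ≤ 2 + K := by
    linarith [mul_le_of_le_one_right hK (pow_le_one₀ (n := 2) (le_max_right y 0) h1)]
  unfold lyapunovDeriv
  gcongr
  exact mul_max_zero_le hK hy

omit hK in
lemma abs_exp_sub_one_sub_le {x R : ℝ} (hx : |x| ≤ R) :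
    |Real.exp x - 1 - x| ≤ x ^ 2 * Real.exp R := by
  have h := Complex.norm_exp_sub_sum_le_norm_mul_exp x 2
  simp only [sum_range_succ, sum_range_zero, pow_zero, pow_one, Nat.factorial, zero_add,
    Complex.norm_real, Real.norm_eq_abs, sq_abs, Nat.cast_one, mul_one, div_one] at h
  calc |Real.exp x - 1 - x| ≤ x ^ 2 * Real.exp |x| := by
        rw [sub_sub]; exact_mod_cast h
    _ ≤ x ^ 2 * Real.exp R := by gcongr

lemma sq_mul_exp_add_le {h : ℝ} (hy : |y| ≤ 1) (hh : |h| ≤ 1) :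
    (y + h) ^ 2 * Real.exp (K * (y + h)) ≤
      (y ^ 2 + (2 * y + K * y ^ 2) * h) * Real.exp (K * y) +
        Real.exp K * (1 + 3 * K + 4 * (K ^ 2 * Real.exp K)) * h ^ 2 := by
  obtain ⟨hy0, hy1⟩ := abs_le.1 hy
  obtain ⟨hh0, hh1⟩ := abs_le.1 hh
  have hexp : Real.exp (K * h) ≤ 1 + K * h + K ^ 2 * Real.exp K * h ^ 2 := by
    have hKh : |K * h| ≤ K := by
      rw [abs_mul, abs_of_nonneg hK]; exact mul_le_of_le_one_right hK hh
    linarith [(abs_le.1 (abs_exp_sub_one_sub_le hKh)).2]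
  have hpoly : (y + h) ^ 2 * (1 + K * h + K ^ 2 * Real.exp K * h ^ 2) ≤
      y ^ 2 + (2 * y + K * y ^ 2) * h + (1 + 3 * K + 4 * (K ^ 2 * Real.exp K)) * h ^ 2 := by
    have hquad : (y + h) ^ 2 * (K ^ 2 * Real.exp K * h ^ 2) ≤ 4 * (K ^ 2 * Real.exp K * h ^ 2) := by
      gcongr; nlinarith
    have hlin : K * h ^ 2 * (2 * y + h) ≤ K * h ^ 2 * 3 := by gcongr; linarith
    linarith
  calc (y + h) ^ 2 * Real.exp (K * (y + h))
      = Real.exp (K * y) * ((y + h) ^ 2 * Real.exp (K * h)) := by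
        rw [mul_add, Real.exp_add]; ring
    _ ≤ Real.exp (K * y) * (y ^ 2 + (2 * y + K * y ^ 2) * h +
          (1 + 3 * K + 4 * (K ^ 2 * Real.exp K)) * h ^ 2) := by
        gcongr
        exact (mul_le_mul_of_nonneg_left hexp (sq_nonneg _)).trans hpoly
    _ = (y ^ 2 + (2 * y + K * y ^ 2) * h) * Real.exp (K * y) +
          Real.exp (K * y) * ((1 + 3 * K + 4 * (K ^ 2 * Real.exp K)) * h ^ 2) := by ring
    _ ≤ _ := by
        rw [mul_assoc (Real.exp K)]
        gcongr
        exact mul_le_of_le_one_right hK hy1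

lemma lyapunov_add_le {h : ℝ} (hy : |y| ≤ 1) (hh : |h| ≤ 1) (hyh : y + h ≤ 1) :
    lyapunov K (y + h) ≤ lyapunov K y + lyapunovDeriv K y * h +
      Real.exp K * (1 + 3 * K + 4 * (K ^ 2 * Real.exp K)) * h ^ 2 := by
  rcases le_total 0 y with hy0 | hy0
  · have hle : lyapunov K (y + h) ≤ (y + h) ^ 2 * Real.exp (K * (y + h)) := by
      rcases le_total 0 (y + h) with h0 | h0
      · rw [lyapunov, max_eq_left h0]
      · rw [lyapunov, max_eq_right h0]
        simp only [ne_eq, OfNat.ofNat_ne_zero, not_false_eq_true, zero_pow, zero_mul]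
        positivity
    refine (hle.trans (sq_mul_exp_add_le hK hy hh)).trans_eq ?_
    rw [lyapunov, lyapunovDeriv, max_eq_left hy0]
    ring
  · have hmax : max (y + h) 0 ^ 2 ≤ h ^ 2 :=
      calc max (y + h) 0 ^ 2 ≤ max h 0 ^ 2 := by gcongr; linarith
        _ ≤ h ^ 2 := max_zero_sq_le_sq h
    calc lyapunov K (y + h) ≤ h ^ 2 * Real.exp K := by
          unfold lyapunov
          gcongr
          exact mul_max_zero_le hK hyh
      _ ≤ h ^ 2 * (Real.exp K * (1 + 3 * K + 4 * (K ^ 2 * Real.exp K))) := by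
          gcongr
          refine le_mul_of_one_le_right (Real.exp_pos K).le ?_
          have : 0 ≤ 3 * K + 4 * (K ^ 2 * Real.exp K) := by positivity
          linarith
      _ = _ := by simp [lyapunov, lyapunovDeriv, max_eq_right hy0, mul_comm]

end Lyapunov

section LyapunovExponent

/-- `K` is large enough for the mean-field drift `D_β` to contract `lyapunov K` at rate
`(3/2) * relaxationRate q β`; the linearization at `1/q` has the larger rate
`2 * relaxationRate q β`. -/
structure IsLyapunovExponent (q : ℕ) (β K : ℝ) : Prop where
  pos : 0 < K
  drift_le : ∀ y : ℝ, 0 ≤ y → 1 / (q : ℝ) + y ≤ 1 →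
    (2 * y + K * y ^ 2) * Dfun q β (1 / q + y) ≤ -(3 / 2 * relaxationRate q β) * y ^ 2

variable {q : ℕ} {β : ℝ} (hq : 1 < q)
include hq

lemma exists_Dfun_le_near (hκ : 0 < relaxationRate q β) :
    ∃ r > 1 / (q : ℝ), ∀ y, 0 < y → 1 / q + y < r →
      Dfun q β (1 / q + y) ≤ -(3 / 4 * relaxationRate q β) * y := by
  have hslope : ∀ᶠ x in 𝓝[>] (1 / (q : ℝ)), slope (Dfun q β) (1 / q) x < -(3 / 4 *
      relaxationRate q β) :=
    (hasDerivAt_Dfun_inv_card hq β).hasDerivWithinAt.limsup_slope_le' Set.self_notMem_Ioi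
      (by linarith)
  obtain ⟨r, hr, hlt⟩ := mem_nhdsGT_iff_exists_Ioo_subset.1 hslope
  refine ⟨r, hr, fun y hy0 hyr ↦ ?_⟩
  have := hlt ⟨by linarith, hyr⟩
  rw [Set.mem_ofPred_eq, slope_def_field, Dfun_inv_card hq, sub_zero, add_sub_cancel_left,
    div_lt_iff₀ hy0] at this
  exact this.le

lemma exists_Dfun_le_away (h : ∀ x ∈ Set.Ioc (1 / (q : ℝ)) 1, Dfun q β x < 0) {r : ℝ}
    (hr : 1 / (q : ℝ) < r) : ∃ c > 0, ∀ x, r ≤ x → x ≤ 1 → Dfun q β x ≤ -c := by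
  rcases le_or_gt r 1 with hr1 | hr1
  · obtain ⟨x₀, hx₀, hmax⟩ := isCompact_Icc.exists_isMaxOn (Set.nonempty_Icc.2 hr1)
      (continuous_Dfun hq β).continuousOn
    refine ⟨-Dfun q β x₀, neg_pos.2 (h x₀ ⟨hr.trans_le hx₀.1, hx₀.2⟩), fun x hrx hx1 ↦ ?_⟩
    rw [neg_neg]
    exact hmax ⟨hrx, hx1⟩
  · exact ⟨1, one_pos, fun x hrx hx1 ↦ by linarith⟩

theorem exists_isLyapunovExponent (hκ : 0 < relaxationRate q β)
    (h : ∀ x ∈ Set.Ioc (1 / (q : ℝ)) 1, Dfun q β x < 0) : ∃ K, IsLyapunovExponent q β K := by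
  obtain ⟨r, hr, hnear⟩ := exists_Dfun_le_near hq hκ
  obtain ⟨c, hc, haway⟩ := exists_Dfun_le_away hq h hr
  refine ⟨3 / 2 * relaxationRate q β / c, by positivity, fun y hy hy1 ↦ ?_⟩
  rcases hy.eq_or_lt with rfl | hy0
  · simp
  have hneg : Dfun q β (1 / q + y) < 0 := h _ ⟨by linarith, hy1⟩
  rw [add_mul]
  rcases lt_or_ge (1 / (q : ℝ) + y) r with hyr | hyr
  · have hlin : 2 * y * Dfun q β (1 / q + y) ≤ 2 * y * (-(3 / 4 * relaxationRate q β) * y) := by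
      gcongr; exact hnear y hy0 hyr
    have hquad : 3 / 2 * relaxationRate q β / c * y ^ 2 * Dfun q β (1 / q + y) ≤ 0 :=
      mul_nonpos_of_nonneg_of_nonpos (by positivity) hneg.le
    linarith
  · have hlin : 2 * y * Dfun q β (1 / q + y) ≤ 0 :=
      mul_nonpos_of_nonneg_of_nonpos (by positivity) hneg.le
    have hquad : 3 / 2 * relaxationRate q β / c * y ^ 2 * Dfun q β (1 / q + y) ≤
        3 / 2 * relaxationRate q β / c * y ^ 2 * -c := by
      gcongr; exact haway _ hyr hy1
    have hcancel : 3 / 2 * relaxationRate q β / c * y ^ 2 * -c =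
        -(3 / 2 * relaxationRate q β) * y ^ 2 := by field_simp
    linarith

end LyapunovExponent

/-! ### Softmax estimates -/

section SoftmaxEstimates

variable {ι : Type*} [Fintype ι]

lemma abs_softmax_sub_linear_le {y : ι → ℝ} {R : ℝ} (hy : ∀ j, |y j| ≤ R) (hs : ∑ j, y j = 0)
    (k : ι) : |softmax y k - 1 / Fintype.card ι - y k / Fintype.card ι| ≤
      (2 + R) * (Real.exp R * ∑ j, y j ^ 2) := by
  have : Nonempty ι := ⟨k⟩
  have hq : (1 : ℝ) ≤ Fintype.card ι := by exact_mod_cast Fintype.card_pos (α := ι)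
  have hR : 0 ≤ R := (abs_nonneg _).trans (hy k)
  obtain ⟨r, hr⟩ : ∃ r : ι → ℝ, ∀ j, Real.exp (y j) = 1 + y j + r j :=
    ⟨fun j ↦ Real.exp (y j) - 1 - y j, fun j ↦ by ring⟩
  have hr0 (j : ι) : 0 ≤ r j := by linarith [Real.add_one_le_exp (y j), hr j]
  have hr_le (j : ι) : r j ≤ Real.exp R * y j ^ 2 := by
    linarith [hr j, (abs_le.1 (abs_exp_sub_one_sub_le (hy j))).2]
  have hsum0 : 0 ≤ ∑ j, r j := sum_nonneg fun j _ ↦ hr0 j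
  have hden : ∑ j, Real.exp (y j) = Fintype.card ι + ∑ j, r j := by
    simp [hr, sum_add_distrib, hs]
  have hsoft : softmax y k - 1 / Fintype.card ι - y k / Fintype.card ι =
      (r k - (∑ j, r j) * (1 + y k) / Fintype.card ι) / (Fintype.card ι + ∑ j, r j) := by
    rw [softmax, hden, hr k]
    field_simp
    ring
  have hrk : |r k| ≤ ∑ j, r j := by
    rw [abs_of_nonneg (hr0 k)]
    exact single_le_sum (fun j _ ↦ hr0 j) (mem_univ k)
  have hlin : |(∑ j, r j) * (1 + y k) / Fintype.card ι| ≤ (∑ j, r j) * (1 + R) := by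
    rw [abs_div, abs_mul, abs_of_nonneg hsum0, Nat.abs_cast]
    refine (div_le_self (by positivity) hq).trans ?_
    gcongr
    linarith [abs_add_le 1 (y k), abs_one (α := ℝ), hy k]
  rw [hsoft, abs_div, abs_of_nonneg (by positivity : 0 ≤ Fintype.card ι + ∑ j, r j)]
  calc |r k - (∑ j, r j) * (1 + y k) / Fintype.card ι| / (Fintype.card ι + ∑ j, r j)
      ≤ |r k - (∑ j, r j) * (1 + y k) / Fintype.card ι| :=
        div_le_self (abs_nonneg _) (by linarith)
    _ ≤ (2 + R) * ∑ j, r j := by linarith [abs_sub (r k) ((∑ j, r j) * (1 + y k) / Fintype.card ι)]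
    _ ≤ (2 + R) * (Real.exp R * ∑ j, y j ^ 2) := by
        rw [mul_sum univ _ (Real.exp R)]
        gcongr with j
        exact hr_le j

lemma card_mul_exp_le_sum_exp {ι : Type*} {s : Finset ι} {y : ι → ℝ} {m : ℝ}
    (h : ∑ j ∈ s, y j = #s * m) : #s * Real.exp m ≤ ∑ j ∈ s, Real.exp (y j) := by
  have htangent (j : ι) : Real.exp m * (1 + (y j - m)) ≤ Real.exp (y j) := by
    rw [← add_sub_cancel m (y j), Real.exp_add, add_sub_cancel]
    gcongr
    linarith [Real.add_one_le_exp (y j - m)]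
  refine le_trans (le_of_eq ?_) (sum_le_sum fun j _ ↦ htangent j)
  rw [← mul_sum, sum_add_distrib, sum_sub_distrib, h]
  simp [mul_comm]

lemma softmax_eq_inv [DecidableEq ι] (x : ι → ℝ) (k : ι) :
    softmax x k = (1 + ∑ j ∈ univ.erase k, Real.exp (x j - x k))⁻¹ := by
  have hratio : ∑ j, Real.exp (x j - x k) = (∑ j, Real.exp (x j)) / Real.exp (x k) := by
    simp only [Real.exp_sub, sum_div]
  rw [softmax, ← inv_div, ← hratio, ← add_sum_erase _ _ (mem_univ k), sub_self, Real.exp_zero]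

lemma softmax_mul_le [Nontrivial ι] (c : ℝ) {x : ι → ℝ} (hx : ∑ j, x j = 1) (k : ι) :
    softmax (fun j ↦ c * x j) k ≤ (1 + ((Fintype.card ι : ℝ) - 1) *
      Real.exp (c * (1 - Fintype.card ι * x k) / ((Fintype.card ι : ℝ) - 1)))⁻¹ := by
  classical
  have hq : (0 : ℝ) < Fintype.card ι - 1 := by
    simpa using Fintype.one_lt_card (α := ι)
  have hcard : (#(univ.erase k) : ℝ) = Fintype.card ι - 1 := by
    rw [card_erase_of_mem (mem_univ k), card_univ, Nat.cast_pred Fintype.card_pos]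
  have hmean : ∑ j ∈ univ.erase k, (c * x j - c * x k) =
      #(univ.erase k) * (c * (1 - Fintype.card ι * x k) / ((Fintype.card ι : ℝ) - 1)) := by
    have hrest : ∑ j ∈ univ.erase k, x j = 1 - x k := by
      rw [← hx, ← add_sum_erase _ _ (mem_univ k), add_sub_cancel_left]
    rw [sum_sub_distrib, ← mul_sum, hrest, sum_const, nsmul_eq_mul, hcard, mul_div_cancel₀ _ hq.ne']
    ring
  rw [softmax_eq_inv, ← hcard]
  gcongr
  exact hcard ▸ card_mul_exp_le_sum_exp hmean

end SoftmaxEstimates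

/-! ### Color proportions -/

section Proportion

variable {q n : ℕ}

/-- The proportion of sites that have color `k`. -/
noncomputable def proportion (σ : Fin n → Fin q) (k : Fin q) : ℝ := colorCount univ σ k / n

/-- The change of the count of color `k` when the site `m.1` gets color `m.2`. -/
def countIncrement (σ : Fin n → Fin q) (k : Fin q) (m : Fin n × Fin q) : ℝ :=
  (if m.2 = k then 1 else 0) - if σ m.1 = k then 1 else 0

/-- The deviation of the proportion of color `k` from its equilibrium value `1 / q`. -/
noncomputable def deviation (σ : Fin n → Fin q) (k : Fin q) : ℝ := proportion σ k - 1 / q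

/-- The squared Euclidean norm of the vector of deviations. -/
noncomputable def sqDeviation (σ : Fin n → Fin q) : ℝ := ∑ k, deviation σ k ^ 2

lemma proportion_nonneg (σ : Fin n → Fin q) (k : Fin q) : 0 ≤ proportion σ k :=
  div_nonneg (colorCount_nonneg _ _ _) n.cast_nonneg

lemma proportion_eq_add_deviation (σ : Fin n → Fin q) (k : Fin q) :
    proportion σ k = 1 / q + deviation σ k :=
  (add_sub_cancel _ _).symm

lemma abs_countIncrement_le_one (σ : Fin n → Fin q) (k : Fin q) (m : Fin n × Fin q) :
    |countIncrement σ k m| ≤ 1 := by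
  unfold countIncrement; split_ifs <;> norm_num

lemma deviation_update (σ : Fin n → Fin q) (m : Fin n × Fin q) (k : Fin q) :
    deviation (update σ m.1 m.2) k = deviation σ k + countIncrement σ k m / n := by
  rw [deviation, deviation, proportion, colorCount_update_of_mem (mem_univ _), proportion,
    countIncrement]
  ring

lemma sqDeviation_nonneg (σ : Fin n → Fin q) : 0 ≤ sqDeviation σ :=
  sum_nonneg fun _ _ ↦ sq_nonneg _

variable [NeZero n]

lemma sum_proportion (σ : Fin n → Fin q) : ∑ k, proportion σ k = 1 := by
  simp only [proportion]
  rw [← sum_div, sum_colorCount, card_univ, Fintype.card_fin, div_self (NeZero.ne _)]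

lemma proportion_le_one (σ : Fin n → Fin q) (k : Fin q) : proportion σ k ≤ 1 :=
  sum_proportion σ ▸ single_le_sum (fun j _ ↦ proportion_nonneg σ j) (mem_univ k)

lemma abs_colorCount_erase_sub_le (σ : Fin n → Fin q) (u : Fin n) (k : Fin q) :
    |colorCount (univ.erase u) σ k - n * proportion σ k| ≤ 1 := by
  rw [proportion, mul_div_cancel₀ _ (NeZero.ne _), colorCount_eq_erase_add (mem_univ u)]
  split_ifs <;> simp

lemma abs_deviation_le_one (σ : Fin n → Fin q) (k : Fin q) : |deviation σ k| ≤ 1 := by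
  have hq : (1 : ℝ) / q ≤ 1 := by simpa using Nat.cast_inv_le_one (α := ℝ) q
  have hq0 : 0 ≤ (1 : ℝ) / q := by positivity
  rw [abs_le, deviation]
  constructor <;> linarith [proportion_nonneg σ k, proportion_le_one σ k]

lemma deviation_le_one (σ : Fin n → Fin q) (k : Fin q) : deviation σ k ≤ 1 :=
  (abs_le.1 (abs_deviation_le_one σ k)).2

lemma sum_deviation [NeZero q] (σ : Fin n → Fin q) : ∑ k, deviation σ k = 0 := by
  simp [deviation, sum_sub_distrib, sum_proportion]

omit [NeZero n] in
lemma moveMean_countIncrement {p : (Fin n → Fin q) → Fin n → Fin q → ℝ} (hp : IsUpdateRule p)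
    (σ : Fin n → Fin q) (k : Fin q) :
    moveMean p σ (countIncrement σ k) = (∑ u, p σ u k) / n - proportion σ k := by
  have hincrement : countIncrement σ k =
      fun m ↦ colorCount univ (update σ m.1 m.2) k - colorCount univ σ k :=
    funext fun m ↦ by rw [colorCount_update_of_mem (mem_univ _), add_sub_cancel_left,
      countIncrement]
  rw [hincrement, hp.moveMean_colorCount_update_sub, Fintype.card_fin, proportion]
  ring

end Proportion

/-! ### Mean-field approximation of the update probabilities -/

section MeanField

variable {q n : ℕ} [NeZero n] {β : ℝ} (hβ : 0 ≤ β)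
include hβ

lemma abs_pottsRate_sub_softmax_proportion_le (σ : Fin n → Fin q) (u : Fin n) (k : Fin q) :
    |pottsRate β σ u k - softmax (fun j ↦ 2 * β * proportion σ j) k| ≤
      4 * β * Real.exp (4 * β) / n := by
  have hn : (n : ℝ) ≠ 0 := NeZero.ne _
  have hscale (j : Fin q) : 2 * β / n * (n * proportion σ j) = 2 * β * proportion σ j := by
    field_simp
  simpa only [hscale] using
    abs_pottsRate_sub_softmax_le hβ σ u (abs_colorCount_erase_sub_le σ u) k

lemma pottsRate_le (hq : 1 < q) (σ : Fin n → Fin q) (u : Fin n) (k : Fin q) :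
    pottsRate β σ u k ≤
      proportion σ k + Dfun q β (proportion σ k) + 4 * β * Real.exp (4 * β) / n := by
  have : Nontrivial (Fin q) := Fin.nontrivial_iff_two_le.2 hq
  have hsoft := softmax_mul_le (2 * β) (sum_proportion σ) k
  rw [Fintype.card_fin] at hsoft
  rw [Dfun, add_neg_cancel_left]
  linarith [(abs_le.1 (abs_pottsRate_sub_softmax_proportion_le hβ σ u k)).2]

lemma sum_pottsRate_div_le (hq : 1 < q) (σ : Fin n → Fin q) (k : Fin q) :
    (∑ u, pottsRate β σ u k) / n ≤
      proportion σ k + Dfun q β (proportion σ k) + 4 * β * Real.exp (4 * β) / n := by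
  rw [div_le_iff₀ (by exact_mod_cast NeZero.pos n)]
  refine (sum_le_card_nsmul univ _ _ fun u _ ↦ pottsRate_le hβ hq σ u k).trans_eq ?_
  rw [card_univ, Fintype.card_fin, nsmul_eq_mul, mul_comm]

omit [NeZero n] in
lemma exists_abs_pottsRate_sub_linear_le (q : ℕ) [NeZero q] :
    ∃ C, 0 ≤ C ∧ ∀ (n : ℕ) [NeZero n] (σ : Fin n → Fin q) (u : Fin n) (k : Fin q),
      |pottsRate β σ u k - 1 / q - 2 * β / q * deviation σ k| ≤ C * (sqDeviation σ + 1 / n) := by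
  refine ⟨(2 + 2 * β) * (Real.exp (2 * β) * (4 * β ^ 2)) + 4 * β * Real.exp (4 * β),
    by positivity, fun n _ σ u k ↦ ?_⟩
  have hcenter : softmax (fun j ↦ 2 * β * proportion σ j) =
      softmax (fun j ↦ 2 * β * deviation σ j) := by
    ext k
    rw [← softmax_add_const (fun j ↦ 2 * β * deviation σ j) (2 * β * (1 / q))]
    simp only [← mul_add, deviation, sub_add_cancel]
  have hbound (j : Fin q) : |2 * β * deviation σ j| ≤ 2 * β := by
    rw [abs_mul, abs_of_nonneg (by positivity : 0 ≤ 2 * β)]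
    exact mul_le_of_le_one_right (by positivity) (abs_deviation_le_one σ j)
  have htaylor := abs_softmax_sub_linear_le hbound (by rw [← mul_sum, sum_deviation, mul_zero]) k
  have hsq : ∑ j, (2 * β * deviation σ j) ^ 2 = 4 * β ^ 2 * sqDeviation σ := by
    rw [sqDeviation, mul_sum]
    exact sum_congr rfl fun j _ ↦ by ring
  rw [Fintype.card_fin, hsq] at htaylor
  have hnear := abs_pottsRate_sub_softmax_proportion_le hβ σ u k
  rw [hcenter] at hnear
  have hsq0 := sqDeviation_nonneg σ
  calc |pottsRate β σ u k - 1 / q - 2 * β / q * deviation σ k|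
      = |(pottsRate β σ u k - softmax (fun j ↦ 2 * β * deviation σ j) k) +
          (softmax (fun j ↦ 2 * β * deviation σ j) k - 1 / q - 2 * β * deviation σ k / q)| := by
        ring_nf
    _ ≤ 4 * β * Real.exp (4 * β) / n +
          (2 + 2 * β) * (Real.exp (2 * β) * (4 * β ^ 2 * sqDeviation σ)) :=
        (abs_add_le _ _).trans (add_le_add hnear htaylor)
    _ ≤ 4 * β * Real.exp (4 * β) * (sqDeviation σ + 1 / n) +
          (2 + 2 * β) * (Real.exp (2 * β) * (4 * β ^ 2 * (sqDeviation σ + 1 / n))) := by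
        rw [div_eq_mul_one_div _ (n : ℝ)]
        gcongr <;> simp [hsq0]
    _ = _ := by ring

end MeanField

/-! ### The Lyapunov function -/

section LyapunovSum

variable {q n : ℕ}

/-- The Lyapunov function of the Glauber dynamics. -/
noncomputable def lyapunovSum (K : ℝ) (σ : Fin n → Fin q) : ℝ := ∑ k, lyapunov K (deviation σ k)

lemma lyapunovSum_nonneg (K : ℝ) (σ : Fin n → Fin q) : 0 ≤ lyapunovSum K σ :=
  sum_nonneg fun _ _ ↦ lyapunov_nonneg _ _

lemma abs_le_sum_max_zero {ι : Type*} [Fintype ι] {y : ι → ℝ} (h : ∑ j, y j = 0) (k : ι) :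
    |y k| ≤ ∑ j, max (y j) 0 := by
  classical
  refine abs_le'.2 ⟨(le_max_left _ _).trans
    (single_le_sum (f := fun j ↦ max (y j) 0) (fun _ _ ↦ le_max_right _ _) (mem_univ k)), ?_⟩
  calc -y k = ∑ j ∈ univ.erase k, y j := by
        rw [← add_sum_erase _ _ (mem_univ k)] at h; linarith
    _ ≤ ∑ j ∈ univ.erase k, max (y j) 0 := sum_le_sum fun _ _ ↦ le_max_left _ _
    _ ≤ ∑ j, max (y j) 0 :=
        sum_le_sum_of_subset_of_nonneg (erase_subset _ _) fun _ _ _ ↦ le_max_right _ _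

variable [NeZero n] {K : ℝ}

lemma lyapunovSum_le_exp_mul_sqDeviation (hK : 0 ≤ K) (σ : Fin n → Fin q) :
    lyapunovSum K σ ≤ Real.exp K * sqDeviation σ := by
  rw [sqDeviation, mul_sum]
  exact sum_le_sum fun k _ ↦ lyapunov_le hK (deviation_le_one σ k)

lemma lyapunovSum_le (hK : 0 ≤ K) (σ : Fin n → Fin q) : lyapunovSum K σ ≤ q * Real.exp K :=
  calc lyapunovSum K σ ≤ Real.exp K * sqDeviation σ := lyapunovSum_le_exp_mul_sqDeviation hK σ
    _ ≤ Real.exp K * ∑ _k : Fin q, 1 := by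
        unfold sqDeviation
        gcongr with k
        exact (sq_le_one_iff_abs_le_one _).2 (abs_deviation_le_one σ k)
    _ = q * Real.exp K := by simp [mul_comm]

lemma sqDeviation_le [NeZero q] (hK : 0 ≤ K) (σ : Fin n → Fin q) :
    sqDeviation σ ≤ q ^ 2 * lyapunovSum K σ :=
  calc sqDeviation σ ≤ ∑ _k : Fin q, (∑ j, max (deviation σ j) 0) ^ 2 :=
        sum_le_sum fun k _ ↦ sq_le_sq.2 <|
          (abs_le_sum_max_zero (sum_deviation σ) k).trans (le_abs_self _)
    _ = q * (∑ j, max (deviation σ j) 0) ^ 2 := by simp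
    _ ≤ q * (q * ∑ j, max (deviation σ j) 0 ^ 2) := by
        gcongr
        simpa using sq_sum_le_card_mul_sum_sq (s := univ) (f := fun j ↦ max (deviation σ j) 0)
    _ ≤ q * (q * lyapunovSum K σ) := by
        unfold lyapunovSum
        gcongr
        exact max_zero_sq_le_lyapunov hK _
    _ = q ^ 2 * lyapunovSum K σ := by ring

variable {β : ℝ}

omit [NeZero n] in
lemma updateOp_lyapunovSum (K : ℝ) {p : (Fin n → Fin q) → Fin n → Fin q → ℝ} (σ : Fin n → Fin q) :
    updateOp p (lyapunovSum K) σ =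
      ∑ k, moveMean p σ fun m ↦ lyapunov K (deviation (update σ m.1 m.2) k) := by
  rw [updateOp_apply, ← map_sum]
  congr 1
  ext m
  simp [lyapunovSum]

lemma moveMean_lyapunov_le (hK : 0 ≤ K) {p : (Fin n → Fin q) → Fin n → Fin q → ℝ}
    (hp : IsUpdateRule p) (σ : Fin n → Fin q) (k : Fin q) :
    moveMean p σ (fun m ↦ lyapunov K (deviation (update σ m.1 m.2) k)) ≤
      lyapunovDeriv K (deviation σ k) / n * ((∑ u, p σ u k) / n - proportion σ k) +
        (lyapunov K (deviation σ k) +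
          Real.exp K * (1 + 3 * K + 4 * (K ^ 2 * Real.exp K)) / n ^ 2) := by
  have hE := hp.isExpectation_moveMean σ
  rw [← moveMean_countIncrement hp, ← hE.map_affine]
  refine hE.monotone fun m ↦ ?_
  have hn : (1 : ℝ) ≤ n := by exact_mod_cast NeZero.one_le
  have hstep : |countIncrement σ k m / n| ≤ 1 := by
    rw [abs_div, Nat.abs_cast]
    exact div_le_one_of_le₀ ((abs_countIncrement_le_one σ k m).trans hn) (by positivity)
  have hle : deviation σ k + countIncrement σ k m / n ≤ 1 :=
    deviation_update σ m k ▸ deviation_le_one _ k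
  dsimp only
  rw [deviation_update]
  calc lyapunov K (deviation σ k + countIncrement σ k m / n)
      ≤ lyapunov K (deviation σ k) + lyapunovDeriv K (deviation σ k) * (countIncrement σ k m / n) +
          Real.exp K * (1 + 3 * K + 4 * (K ^ 2 * Real.exp K)) * (countIncrement σ k m / n) ^ 2 :=
        lyapunov_add_le hK (abs_deviation_le_one σ k) hstep hle
    _ ≤ lyapunov K (deviation σ k) + lyapunovDeriv K (deviation σ k) * (countIncrement σ k m / n) +
          Real.exp K * (1 + 3 * K + 4 * (K ^ 2 * Real.exp K)) * (1 / n ^ 2) := by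
        rw [div_pow]
        gcongr
        exact (sq_le_one_iff_abs_le_one _).2 (abs_countIncrement_le_one σ k m)
    _ = _ := by ring

lemma lyapunovDeriv_mul_Dfun_le (hK : IsLyapunovExponent q β K) (σ : Fin n → Fin q) (k : Fin q) :
    lyapunovDeriv K (deviation σ k) * Dfun q β (proportion σ k) ≤
      -(3 / 2 * relaxationRate q β) * lyapunov K (deviation σ k) := by
  have hle := proportion_le_one σ k
  rw [proportion_eq_add_deviation] at hle ⊢
  unfold lyapunovDeriv lyapunov
  rcases le_total 0 (deviation σ k) with h | h
  · rw [max_eq_left h, mul_right_comm, ← mul_assoc]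
    exact mul_le_mul_of_nonneg_right (hK.drift_le _ h hle) (Real.exp_pos _).le
  · simp [max_eq_right h]

omit [NeZero n] in
theorem exists_drift_lyapunovSum (hq : 1 < q) (hβ : 0 ≤ β) (hK : IsLyapunovExponent q β K) :
    ∃ C, 0 < C ∧ ∀ (n : ℕ) [NeZero n] (σ : Fin n → Fin q), glauberOp q n β (lyapunovSum K) σ ≤
      (1 - 3 / 2 * relaxationRate q β / n) * lyapunovSum K σ + C / n ^ 2 := by
  have : NeZero q := ⟨by omega⟩
  have hK0 := hK.pos
  obtain ⟨C, hC⟩ : ∃ C, C = Real.exp K * (1 + 3 * K + 4 * (K ^ 2 * Real.exp K)) +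
    (2 + K) * Real.exp K * (4 * β * Real.exp (4 * β)) := ⟨_, rfl⟩
  refine ⟨q * C, by rw [hC]; positivity, fun n _ σ ↦ ?_⟩
  have hn : (0 : ℝ) < n := by exact_mod_cast NeZero.pos n
  have hcolor (k : Fin q) :
      moveMean (pottsRate β) σ (fun m ↦ lyapunov K (deviation (update σ m.1 m.2) k)) ≤
        (1 - 3 / 2 * relaxationRate q β / n) * lyapunov K (deviation σ k) + C / n ^ 2 := by
    have hrate : (∑ u, pottsRate β σ u k) / n - proportion σ k ≤
        Dfun q β (proportion σ k) + 4 * β * Real.exp (4 * β) / n := by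
      linarith [sum_pottsRate_div_le hβ hq σ k]
    have hderiv0 := lyapunovDeriv_nonneg hK0.le (deviation σ k)
    calc moveMean (pottsRate β) σ (fun m ↦ lyapunov K (deviation (update σ m.1 m.2) k))
        ≤ _ := moveMean_lyapunov_le hK0.le (isUpdateRule_pottsRate β) σ k
      _ ≤ lyapunovDeriv K (deviation σ k) / n *
            (Dfun q β (proportion σ k) + 4 * β * Real.exp (4 * β) / n) +
            (lyapunov K (deviation σ k) +
              Real.exp K * (1 + 3 * K + 4 * (K ^ 2 * Real.exp K)) / n ^ 2) := by gcongr
      _ = lyapunovDeriv K (deviation σ k) * Dfun q β (proportion σ k) / n +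
            lyapunovDeriv K (deviation σ k) * (4 * β * Real.exp (4 * β)) / n ^ 2 +
            (lyapunov K (deviation σ k) +
              Real.exp K * (1 + 3 * K + 4 * (K ^ 2 * Real.exp K)) / n ^ 2) := by field_simp
      _ ≤ -(3 / 2 * relaxationRate q β) * lyapunov K (deviation σ k) / n +
            (2 + K) * Real.exp K * (4 * β * Real.exp (4 * β)) / n ^ 2 +
            (lyapunov K (deviation σ k) +
              Real.exp K * (1 + 3 * K + 4 * (K ^ 2 * Real.exp K)) / n ^ 2) := by
          gcongr ?_ / _ + ?_ * _ / _ + _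
          exacts [lyapunovDeriv_mul_Dfun_le hK σ k, lyapunovDeriv_le hK0.le (deviation_le_one σ k)]
      _ = _ := by rw [hC]; ring
  calc glauberOp q n β (lyapunovSum K) σ
    _ = ∑ k, moveMean (pottsRate β) σ (fun m ↦ lyapunov K (deviation (update σ m.1 m.2) k)) :=
        updateOp_lyapunovSum K σ
    _ ≤ _ := sum_le_sum fun k _ ↦ hcolor k
    _ = (1 - 3 / 2 * relaxationRate q β / n) * lyapunovSum K σ + q * C / n ^ 2 := by
        rw [sum_add_distrib, ← mul_sum, lyapunovSum]
        simp [mul_div_assoc]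

end LyapunovSum

/-! ### Second moments of the deviations -/

section Moments

variable {q : ℕ} {β : ℝ}

lemma one_sub_rate_mem_Ico {κ c : ℝ} {n : ℕ} (hκ : 0 < κ) (hκ1 : κ ≤ 1) (hc : 0 < c) (hcn : c ≤ n) :
    1 - c * κ / n ∈ Set.Ico (0 : ℝ) 1 := by
  have hn : (0 : ℝ) < n := hc.trans_le hcn
  have hpos : 0 < c * κ / n := by positivity
  have hle : c * κ / n ≤ 1 := (div_le_one hn).2 ((mul_le_of_le_one_right hc.le hκ1).trans hcn)
  constructor <;> linarith

theorem exists_pow_glauberOp_sqDeviation_le (hq : 1 < q) (hβ0 : 0 ≤ β) (hβ : β < betaS q) :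
    ∃ C, 0 < C ∧ ∀ (n : ℕ) [NeZero n], 2 ≤ n → ∀ (σ : Fin n → Fin q) (t : ℕ),
      (glauberOp q n β ^ t) sqDeviation σ ≤
        C * ((1 - 3 / 2 * relaxationRate q β / n) ^ t + 1 / n) := by
  have : NeZero q := ⟨by omega⟩
  have hκ := relaxationRate_pos hq hβ0 hβ
  obtain ⟨K, hK⟩ := exists_isLyapunovExponent hq hκ fun _ ↦ Dfun_neg_of_lt_betaS hq hβ0 hβ
  obtain ⟨d, hd, hdrift⟩ := exists_drift_lyapunovSum hq hβ0 hK
  set κ := relaxationRate q β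
  refine ⟨q ^ 2 * (q * Real.exp K + d / (3 / 2 * κ)), by positivity, fun n _ hn σ t ↦ ?_⟩
  have hn2 : (2 : ℝ) ≤ n := by exact_mod_cast hn
  obtain ⟨hr0, hr1⟩ := one_sub_rate_mem_Ico hκ (relaxationRate_le_one hβ0) (by norm_num)
    (by linarith : (3 / 2 : ℝ) ≤ n)
  set r := 1 - 3 / 2 * κ / n with hr
  have hlimit : d / n ^ 2 / (1 - r) = d / (3 / 2 * κ) * (1 / n) := by
    rw [hr]; field_simp; ring
  have hsq : (sqDeviation : (Fin n → Fin q) → ℝ) ≤ (q : ℝ) ^ 2 • lyapunovSum K :=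
    sqDeviation_le hK.pos.le
  calc (glauberOp q n β ^ t) sqDeviation σ
    _ ≤ q ^ 2 * (glauberOp q n β ^ t) (lyapunovSum K) σ := by
        simpa using ((isMarkov_glauberOp β).pow t).monotone hsq σ
    _ ≤ q ^ 2 * (r ^ t * (q * Real.exp K) + d / (3 / 2 * κ) * (1 / n)) := by
        rw [← hlimit]
        gcongr
        refine ((isMarkov_glauberOp β).pow_apply_le_of_drift hr0 hr1 (by positivity) (hdrift n)
          t σ).trans ?_
        gcongr
        exact lyapunovSum_le hK.pos.le σ
    _ ≤ q ^ 2 * (q * Real.exp K + d / (3 / 2 * κ)) * (r ^ t + 1 / n) := by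
        rw [mul_assoc]
        have : 0 ≤ d / (3 / 2 * κ) * r ^ t := by positivity
        have : 0 ≤ q * Real.exp K * (1 / n) := by positivity
        gcongr
        linarith

theorem exists_pottsMean_sqDeviation_le (hq : 1 < q) (hβ0 : 0 ≤ β) (hβ : β < betaS q) :
    ∃ C, 0 < C ∧ ∀ (n : ℕ) [NeZero n], 2 ≤ n → pottsMean q n β sqDeviation ≤ C / n := by
  have : NeZero q := ⟨by omega⟩
  have hκ := relaxationRate_pos hq hβ0 hβ
  obtain ⟨K, hK⟩ := exists_isLyapunovExponent hq hκ fun _ ↦ Dfun_neg_of_lt_betaS hq hβ0 hβ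
  obtain ⟨d, hd, hdrift⟩ := exists_drift_lyapunovSum hq hβ0 hK
  set κ := relaxationRate q β
  refine ⟨q ^ 2 * (d / (3 / 2 * κ)), by positivity, fun n _ hn ↦ ?_⟩
  have hn2 : (2 : ℝ) ≤ n := by exact_mod_cast hn
  have hr1 := (one_sub_rate_mem_Ico hκ (relaxationRate_le_one hβ0) (by norm_num)
    (by linarith : (3 / 2 : ℝ) ≤ n)).2
  have hE := isExpectation_pottsMean (q := q) (n := n) β
  calc pottsMean q n β sqDeviation
    _ ≤ q ^ 2 * pottsMean q n β (lyapunovSum K) := by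
        have hsq : (sqDeviation : (Fin n → Fin q) → ℝ) ≤ (q : ℝ) ^ 2 • lyapunovSum K :=
          sqDeviation_le hK.pos.le
        simpa using hE.monotone hsq
    _ ≤ q ^ 2 * (d / n ^ 2 / (1 - (1 - 3 / 2 * κ / n))) := by
        gcongr
        exact hE.le_of_drift (pottsMean_glauberOp β _) hr1 (hdrift n)
    _ = q ^ 2 * (d / (3 / 2 * κ)) / n := by rw [sub_sub_cancel]; field_simp

end Moments

/-! ### The maximal coupling -/

section MaximalCoupling

variable {ι : Type*} [Fintype ι] [DecidableEq ι]

/-- The total excess of `p` over `r`. For probability vectors this is their total variation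
distance. -/
def excess {ι : Type*} [Fintype ι] (p r : ι → ℝ) : ℝ := ∑ k, max (p k - r k) 0

/-- The maximal coupling of the probability vectors `p` and `r`: the common part is put on the
diagonal and the excesses are coupled independently. For `p = r` the last term is `0 / 0 = 0`. -/
noncomputable def maximalCoupling (p r : ι → ℝ) (k l : ι) : ℝ :=
  (if k = l then min (p k) (r k) else 0) + max (p k - r k) 0 * max (r l - p l) 0 / excess p r

variable {p r : ι → ℝ}

lemma min_add_max_sub_zero (a b : ℝ) : min a b + max (a - b) 0 = a := by
  rcases le_total a b with h | h <;> simp [h]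

omit [DecidableEq ι] in
lemma excess_nonneg (p r : ι → ℝ) : 0 ≤ excess p r := sum_nonneg fun _ _ ↦ le_max_right _ _

lemma maximalCoupling_nonneg (hp : 0 ≤ p) (hr : 0 ≤ r) (k l : ι) : 0 ≤ maximalCoupling p r k l := by
  have := excess_nonneg p r
  refine add_nonneg ?_ (by positivity)
  split_ifs
  exacts [le_min (hp k) (hr k), le_rfl]

omit [DecidableEq ι] in
lemma max_sub_zero_mul_excess_div (p r : ι → ℝ) (k : ι) :
    max (p k - r k) 0 * excess p r / excess p r = max (p k - r k) 0 := by
  rcases eq_or_ne (excess p r) 0 with h0 | h0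
  · rw [h0, div_zero, (sum_eq_zero_iff_of_nonneg fun _ _ ↦ le_max_right _ _).1 h0 k (mem_univ k)]
  · exact mul_div_cancel_right₀ _ h0

variable (h : ∑ k, p k = ∑ k, r k)
include h

omit [DecidableEq ι] in
lemma excess_comm : excess p r = excess r p := by
  refine sub_eq_zero.1 ?_
  calc excess p r - excess r p = ∑ k, (p k - r k) := by
        rw [excess, excess, ← sum_sub_distrib]
        refine sum_congr rfl fun k _ ↦ ?_
        linarith [min_add_max_sub_zero (p k) (r k), min_add_max_sub_zero (r k) (p k),
          min_comm (p k) (r k)]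
    _ = 0 := by rw [sum_sub_distrib, h, sub_self]

omit [DecidableEq ι] in
lemma two_mul_excess : 2 * excess p r = ∑ k, |p k - r k| := by
  calc 2 * excess p r = excess p r + excess r p := by rw [two_mul, ← excess_comm h]
    _ = ∑ k, |p k - r k| := by
        rw [excess, excess, ← sum_add_distrib]
        refine sum_congr rfl fun k _ ↦ ?_
        rcases le_total (p k) (r k) with hk | hk <;> simp [hk, abs_of_nonneg, abs_of_nonpos]

lemma sum_maximalCoupling_right (k : ι) : ∑ l, maximalCoupling p r k l = p k := by
  simp only [maximalCoupling, sum_add_distrib, sum_ite_eq, mem_univ, if_true, ← sum_div, ← mul_sum]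
  rw [← excess, ← excess_comm h, max_sub_zero_mul_excess_div, min_add_max_sub_zero]

omit h in
lemma maximalCoupling_swap (h : ∑ k, p k = ∑ k, r k) (k l : ι) :
    maximalCoupling p r k l = maximalCoupling r p l k := by
  unfold maximalCoupling
  rw [excess_comm h, mul_comm]
  congr 1
  rcases eq_or_ne k l with rfl | hkl
  · simp [min_comm]
  · simp [hkl, hkl.symm]

lemma sum_maximalCoupling_left (l : ι) : ∑ k, maximalCoupling p r k l = r l := by
  simp only [maximalCoupling_swap h, sum_maximalCoupling_right h.symm]

lemma sum_offDiag_maximalCoupling_le :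
    ∑ k, ∑ l, maximalCoupling p r k l * (if k = l then 0 else 1) ≤ excess p r :=
  calc ∑ k, ∑ l, maximalCoupling p r k l * (if k = l then 0 else 1)
    _ ≤ ∑ k, ∑ l, max (p k - r k) 0 * max (r l - p l) 0 / excess p r := by
        refine sum_le_sum fun k _ ↦ sum_le_sum fun l _ ↦ ?_
        have := excess_nonneg p r
        by_cases hkl : k = l
        · simp only [hkl, if_true, mul_zero]; positivity
        · simp [maximalCoupling, hkl]
    _ = ∑ k, max (p k - r k) 0 := by
        refine sum_congr rfl fun k _ ↦ ?_
        rw [← sum_div, ← mul_sum, ← excess, ← excess_comm h, max_sub_zero_mul_excess_div]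

end MaximalCoupling

/-! ### The coupled dynamics -/

section Coupling

variable {V C : Type*} [Fintype V] [DecidableEq V] [Fintype C] [DecidableEq C]

/-- The transition operator of two copies of the single-site dynamics with update rule `p` that
select the same site and draw its new colors from the maximal coupling. -/
noncomputable def coupledOp (p : (V → C) → V → C → ℝ) :
    ((V → C) × (V → C) → ℝ) →ₗ[ℝ] ((V → C) × (V → C) → ℝ) :=
  LinearMap.pi fun z ↦ (Fintype.card V : ℝ)⁻¹ • ∑ u, ∑ k, ∑ l,
    maximalCoupling (p z.1 u) (p z.2 u) k l • LinearMap.proj (update z.1 u k, update z.2 u l)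

/-- The indicator that the two configurations differ at the site `v`. -/
def disagreement (v : V) (z : (V → C) × (V → C)) : ℝ := if z.1 v = z.2 v then 0 else 1

omit [Fintype V] [DecidableEq V] [Fintype C] in
lemma disagreement_nonneg (v : V) : 0 ≤ disagreement (C := C) v := fun z ↦ by
  unfold disagreement; split_ifs <;> simp

omit [Fintype V] [DecidableEq V] [Fintype C] in
lemma disagreement_le_one (v : V) : disagreement (C := C) v ≤ 1 := fun z ↦ by
  unfold disagreement; split_ifs <;> simp

variable {p : (V → C) → V → C → ℝ}

lemma coupledOp_apply (F : (V → C) × (V → C) → ℝ) (z : (V → C) × (V → C)) :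
    coupledOp p F z = (Fintype.card V : ℝ)⁻¹ * ∑ u, ∑ k, ∑ l,
      maximalCoupling (p z.1 u) (p z.2 u) k l * F (update z.1 u k, update z.2 u l) := by
  simp [coupledOp, LinearMap.sum_apply]

namespace IsUpdateRule

variable (hp : IsUpdateRule p)
include hp

omit [Fintype V] [DecidableEq V] [DecidableEq C] in
lemma sum_eq_sum (x y : V → C) (u : V) : ∑ k, p x u k = ∑ k, p y u k :=
  (hp.sum_eq_one x u).trans (hp.sum_eq_one y u).symm

lemma coupledOp_comp_fst (f : (V → C) → ℝ) :
    coupledOp p (f ∘ Prod.fst) = updateOp p f ∘ Prod.fst := by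
  ext z
  simp only [coupledOp_apply, Function.comp_apply, updateOp_apply, moveMean_apply,
    Fintype.sum_prod_type, ← sum_mul, sum_maximalCoupling_right (hp.sum_eq_sum _ _ _)]

lemma coupledOp_comp_snd (f : (V → C) → ℝ) :
    coupledOp p (f ∘ Prod.snd) = updateOp p f ∘ Prod.snd := by
  ext z
  simp only [coupledOp_apply, Function.comp_apply, updateOp_apply, moveMean_apply,
    Fintype.sum_prod_type]
  congr! 2 with u
  rw [sum_comm]
  simp only [← sum_mul, sum_maximalCoupling_left (hp.sum_eq_sum _ _ _)]

lemma coupledOp_pow_comp_fst (t : ℕ) (f : (V → C) → ℝ) :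
    (coupledOp p ^ t) (f ∘ Prod.fst) = (updateOp p ^ t) f ∘ Prod.fst := by
  induction t generalizing f with
  | zero => rfl
  | succ t ih => simp only [pow_succ, Module.End.mul_apply, hp.coupledOp_comp_fst, ih]

lemma coupledOp_pow_comp_snd (t : ℕ) (f : (V → C) → ℝ) :
    (coupledOp p ^ t) (f ∘ Prod.snd) = (updateOp p ^ t) f ∘ Prod.snd := by
  induction t generalizing f with
  | zero => rfl
  | succ t ih => simp only [pow_succ, Module.End.mul_apply, hp.coupledOp_comp_snd, ih]

lemma isMarkov_coupledOp [Nonempty V] : IsMarkov (coupledOp p) where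
  monotone F G h z := by
    rw [coupledOp_apply, coupledOp_apply]
    gcongr with u _ k _ l _
    · exact maximalCoupling_nonneg (hp.nonneg _ _) (hp.nonneg _ _) k l
    · exact h _
  map_one := by
    change coupledOp p ((1 : (V → C) → ℝ) ∘ Prod.fst) = 1
    rw [hp.coupledOp_comp_fst, hp.isMarkov_updateOp.map_one]
    rfl

lemma coupledOp_disagreement_le [Nonempty V] (v : V) (z : (V → C) × (V → C)) :
    coupledOp p (disagreement v) z ≤ (1 - 1 / Fintype.card V) * disagreement v z +
      excess (p z.1 v) (p z.2 v) / Fintype.card V := by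
  have hsum := hp.sum_eq_sum z.1 z.2
  have hother : ∀ u ∈ univ.erase v, ∑ k, ∑ l, maximalCoupling (p z.1 u) (p z.2 u) k l *
      disagreement v (update z.1 u k, update z.2 u l) = disagreement v z := by
    intro u hu
    have hvu : v ≠ u := (ne_of_mem_erase hu).symm
    simp only [disagreement, Function.update_of_ne hvu, ← sum_mul,
      sum_maximalCoupling_right (hsum u), hp.sum_eq_one, one_mul]
  have hself : ∑ k, ∑ l, maximalCoupling (p z.1 v) (p z.2 v) k l *
      disagreement v (update z.1 v k, update z.2 v l) ≤ excess (p z.1 v) (p z.2 v) := by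
    simpa [disagreement] using sum_offDiag_maximalCoupling_le (hsum v)
  have : (0 : ℝ) < Fintype.card V := by simpa using Fintype.card_pos (α := V)
  rw [coupledOp_apply, ← add_sum_erase _ _ (mem_univ v), sum_congr rfl hother, sum_const,
    card_erase_of_mem (mem_univ v), card_univ, nsmul_eq_mul, Nat.cast_pred Fintype.card_pos]
  calc _ ≤ (Fintype.card V : ℝ)⁻¹ *
        (excess (p z.1 v) (p z.2 v) + (Fintype.card V - 1) * disagreement v z) := by gcongr
    _ = _ := by field_simp; ring

end IsUpdateRule

end Coupling

/-! ### Contraction of the coupled Glauber dynamics -/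

section PottsCoupling

variable {q n : ℕ} {β : ℝ}

lemma sum_abs_proportion_sub_le (x y : Fin n → Fin q) :
    ∑ k, |proportion x k - proportion y k| ≤ 2 * ((∑ w, disagreement w (x, y)) / n) := by
  have hsite (w : Fin n) : ∑ k, |(if x w = k then (1 : ℝ) else 0) - if y w = k then 1 else 0| ≤
      2 * disagreement w (x, y) := by
    by_cases h : x w = y w
    · simp [disagreement, h]
    calc ∑ k, |(if x w = k then (1 : ℝ) else 0) - if y w = k then 1 else 0|
      _ ≤ ∑ k, ((if x w = k then (1 : ℝ) else 0) + if y w = k then 1 else 0) := by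
          gcongr with k
          split_ifs <;> simp
      _ = 2 * disagreement w (x, y) := by simp [disagreement, h, sum_add_distrib]; norm_num
  calc ∑ k, |proportion x k - proportion y k|
    _ ≤ ∑ k, (∑ w, |(if x w = k then (1 : ℝ) else 0) - if y w = k then 1 else 0|) / n := by
        gcongr with k
        rw [proportion, proportion, ← sub_div, abs_div, Nat.abs_cast, colorCount, colorCount,
          ← sum_sub_distrib]
        gcongr
        exact abs_sum_le_sum_abs _ _
    _ = (∑ w, ∑ k, |(if x w = k then (1 : ℝ) else 0) - if y w = k then 1 else 0|) / n := by
        rw [← sum_div, sum_comm]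
    _ ≤ (∑ w, 2 * disagreement w (x, y)) / n := by gcongr with w; exact hsite w
    _ = 2 * ((∑ w, disagreement w (x, y)) / n) := by rw [← mul_sum, mul_div_assoc]

lemma exists_excess_pottsRate_le (q : ℕ) [NeZero q] (hβ : 0 ≤ β) :
    ∃ C, 0 ≤ C ∧ ∀ (n : ℕ) [NeZero n] (x y : Fin n → Fin q) (u : Fin n),
      excess (pottsRate β x u) (pottsRate β y u) ≤
        2 * β / q * ((∑ w, disagreement w (x, y)) / n) +
          C * (sqDeviation x + sqDeviation y + 1 / n) := by
  obtain ⟨C, hC, hlin⟩ := exists_abs_pottsRate_sub_linear_le hβ q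
  refine ⟨q * C, by positivity, fun n _ x y u ↦ ?_⟩
  have hx := sqDeviation_nonneg x
  have hy := sqDeviation_nonneg y
  have hcolor (k : Fin q) : |pottsRate β x u k - pottsRate β y u k| ≤
      2 * β / q * |proportion x k - proportion y k| +
        2 * C * (sqDeviation x + sqDeviation y + 1 / n) := by
    have hsplit : pottsRate β x u k - pottsRate β y u k =
        2 * β / q * (proportion x k - proportion y k) +
          ((pottsRate β x u k - 1 / q - 2 * β / q * deviation x k) -
            (pottsRate β y u k - 1 / q - 2 * β / q * deviation y k)) := by
      unfold deviation; ring
    calc _ ≤ |2 * β / q * (proportion x k - proportion y k)| +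
          (C * (sqDeviation x + 1 / n) + C * (sqDeviation y + 1 / n)) := by
          rw [hsplit]
          refine (abs_add_le _ _).trans ?_
          gcongr
          exact (abs_sub _ _).trans (add_le_add (hlin n x u k) (hlin n y u k))
      _ ≤ _ := by
          rw [abs_mul, abs_of_nonneg (by positivity : 0 ≤ 2 * β / q)]
          nlinarith
  have hexcess := two_mul_excess ((isUpdateRule_pottsRate β).sum_eq_sum x y u)
  have hbound : ∑ k, |pottsRate β x u k - pottsRate β y u k| ≤
      2 * β / q * (2 * ((∑ w, disagreement w (x, y)) / n)) +
        q * (2 * C * (sqDeviation x + sqDeviation y + 1 / n)) :=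
    calc _ ≤ ∑ k, (2 * β / q * |proportion x k - proportion y k| +
          2 * C * (sqDeviation x + sqDeviation y + 1 / n)) := sum_le_sum fun k _ ↦ hcolor k
      _ ≤ _ := by
        rw [sum_add_distrib, ← mul_sum, sum_const, card_univ, Fintype.card_fin, nsmul_eq_mul]
        gcongr
        exact sum_abs_proportion_sub_le x y
  linarith

/-- The expectation under the coupled Glauber dynamics after `t` steps, started from `σ₀` and from
an independent sample of the Potts measure. -/
noncomputable def couplingMean (β : ℝ) (σ₀ : Fin n → Fin q) (t : ℕ) :
    ((Fin n → Fin q) × (Fin n → Fin q) → ℝ) →ₗ[ℝ] ℝ :=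
  pottsMean q n β ∘ₗ LinearMap.funLeft ℝ ℝ (Prod.mk σ₀) ∘ₗ coupledOp (pottsRate β) ^ t

lemma couplingMean_succ (σ₀ : Fin n → Fin q) (t : ℕ) (F : (Fin n → Fin q) × (Fin n → Fin q) → ℝ) :
    couplingMean β σ₀ (t + 1) F = couplingMean β σ₀ t (coupledOp (pottsRate β) F) := by
  simp [couplingMean, pow_succ]

variable [NeZero q] [NeZero n]

lemma isExpectation_couplingMean (β : ℝ) (σ₀ : Fin n → Fin q) (t : ℕ) :
    IsExpectation (couplingMean β σ₀ t) := by
  have hQ := (isUpdateRule_pottsRate (q := q) (n := n) β).isMarkov_coupledOp.pow t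
  refine (isExpectation_pottsMean (q := q) (n := n) β).comp ⟨fun F G h y ↦ hQ.monotone h _, ?_⟩
  rw [LinearMap.comp_apply, hQ.map_one]
  rfl

omit [NeZero n] in
lemma couplingMean_comp_fst (β : ℝ) (σ₀ : Fin n → Fin q) (t : ℕ) (f : (Fin n → Fin q) → ℝ) :
    couplingMean β σ₀ t (f ∘ Prod.fst) = (glauberOp q n β ^ t) f σ₀ := by
  rw [couplingMean, LinearMap.comp_apply, LinearMap.comp_apply,
    (isUpdateRule_pottsRate β).coupledOp_pow_comp_fst]
  exact (isExpectation_pottsMean (n := n) β).map_const ((glauberOp q n β ^ t) f σ₀)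

lemma couplingMean_comp_snd (β : ℝ) (σ₀ : Fin n → Fin q) (t : ℕ) (f : (Fin n → Fin q) → ℝ) :
    couplingMean β σ₀ t (f ∘ Prod.snd) = pottsMean q n β f := by
  rw [couplingMean, LinearMap.comp_apply, LinearMap.comp_apply,
    (isUpdateRule_pottsRate β).coupledOp_pow_comp_snd]
  exact pottsMean_glauberOp_pow β t f

lemma le_of_averaged_recursion {ι : Type*} [Fintype ι] [Nonempty ι] {D : ℕ → ι → ℝ} {b e : ℕ → ℝ}
    {θ : ℝ} (hθ : 0 ≤ θ) (h0 : ∀ v, D 0 v ≤ b 0)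
    (hD : ∀ t v, D (t + 1) v ≤ (1 - 1 / Fintype.card ι) * D t v +
      θ / Fintype.card ι * ((∑ w, D t w) / Fintype.card ι) + e t)
    (hb : ∀ t, (1 - (1 - θ) / Fintype.card ι) * b t + e t ≤ b (t + 1)) (t : ℕ) (v : ι) :
    D t v ≤ b t := by
  have hN : (1 : ℝ) ≤ Fintype.card ι := by exact_mod_cast Fintype.card_pos (α := ι)
  have hN1 : 0 ≤ 1 - 1 / (Fintype.card ι : ℝ) := sub_nonneg.2 (div_le_one_of_le₀ hN (by positivity))
  induction t generalizing v with
  | zero => exact h0 v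
  | succ t ih =>
    have hmean : (∑ w, D t w) / Fintype.card ι ≤ b t := by
      rw [div_le_iff₀ (by positivity), mul_comm]
      simpa using sum_le_card_nsmul univ (D t) (b t) fun w _ ↦ ih w
    calc D (t + 1) v ≤ (1 - 1 / Fintype.card ι) * D t v +
          θ / Fintype.card ι * ((∑ w, D t w) / Fintype.card ι) + e t := hD t v
      _ ≤ (1 - 1 / Fintype.card ι) * b t + θ / Fintype.card ι * b t + e t := by
          gcongr
          exact ih v
      _ = (1 - (1 - θ) / Fintype.card ι) * b t + e t := by ring
      _ ≤ b (t + 1) := hb t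

lemma exists_coupledOp_disagreement_le (q : ℕ) [NeZero q] (hβ : 0 ≤ β) :
    ∃ C : ℝ, 0 ≤ C ∧ ∀ (n : ℕ) [NeZero n] (v : Fin n),
      coupledOp (pottsRate (q := q) β) (disagreement v) ≤
        (1 - 1 / n : ℝ) • disagreement v + (2 * β / q / n / n) • ∑ w, disagreement w +
          (C / n) • (sqDeviation ∘ Prod.fst + sqDeviation ∘ Prod.snd + fun _ ↦ 1 / (n : ℝ)) := by
  obtain ⟨C, hC, hexcess⟩ := exists_excess_pottsRate_le q hβ
  refine ⟨C, hC, fun n _ v z ↦ ?_⟩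
  have hstep := (isUpdateRule_pottsRate β).coupledOp_disagreement_le v z
  rw [Fintype.card_fin] at hstep
  refine hstep.trans ?_
  have := div_le_div_of_nonneg_right (hexcess n z.1 z.2 v) (n.cast_nonneg (α := ℝ))
  simp only [Pi.add_apply, Pi.smul_apply, Finset.sum_apply, Function.comp_apply, smul_eq_mul,
    add_assoc]
  gcongr
  exact this.trans_eq (by ring)

lemma exists_couplingMean_disagreement_succ_le (hq : 1 < q) (hβ0 : 0 ≤ β) (hβ : β < betaS q) :
    ∃ G, 0 ≤ G ∧ ∀ (n : ℕ) [NeZero n], 2 ≤ n → ∀ (σ₀ : Fin n → Fin q) (t : ℕ) (v : Fin n),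
      couplingMean β σ₀ (t + 1) (disagreement v) ≤
        (1 - 1 / n) * couplingMean β σ₀ t (disagreement v) +
          2 * β / q / n * ((∑ w, couplingMean β σ₀ t (disagreement w)) / n) +
            G / n * ((1 - 3 / 2 * relaxationRate q β / n) ^ t + 1 / n) := by
  obtain ⟨C, hC, hP⟩ := exists_pow_glauberOp_sqDeviation_le hq hβ0 hβ
  obtain ⟨C', hC', hμ⟩ := exists_pottsMean_sqDeviation_le hq hβ0 hβ
  obtain ⟨D, hD, hstep⟩ := exists_coupledOp_disagreement_le q hβ0
  refine ⟨D * (C + C' + 1), by positivity, fun n _ hn σ₀ t v ↦ ?_⟩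
  have hn2 : (2 : ℝ) ≤ n := by exact_mod_cast hn
  have hs := (one_sub_rate_mem_Ico (relaxationRate_pos hq hβ0 hβ) (relaxationRate_le_one hβ0)
    (by norm_num) (by linarith : (3 / 2 : ℝ) ≤ n)).1
  have hE := isExpectation_couplingMean β σ₀ t
  have hmean := hE.monotone (hstep n v)
  simp only [map_add, map_smul, map_sum, smul_eq_mul, hE.map_const] at hmean
  rw [couplingMean_comp_fst, couplingMean_comp_snd] at hmean
  rw [couplingMean_succ]
  refine hmean.trans (add_le_add (le_of_eq (by ring)) ?_)
  rw [mul_div_right_comm, mul_assoc]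
  gcongr
  have := mul_nonneg hC'.le (pow_nonneg hs t)
  have := hμ n hn
  rw [div_eq_mul_one_div] at this
  linarith [hP n hn σ₀ t, pow_nonneg hs t]

theorem exists_couplingMean_disagreement_le (hq : 1 < q) (hβ0 : 0 ≤ β) (hβ : β < betaS q) :
    ∃ C, 0 < C ∧ ∀ (n : ℕ) [NeZero n], 2 ≤ n → ∀ (σ₀ : Fin n → Fin q) (t : ℕ) (v : Fin n),
      couplingMean β σ₀ t (disagreement v) ≤ C * ((1 - relaxationRate q β / n) ^ t + 1 / n) := by
  obtain ⟨G, hG, hrec⟩ := exists_couplingMean_disagreement_succ_le hq hβ0 hβ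
  have hκ := relaxationRate_pos hq hβ0 hβ
  have hκ1 := relaxationRate_le_one (q := q) hβ0
  have hθ : 1 - 2 * β / q = relaxationRate q β := rfl
  set κ := relaxationRate q β
  refine ⟨1 + 3 * G / κ, by positivity, fun n _ hn σ₀ t v ↦ ?_⟩
  have hn2 : (2 : ℝ) ≤ n := by exact_mod_cast hn
  have hr := (one_sub_rate_mem_Ico hκ hκ1 one_pos (by linarith : (1 : ℝ) ≤ n)).1
  have hs := (one_sub_rate_mem_Ico hκ hκ1 (by norm_num) (by linarith : (3 / 2 : ℝ) ≤ n)).1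
  rw [one_mul] at hr
  set r := 1 - κ / n with hrdef
  set s := 1 - 3 / 2 * κ / n with hsdef
  have hgap : 2 * G / κ * (r - s) = G / n := by
    rw [hrdef, hsdef]; field_simp; ring
  have hrate : G / κ / n * (1 - r) = G / n * (1 / n) := by
    rw [hrdef]; field_simp; ring
  calc couplingMean β σ₀ t (disagreement v)
    _ ≤ (1 + 2 * G / κ) * r ^ t - 2 * G / κ * s ^ t + G / κ / n := by
        refine le_of_averaged_recursion (θ := 2 * β / q)
          (D := fun t v ↦ couplingMean β σ₀ t (disagreement v))
          (b := fun t ↦ (1 + 2 * G / κ) * r ^ t - 2 * G / κ * s ^ t + G / κ / n) (by positivity)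
          (fun v ↦ ?_) (by simpa using hrec n hn σ₀) (fun t ↦ le_of_eq ?_) t v
        · have hE := isExpectation_couplingMean β σ₀ 0
          have : 0 ≤ G / κ / n := by positivity
          refine (hE.monotone (disagreement_le_one v)).trans ?_
          simpa [hE.map_one]
        · rw [Fintype.card_fin, hθ, ← hrdef, pow_succ, pow_succ]
          linear_combination (- s ^ t) * hgap - hrate
    _ ≤ (1 + 3 * G / κ) * (r ^ t + 1 / n) := by
        have hst : 0 ≤ 2 * G / κ * s ^ t := by positivity
        have hrt : 0 ≤ G / κ * r ^ t := by positivity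
        have hn1 : 0 ≤ (1 + 2 * G / κ) * (1 / n) := by positivity
        linear_combination hst + hrt + hn1

end PottsCoupling

/-! ### Functions symmetric under the stabilizer of a configuration -/

section Symmetry

variable {V C : Type*}

/-- Invariance of a function of configurations under the permutations of the sites that fix the
reference configuration `σ₀`. -/
def IsStabilizerInvariant (σ₀ : V → C) (h : (V → C) → ℝ) : Prop :=
  ∀ π : Equiv.Perm V, σ₀ ∘ π = σ₀ → LinearMap.funLeft ℝ ℝ (· ∘ π) h = h

lemma comp_swap_of_eq [DecidableEq V] {z : V → C} {v w : V} (h : z v = z w) :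
    z ∘ Equiv.swap v w = z := by
  ext u
  rcases eq_or_ne u v with rfl | hv
  · simp [h]
  rcases eq_or_ne u w with rfl | hw
  · simp [h]
  · simp [Equiv.swap_apply_of_ne_of_ne hv hw]

variable [DecidableEq V] [Fintype V] [Fintype C]

lemma commute_updateOp_funLeft {p : (V → C) → V → C → ℝ} {π : Equiv.Perm V}
    (hp : ∀ σ u, p (σ ∘ π) u = p σ (π u)) :
    Commute (updateOp p) (LinearMap.funLeft ℝ ℝ fun z : V → C ↦ z ∘ π) := by
  ext f σ
  simp only [Module.End.mul_apply, updateOp_apply, LinearMap.funLeft_apply, moveMean_apply,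
    Fintype.sum_prod_type, hp]
  rw [← Equiv.sum_comp π fun u ↦ ∑ k, p σ u k * f (update σ u k ∘ π)]
  simp only [Function.update_comp_eq_of_injective _ π.injective]

lemma IsStabilizerInvariant.updateOp_pow {p : (V → C) → V → C → ℝ}
    (hp : ∀ (π : Equiv.Perm V) σ u, p (σ ∘ π) u = p σ (π u)) {σ₀ : V → C} {h : (V → C) → ℝ}
    (hh : IsStabilizerInvariant σ₀ h) (t : ℕ) :
    IsStabilizerInvariant σ₀ ((updateOp p ^ t) h) := fun π hπ ↦ by
  rw [← Module.End.mul_apply, ← ((commute_updateOp_funLeft (hp π)).pow_left t).eq,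
    Module.End.mul_apply, hh π hπ]

variable [DecidableEq C]

/-- The sites to which the configuration `σ₀` gives the color `i`. -/
def basket (σ₀ : V → C) (i : C) : Finset V := {v | σ₀ v = i}

omit [Fintype C] [DecidableEq V] in
lemma mem_basket_self (σ₀ : V → C) (v : V) : v ∈ basket σ₀ (σ₀ v) := by simp [basket]

/-- Exchanging two sites with the same color in `z` and in `σ₀` fixes `z` and does not change
`h`, so the same increment occurs `colorCount (basket σ₀ (σ₀ v)) z (z v)` times. -/
lemma IsStabilizerInvariant.colorCount_mul_sq_sub_le_gradSq {σ₀ : V → C} {h : (V → C) → ℝ}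
    (hh : IsStabilizerInvariant σ₀ h) (z : V → C) (v : V) (b : C) :
    colorCount (basket σ₀ (σ₀ v)) z (z v) * (h (update z v b) - h z) ^ 2 ≤ gradSq h z := by
  have hswap (w : V) (hw : w ∈ basket σ₀ (σ₀ v)) (hz : z w = z v) :
      h (update z v b) = h (update z w b) := by
    have hσ₀ : σ₀ w = σ₀ v := by simpa [basket] using hw
    have hinv := congrFun (hh (Equiv.swap w v) (comp_swap_of_eq hσ₀)) (update z v b)
    rw [LinearMap.funLeft_apply] at hinv
    nth_rw 1 [← hinv, ← Equiv.swap_apply_left w v,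
      Function.update_comp_eq_of_injective _ (Equiv.swap w v).injective, comp_swap_of_eq hz]
  rw [colorCount, sum_mul, gradSq, Fintype.sum_prod_type]
  refine (sum_le_sum fun w hw ↦ ?_).trans (sum_le_univ_sum_of_nonneg fun w ↦
    sum_nonneg fun k _ ↦ sq_nonneg (h (update z w k) - h z))
  split_ifs with hz
  · rw [one_mul, hswap w hw hz]
    exact single_le_sum (f := fun k ↦ (h (update z w k) - h z) ^ 2) (fun _ _ ↦ sq_nonneg _)
      (mem_univ b)
  · rw [zero_mul]
    exact sum_nonneg fun _ _ ↦ sq_nonneg _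

end Symmetry

/-! ### Interpolation between two configurations -/

section Interpolation

variable {V C : Type*} [DecidableEq C]

lemma colorCount_le_add_sum_disagreement (s : Finset V) {x y z : V → C}
    (hz : ∀ w, z w = x w ∨ z w = y w) (a : C) :
    colorCount s y a ≤ colorCount s z a + ∑ w ∈ s, disagreement w (x, y) := by
  rw [colorCount, colorCount, ← sum_add_distrib]
  gcongr with w
  rcases hz w with h | h
  · rw [h, disagreement]
    split_ifs <;> grind
  · rw [h]
    exact le_add_of_nonneg_right (disagreement_nonneg w _)

variable [DecidableEq V] [Fintype V]

lemma abs_sub_le_sum_mul_disagreement (h : (V → C) → ℝ) {x y : V → C} (c : V → ℝ)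
    (hc : ∀ v, x v ≠ y v → ∀ z : V → C, (∀ w, z w = x w ∨ z w = y w) →
      |h (update z v (x v)) - h z| ≤ c v) :
    |h x - h y| ≤ ∑ v, c v * disagreement v (x, y) := by
  suffices hsub : ∀ s : Finset V, |h (s.piecewise x y) - h y| ≤
      ∑ v ∈ s, c v * disagreement v (x, y) by
    simpa using hsub univ
  intro s
  induction s using Finset.induction_on with
  | empty => simp
  | insert v s hv ih =>
    rw [sum_insert hv, piecewise_insert]
    refine (abs_sub_le _ (h (s.piecewise x y)) _).trans (add_le_add ?_ ih)
    by_cases hxy : x v = y v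
    · rw [hxy, ← piecewise_eq_of_notMem s x y hv, Function.update_eq_self, sub_self]
      simp [disagreement, hxy]
    · have hbetween (w : V) : s.piecewise x y w = x w ∨ s.piecewise x y w = y w := by
        by_cases hw : w ∈ s <;> simp [hw]
      simpa [disagreement, hxy] using hc v hxy _ hbetween

end Interpolation

/-! ### Scarcity of a color among given sites -/

section Scarcity

variable {V C : Type*} [DecidableEq C]

/-- The squared amount by which the number of sites of color `a` in `s` falls short of
`c * #s`. -/
def sqShortfall (c : ℝ) (s : Finset V) (a : C) (z : V → C) : ℝ :=
  max (c * #s - colorCount s z a) 0 ^ 2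

lemma max_add_zero_sq_le (x h : ℝ) :
    max (x + h) 0 ^ 2 ≤ max x 0 ^ 2 + 2 * max x 0 * h + h ^ 2 := by
  rcases le_total 0 (x + h) with hxh | hxh
  · rw [max_eq_left hxh]
    rcases le_total 0 x with hx | hx
    · rw [max_eq_left hx]; nlinarith
    · rw [max_eq_right hx]; nlinarith
  · rw [max_eq_right hxh]
    nlinarith [sq_nonneg (max x 0 + h)]

variable [Fintype V] [DecidableEq V] [Fintype C] {c L : ℝ} {p : (V → C) → V → C → ℝ}

omit [DecidableEq C] in
lemma IsUpdateRule.moveMean_indicator (hp : IsUpdateRule p) (s : Finset V) (z : V → C) :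
    moveMean p z (fun m ↦ if m.1 ∈ s then 1 else 0) = #s / Fintype.card V := by
  simp [moveMean_apply, Fintype.sum_prod_type, hp.sum_eq_one, div_eq_inv_mul]

namespace IsHeatBath

variable [Nonempty V] (hp : IsHeatBath c L p)
include hp

lemma updateOp_sqShortfall_le (s : Finset V) (a : C) (z : V → C) :
    updateOp p (sqShortfall c s a) z ≤
      (1 - 2 / Fintype.card V) * sqShortfall c s a z + #s / Fintype.card V := by
  set x := c * #s - colorCount s z a with hx
  have hx2 : max x 0 * x = max x 0 ^ 2 := by
    rcases le_total 0 x with h | h <;> simp [h, sq]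
  let δ : V × C → ℝ := fun m ↦ colorCount s (update z m.1 m.2) a - colorCount s z a
  have hδ (m : V × C) : δ m ^ 2 ≤ if m.1 ∈ s then 1 else 0 := by
    split_ifs with hm
    · exact (sq_le_one_iff_abs_le_one _).2 (abs_colorCount_update_sub_le s z m.1 m.2 a)
    · simp [δ, colorCount_update_of_notMem hm]
  have hstep (m : V × C) : sqShortfall c s a (update z m.1 m.2) ≤
      (-(2 * max x 0) * δ m + max x 0 ^ 2) + if m.1 ∈ s then 1 else 0 := by
    have hxδ : c * #s - colorCount s (update z m.1 m.2) a = x + -δ m := by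
      simp only [hx, δ]; ring
    rw [sqShortfall, hxδ]
    linarith [max_add_zero_sq_le x (-δ m), hδ m]
  have hE := hp.isExpectation_moveMean z
  have hmean : x / Fintype.card V ≤ moveMean p z δ := by
    rw [hp.moveMean_colorCount_update_sub, hx, div_eq_inv_mul]
    gcongr
    simpa [mul_comm] using card_nsmul_le_sum s _ c fun u _ ↦ hp.le_prob z u a
  calc updateOp p (sqShortfall c s a) z
    _ ≤ moveMean p z ((fun m ↦ -(2 * max x 0) * δ m + max x 0 ^ 2) +
          fun m ↦ if m.1 ∈ s then 1 else 0) := hE.monotone hstep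
    _ = -(2 * max x 0) * moveMean p z δ + max x 0 ^ 2 + #s / Fintype.card V := by
        rw [map_add, hE.map_affine, hp.moveMean_indicator]
    _ ≤ -(2 * max x 0) * (x / Fintype.card V) + max x 0 ^ 2 + #s / Fintype.card V := by
        have := mul_le_mul_of_nonneg_left hmean (by positivity : 0 ≤ 2 * max x 0)
        linarith
    _ = (1 - 2 / Fintype.card V) * sqShortfall c s a z + #s / Fintype.card V := by
        rw [sqShortfall, ← hx]
        linear_combination -2 / Fintype.card V * hx2

lemma map_sqShortfall_le {E : ((V → C) → ℝ) →ₗ[ℝ] ℝ} (hE : IsExpectation E)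
    (hinv : ∀ f, E (updateOp p f) = E f) (s : Finset V) (a : C) :
    E (sqShortfall c s a) ≤ #s := by
  have hN : (0 : ℝ) < Fintype.card V := by exact_mod_cast Fintype.card_pos
  refine (hE.le_of_drift (hinv _) (sub_lt_self 1 (by positivity))
    (hp.updateOp_sqShortfall_le s a)).trans ?_
  rw [sub_sub_cancel, div_div_div_cancel_right₀ hN.ne']
  exact half_le_self (by positivity)

end IsHeatBath

end Scarcity

/-! ### Testing the total variation distance on symmetric functions -/

section TotalVariation

lemma tvDist_le_excess {S : Type*} [Fintype S] {ν ν' : S → ℝ} (h : ∑ x, ν x = ∑ x, ν' x) :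
    tvDist ν ν' ≤ excess ν ν' := by
  have hpart (μ μ' : S → ℝ) (A : Finset S) : ∑ x ∈ A, μ x - ∑ x ∈ A, μ' x ≤ excess μ μ' := by
    rw [← sum_sub_distrib]
    exact (sum_le_sum fun x _ ↦ le_max_left _ _).trans
      (sum_le_univ_sum_of_nonneg fun x ↦ le_max_right _ _)
  refine ciSup_le fun A ↦ abs_le.2 ⟨?_, hpart ν ν' A⟩
  have := hpart ν' ν A
  rw [excess_comm h.symm] at this
  linarith

lemma excess_eq_sum_sub_mul_indicator {S : Type*} [Fintype S] (ν ν' : S → ℝ) :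
    excess ν ν' = ∑ x, (ν x - ν' x) * if ν' x < ν x then 1 else 0 := by
  refine sum_congr rfl fun x _ ↦ ?_
  split_ifs with h
  · rw [mul_one, max_eq_left (sub_nonneg.2 h.le)]
  · rw [mul_zero, max_eq_right (sub_nonpos.2 (not_lt.1 h))]

lemma colorCount_erase_comp_perm {V C : Type*} [Fintype V] [DecidableEq V] [DecidableEq C]
    (π : Equiv.Perm V) (σ : V → C) (u : V) (k : C) :
    colorCount (univ.erase u) (σ ∘ π) k = colorCount (univ.erase (π u)) σ k :=
  sum_equiv π (by simp) fun _ _ ↦ rfl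

variable {q n : ℕ} (β : ℝ)

lemma pottsRate_comp_perm (π : Equiv.Perm (Fin n)) (σ : Fin n → Fin q) (u : Fin n) :
    pottsRate β (σ ∘ π) u = pottsRate β σ (π u) := by
  simp only [pottsRate, colorCount_erase_comp_perm]

lemma pottsMeasure_comp_perm (π : Equiv.Perm (Fin n)) (z : Fin n → Fin q) :
    pottsMeasure q n β (z ∘ π) = pottsMeasure q n β z := by
  have hsum (u : Fin n) : ∑ v, (if z u = z (π v) then (1 : ℝ) else 0) =
      ∑ v, if z u = z v then 1 else 0 := Equiv.sum_comp π fun v ↦ if z u = z v then (1 : ℝ) else 0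
  simp only [pottsMeasure, pottsWeight, Function.comp_apply, hsum]
  rw [Equiv.sum_comp π fun u ↦ ∑ v, if z u = z v then (1 : ℝ) else 0]

lemma IsStabilizerInvariant.glauberOp_pow {σ₀ : Fin n → Fin q} {h : (Fin n → Fin q) → ℝ}
    (hh : IsStabilizerInvariant σ₀ h) (t : ℕ) :
    IsStabilizerInvariant σ₀ ((glauberOp q n β ^ t) h) :=
  hh.updateOp_pow (pottsRate_comp_perm β) t

variable [NeZero q]

lemma isStabilizerInvariant_glauberKernel_pow [NeZero n] (t : ℕ) (σ₀ : Fin n → Fin q) :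
    IsStabilizerInvariant σ₀ fun z ↦ (glauberKernel q n β ^ t) σ₀ z := fun π hπ ↦ by
  ext z
  have hentry (τ : Fin n → Fin q) :
      (glauberKernel q n β ^ t) σ₀ τ = (glauberOp q n β ^ t) (Pi.single τ 1) σ₀ := by
    rw [← glauberKernel_pow_mulVec, Matrix.mulVec_single_one, Matrix.col_apply]
  have hsingle : LinearMap.funLeft ℝ ℝ (fun w : Fin n → Fin q ↦ w ∘ π) (Pi.single (z ∘ π) 1) =
      Pi.single z 1 := by
    ext w
    simp only [LinearMap.funLeft_apply, Pi.single_apply,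
      π.surjective.injective_comp_right.eq_iff]
  have hcomm := ((commute_updateOp_funLeft (pottsRate_comp_perm (q := q) β π)).pow_left t).eq
  have := congrFun (LinearMap.congr_fun hcomm (Pi.single (z ∘ π) 1)) σ₀
  rw [Module.End.mul_apply, Module.End.mul_apply, hsingle, LinearMap.funLeft_apply, hπ] at this
  rw [LinearMap.funLeft_apply, hentry, hentry, this]

lemma exists_tvDist_glauberKernel_pow_le [NeZero n] (t : ℕ) (σ₀ : Fin n → Fin q) :
    ∃ g, IsStabilizerInvariant σ₀ g ∧ 0 ≤ g ∧ g ≤ 1 ∧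
      tvDist (fun τ ↦ (glauberKernel q n β ^ t) σ₀ τ) (pottsMeasure q n β) ≤
        (glauberOp q n β ^ t) g σ₀ - pottsMean q n β g := by
  have hmean (g : (Fin n → Fin q) → ℝ) :
      (glauberOp q n β ^ t) g σ₀ = ∑ z, (glauberKernel q n β ^ t) σ₀ z * g z := by
    rw [← glauberKernel_pow_mulVec]; rfl
  have hmass : ∑ z, (glauberKernel q n β ^ t) σ₀ z = ∑ z, pottsMeasure q n β z := by
    have := hmean 1
    rw [((isMarkov_glauberOp β).pow t).map_one] at this
    simpa [sum_pottsMeasure] using this.symm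
  refine ⟨fun z ↦ if pottsMeasure q n β z < (glauberKernel q n β ^ t) σ₀ z then 1 else 0,
    fun π hπ ↦ ?_, fun z ↦ by positivity, fun z ↦ ite_le_one le_rfl zero_le_one, ?_⟩
  · ext z
    have := congrFun (isStabilizerInvariant_glauberKernel_pow β t σ₀ π hπ) z
    rw [LinearMap.funLeft_apply] at this
    simp only [LinearMap.funLeft_apply, this, pottsMeasure_comp_perm]
  · refine (tvDist_le_excess hmass).trans_eq ?_
    rw [excess_eq_sum_sub_mul_indicator, hmean, pottsMean_apply, ← sum_sub_distrib]
    simp only [sub_mul]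

end TotalVariation

/-! ### Comparing symmetric functions of two coupled configurations -/

section SymmetricComparison

variable {V C : Type*} [DecidableEq C]

lemma one_le_sum_disagreement {s : Finset V} {x y : V → C} {v : V} (hv : v ∈ s)
    (hxy : x v ≠ y v) : 1 ≤ ∑ w ∈ s, disagreement w (x, y) := by
  calc 1 = disagreement v (x, y) := by simp [disagreement, hxy]
    _ ≤ ∑ w ∈ s, disagreement w (x, y) :=
        single_le_sum (f := fun w ↦ disagreement w (x, y)) (fun w _ ↦ disagreement_nonneg w _) hv

variable [Fintype C]

/-- An upper bound for the indicator of the event that the two configurations disagree somewhere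
in `s` while either they disagree on a quarter of `c * #s` sites of `s`, or some color occurs in
the second one fewer than `c * #s / 2` times in `s`. The minimum makes the mean small for small
`s`, where the colors need not be concentrated, as well as for large `s`. -/
noncomputable def couplingDefect (c : ℝ) (s : Finset V) (z : (V → C) × (V → C)) : ℝ :=
  4 / (c * #s) * ∑ v ∈ s, disagreement v z +
    min (∑ v ∈ s, disagreement v z) (∑ a, 4 / (c * #s) ^ 2 * sqShortfall c s a z.2)

variable {c : ℝ}

lemma couplingDefect_nonneg (hc : 0 ≤ c) (s : Finset V) :
    0 ≤ couplingDefect (C := C) c s := fun z ↦ by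
  have hdis : 0 ≤ ∑ v ∈ s, disagreement v z := sum_nonneg fun v _ ↦ disagreement_nonneg v z
  have hscarce : 0 ≤ ∑ a, 4 / (c * #s) ^ 2 * sqShortfall c s a z.2 :=
    sum_nonneg fun a _ ↦ mul_nonneg (by positivity) (sq_nonneg _)
  exact add_nonneg (by positivity) (le_min hdis hscarce)

lemma one_le_couplingDefect (hc : 0 < c) {s : Finset V} {x y : V → C} {v : V} (hv : v ∈ s)
    (hxy : x v ≠ y v) (hbad : c * #s / 4 < ∑ w ∈ s, disagreement w (x, y) ∨
      ∃ a, colorCount s y a < c * #s / 2) : 1 ≤ couplingDefect c s (x, y) := by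
  have hs : (0 : ℝ) < #s := by exact_mod_cast card_pos.2 ⟨v, hv⟩
  have hdis := one_le_sum_disagreement hv hxy
  have hscarce (a : C) : 0 ≤ 4 / (c * #s) ^ 2 * sqShortfall c s a y :=
    mul_nonneg (by positivity) (sq_nonneg _)
  rcases hbad with hmany | ⟨a, ha⟩
  · refine le_add_of_le_of_nonneg ?_
      (le_min (by linarith) (sum_nonneg fun a _ ↦ hscarce a))
    rw [div_mul_eq_mul_div, le_div_iff₀ (by positivity)]
    linarith
  · refine le_add_of_nonneg_of_le (by positivity) (le_min hdis ?_)
    calc (1 : ℝ) = 4 / (c * #s) ^ 2 * (c * #s / 2) ^ 2 := by field_simp; norm_num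
      _ ≤ 4 / (c * #s) ^ 2 * sqShortfall c s a y := by
          rw [sqShortfall]
          gcongr
          exact le_max_of_le_left (by linarith)
      _ ≤ _ := single_le_sum (f := fun a ↦ 4 / (c * #s) ^ 2 * sqShortfall c s a y)
          (fun a _ ↦ hscarce a) (mem_univ a)

variable [Fintype V] [DecidableEq V] {σ₀ : V → C} {h : (V → C) → ℝ} {A : ℝ}

/-- Away from the event of `couplingDefect`, every configuration between `x` and `y` has many sites
of each color in the basket of `v`, so the symmetry of `h` makes each single increment small. -/
lemma abs_sub_le_sum_sqrt_mul_disagreement (hc : 0 < c) (hh : IsStabilizerInvariant σ₀ h)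
    (hgrad : ∀ z, gradSq h z ≤ A) {x y : V → C}
    (hfew : ∀ v, x v ≠ y v →
      ∑ w ∈ basket σ₀ (σ₀ v), disagreement w (x, y) ≤ c * #(basket σ₀ (σ₀ v)) / 4)
    (hmany : ∀ v, x v ≠ y v → ∀ a,
      c * #(basket σ₀ (σ₀ v)) / 2 ≤ colorCount (basket σ₀ (σ₀ v)) y a) :
    |h x - h y| ≤ ∑ v, √(4 * A / c / #(basket σ₀ (σ₀ v))) * disagreement v (x, y) := by
  refine abs_sub_le_sum_mul_disagreement h _ fun v hv z hz ↦ Real.abs_le_sqrt ?_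
  have hs : (0 : ℝ) < #(basket σ₀ (σ₀ v)) := by exact_mod_cast card_pos.2 ⟨v, mem_basket_self σ₀ v⟩
  have hcount : c * #(basket σ₀ (σ₀ v)) / 4 ≤ colorCount (basket σ₀ (σ₀ v)) z (z v) := by
    linarith [colorCount_le_add_sum_disagreement (basket σ₀ (σ₀ v)) hz (z v), hfew v hv,
      hmany v hv (z v)]
  rw [div_div, le_div_iff₀ (by positivity)]
  linarith [hh.colorCount_mul_sq_sub_le_gradSq z v (x v), hgrad z,
    mul_le_mul_of_nonneg_right hcount (sq_nonneg (h (update z v (x v)) - h z))]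

lemma abs_sub_le_sum_add_sum_couplingDefect (hc : 0 < c) (hh : IsStabilizerInvariant σ₀ h)
    (h0 : 0 ≤ h) (h1 : h ≤ 1) (hgrad : ∀ z, gradSq h z ≤ A) (x y : V → C) :
    |h x - h y| ≤ ∑ v, √(4 * A / c / #(basket σ₀ (σ₀ v))) * disagreement v (x, y) +
      ∑ i, couplingDefect c (basket σ₀ i) (x, y) := by
  have hdefect (i : C) : 0 ≤ couplingDefect c (basket σ₀ i) (x, y) :=
    couplingDefect_nonneg hc.le _ _
  by_cases hgood : ∀ v, x v ≠ y v →
      ∑ w ∈ basket σ₀ (σ₀ v), disagreement w (x, y) ≤ c * #(basket σ₀ (σ₀ v)) / 4 ∧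
        ∀ a, c * #(basket σ₀ (σ₀ v)) / 2 ≤ colorCount (basket σ₀ (σ₀ v)) y a
  · exact le_add_of_le_of_nonneg (abs_sub_le_sum_sqrt_mul_disagreement hc hh hgrad
      (fun v hv ↦ (hgood v hv).1) fun v hv ↦ (hgood v hv).2) (sum_nonneg fun i _ ↦ hdefect i)
  · push Not at hgood
    obtain ⟨v, hv, hbad⟩ := hgood
    have hone := one_le_couplingDefect hc (mem_basket_self σ₀ v) hv
      (by rw [← not_le]; exact or_iff_not_imp_left.2 fun hm ↦ hbad (not_not.1 hm))
    calc |h x - h y| ≤ 1 := abs_sub_le_of_nonneg_of_le (h0 x) (h1 x) (h0 y) (h1 y)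
      _ ≤ ∑ i, couplingDefect c (basket σ₀ i) (x, y) :=
          hone.trans (single_le_sum (fun i _ ↦ hdefect i) (mem_univ (σ₀ v)))
      _ ≤ _ := le_add_of_nonneg_left
          (sum_nonneg fun v _ ↦ mul_nonneg (Real.sqrt_nonneg _) (disagreement_nonneg v _))

variable {E : ((V → C) × (V → C) → ℝ) →ₗ[ℝ] ℝ} {m : ℝ}

omit [DecidableEq V] in
lemma map_sum_sqrt_mul_disagreement_le (hm : 0 ≤ m) (hdis : ∀ v, E (disagreement v) ≤ m)
    {a : ℝ} (ha : 0 ≤ a) (σ₀ : V → C) :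
    E (∑ v, √(a / #(basket σ₀ (σ₀ v))) • disagreement v) ≤
      Fintype.card C * (√(a * Fintype.card V) * m) := by
  have hbasket (i : C) : #(basket σ₀ i) * √(a / #(basket σ₀ i)) ≤ √(a * Fintype.card V) := by
    refine Real.le_sqrt_of_sq_le ?_
    rw [mul_pow, Real.sq_sqrt (by positivity)]
    calc (#(basket σ₀ i) : ℝ) ^ 2 * (a / #(basket σ₀ i)) = a * #(basket σ₀ i) := by
          rw [mul_div_left_comm, sq, mul_self_div_self]
      _ ≤ a * Fintype.card V := by gcongr; exact card_le_univ _
  rw [map_sum]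
  calc ∑ v, E (√(a / #(basket σ₀ (σ₀ v))) • disagreement v)
    _ ≤ ∑ v, √(a / #(basket σ₀ (σ₀ v))) * m := by
        gcongr with v
        rw [map_smul, smul_eq_mul]
        exact mul_le_mul_of_nonneg_left (hdis v) (Real.sqrt_nonneg _)
    _ = ∑ i, #(basket σ₀ i) * √(a / #(basket σ₀ i)) * m := by
        rw [← sum_fiberwise' univ σ₀ fun i ↦ √(a / #(basket σ₀ i)) * m]
        simp only [sum_const, nsmul_eq_mul, mul_assoc, basket]
    _ ≤ ∑ _i : C, √(a * Fintype.card V) * m := by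
        gcongr with i
        exact hbasket i
    _ = _ := by rw [sum_const, card_univ, nsmul_eq_mul]

namespace IsExpectation

variable (hE : IsExpectation E) (hm : 0 ≤ m) (hdis : ∀ v, E (disagreement v) ≤ m)
include hE hm hdis

omit [Fintype V] [DecidableEq V] in
lemma map_couplingDefect_le (hc : 0 < c) (s : Finset V)
    (hscarce : ∀ a, E (sqShortfall c s a ∘ Prod.snd) ≤ #s) :
    E (couplingDefect c s) ≤ 4 / c * m + 2 / c * √(Fintype.card C * m) := by
  let D : (V → C) × (V → C) → ℝ := ∑ v ∈ s, disagreement v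
  let U : (V → C) × (V → C) → ℝ := ∑ a, (4 / (c * #s) ^ 2) • (sqShortfall c s a ∘ Prod.snd)
  have hsplit : couplingDefect c s = (4 / (c * #s)) • D + D ⊓ U := by
    ext z; simp [couplingDefect, D, U]
  have hD : E D ≤ #s * m := by
    rw [map_sum, ← nsmul_eq_mul]
    exact sum_le_card_nsmul s _ m fun v _ ↦ hdis v
  have hU : E U ≤ Fintype.card C * (4 / (c * #s) ^ 2 * #s) := by
    rw [map_sum, ← nsmul_eq_mul, ← card_univ]
    refine sum_le_card_nsmul univ _ _ fun a _ ↦ ?_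
    rw [map_smul, smul_eq_mul]
    exact mul_le_mul_of_nonneg_left (hscarce a) (by positivity)
  have hmin : 0 ≤ E (D ⊓ U) := hE.map_nonneg <| le_inf
    (sum_nonneg fun v _ ↦ disagreement_nonneg v)
    (sum_nonneg fun a _ ↦ smul_nonneg (by positivity) fun z ↦ sq_nonneg _)
  -- The bound grows with `#s` for `D` and decays for `U`, so the geometric mean is uniform.
  have hgeom : E (D ⊓ U) ≤ 2 / c * √(Fintype.card C * m) := by
    rw [← sq_le_sq₀ hmin (by positivity), mul_pow, Real.sq_sqrt (by positivity), sq (E _)]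
    refine (mul_le_mul ((hE.monotone inf_le_left).trans hD)
      ((hE.monotone inf_le_right).trans hU) hmin (by positivity)).trans ?_
    rcases s.eq_empty_or_nonempty with rfl | hs
    · simp only [card_empty, Nat.cast_zero, zero_mul]
      positivity
    · have : (0 : ℝ) < #s := by exact_mod_cast hs.card_pos
      exact le_of_eq (by field_simp; ring)
  rw [hsplit, map_add, map_smul, smul_eq_mul]
  refine add_le_add ((mul_le_mul_of_nonneg_left hD (by positivity)).trans ?_) hgeom
  rcases s.eq_empty_or_nonempty with rfl | hs
  · simp only [card_empty, Nat.cast_zero, zero_mul, mul_zero]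
    positivity
  · have : (0 : ℝ) < #s := by exact_mod_cast hs.card_pos
    exact le_of_eq (by field_simp)

lemma map_comp_fst_sub_map_comp_snd_le (hc : 0 < c)
    (hscarce : ∀ s a, E (sqShortfall c s a ∘ Prod.snd) ≤ #s) (hh : IsStabilizerInvariant σ₀ h)
    (h0 : 0 ≤ h) (h1 : h ≤ 1) (hA : 0 ≤ A) (hgrad : ∀ z, gradSq h z ≤ A) :
    E (h ∘ Prod.fst) - E (h ∘ Prod.snd) ≤
      Fintype.card C * (√(4 * A / c * Fintype.card V) * m +
        (4 / c * m + 2 / c * √(Fintype.card C * m))) := by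
  have hpoint : h ∘ Prod.fst - h ∘ Prod.snd ≤
      ∑ v, √(4 * A / c / #(basket σ₀ (σ₀ v))) • disagreement v +
        ∑ i, couplingDefect c (basket σ₀ i) := fun z ↦ by
    simpa using (le_abs_self _).trans
      (abs_sub_le_sum_add_sum_couplingDefect hc hh h0 h1 hgrad z.1 z.2)
  rw [← map_sub, mul_add]
  refine (hE.monotone hpoint).trans ?_
  rw [map_add]
  gcongr
  · exact map_sum_sqrt_mul_disagreement_le hm hdis (by positivity) σ₀
  · rw [map_sum, ← nsmul_eq_mul, ← card_univ]
    exact sum_le_card_nsmul univ _ _ fun i _ ↦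
      hE.map_couplingDefect_le hm hdis hc (basket σ₀ i) (hscarce _)

end IsExpectation

end SymmetricComparison

/-! ### Upper bound on the mixing time -/

section UpperBound

variable {q n : ℕ} {β : ℝ}

lemma exists_tvDist_le_of_couplingMean_le (q : ℕ) [NeZero q] (hβ : 0 ≤ β) :
    ∃ B, 0 ≤ B ∧ ∀ (n : ℕ) [NeZero n] (σ₀ : Fin n → Fin q) (t : ℕ) (m : ℝ), 0 ≤ m →
      (∀ v, couplingMean β σ₀ t (disagreement v) ≤ m) →
      tvDist (fun τ ↦ (glauberKernel q n β ^ (t + n)) σ₀ τ) (pottsMeasure q n β) ≤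
        B * (m * √n + √m) := by
  have hq : (0 : ℝ) < q := by exact_mod_cast NeZero.pos q
  set c := Real.exp (-(2 * β)) / q
  have hc : 0 < c := by positivity
  set L := 4 * β * Real.exp (4 * β)
  set A := Real.exp (1 + 2 * (L ^ 2 * q / c)) * (2 + 2 * q) / c
  refine ⟨q * (√(4 * A / c) + 4 / c + 2 / c * √q), by positivity, fun n _ σ₀ t m hm hdis ↦ ?_⟩
  obtain ⟨g, hg, hg0, hg1, htv⟩ := exists_tvDist_glauberKernel_pow_le β (t + n) σ₀
  have hP := (isMarkov_glauberOp (q := q) (n := n) β).pow n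
  have hHB := isHeatBath_pottsRate (q := q) (n := n) hβ
  have hgrad (z) : gradSq ((glauberOp q n β ^ n) g) z ≤ A := by
    simpa using hHB.gradSq_pow_card_le hc hg0 hg1 z
  have hcompare := (isExpectation_couplingMean β σ₀ t).map_comp_fst_sub_map_comp_snd_le hm hdis hc
    (fun s a ↦ by
      rw [couplingMean_comp_snd]
      exact hHB.map_sqShortfall_le (isExpectation_pottsMean β) (pottsMean_glauberOp β) s a)
    (hg.glauberOp_pow β n) (by simpa using hP.monotone hg0)
    ((hP.monotone hg1).trans_eq hP.map_one) (by positivity) hgrad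
  rw [couplingMean_comp_fst, couplingMean_comp_snd, pottsMean_glauberOp_pow,
    ← Module.End.mul_apply, ← pow_add, Fintype.card_fin, Fintype.card_fin,
    Real.sqrt_mul (by positivity), Real.sqrt_mul hq.le] at hcompare
  have hn : m ≤ m * √n := le_mul_of_one_le_right hm <| by
    rw [Real.one_le_sqrt]; exact_mod_cast NeZero.one_le
  have hq4 : 0 ≤ q * (4 / c) := by positivity
  have hrest : 0 ≤ q * (√(4 * A / c) + 4 / c) * √m + q * (2 / c * √q) * (m * √n) := by positivity
  refine htv.trans (hcompare.trans ?_)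
  linear_combination mul_le_mul_of_nonneg_left hn hq4 + hrest

lemma exists_glauberDist_le (hq : 1 < q) (hβ0 : 0 ≤ β) (hβ : β < betaS q) :
    ∃ B C, 0 ≤ B ∧ 0 < C ∧ ∀ n t : ℕ, 2 ≤ n →
      glauberDist q n β (t + n) ≤
        B * (C * ((1 - relaxationRate q β / n) ^ t + 1 / n) * √n +
          √(C * ((1 - relaxationRate q β / n) ^ t + 1 / n))) := by
  have : NeZero q := ⟨by omega⟩
  obtain ⟨B, hB, htv⟩ := exists_tvDist_le_of_couplingMean_le q hβ0
  obtain ⟨C, hC, hdis⟩ := exists_couplingMean_disagreement_le hq hβ0 hβ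
  refine ⟨B, C, hB, hC, fun n t hn ↦ ciSup_le fun σ₀ ↦ ?_⟩
  have : NeZero n := ⟨by omega⟩
  have hr := (one_sub_rate_mem_Ico (relaxationRate_pos hq hβ0 hβ) (relaxationRate_le_one hβ0)
    one_pos (by exact_mod_cast NeZero.one_le : (1 : ℝ) ≤ n)).1
  rw [one_mul] at hr
  exact htv n σ₀ t _ (by positivity) (hdis n hn σ₀ t)

lemma one_sub_div_pow_mul_sqrt_le {κ γ : ℝ} (hκ : 0 < κ) {t : ℕ} (hn : κ ≤ n)
    (ht : 1 / (2 * κ) * n * Real.log n + γ * n ≤ t) :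
    (1 - κ / n) ^ t * √n ≤ Real.exp (-(κ * γ)) := by
  have hn0 : (0 : ℝ) < n := hκ.trans_le hn
  have hr : 0 ≤ 1 - κ / n := sub_nonneg.2 ((div_le_one hn0).2 hn)
  calc (1 - κ / n) ^ t * √n ≤ Real.exp (-(κ / n)) ^ t * √n := by
        gcongr
        exact Real.one_sub_le_exp_neg _
    _ = Real.exp (t * (-(κ / n)) + Real.log n / 2) := by
        rw [← Real.exp_nat_mul, Real.exp_add, Real.exp_half, Real.exp_log hn0]
    _ ≤ Real.exp (-(κ * γ)) := by
        have hexp : κ / n * (1 / (2 * κ) * n * Real.log n + γ * n) =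
            Real.log n / 2 + κ * γ := by field_simp
        have := mul_le_mul_of_nonneg_left ht (by positivity : 0 ≤ κ / n)
        exact Real.exp_le_exp.2 (by linarith)

lemma exists_eventually_mul_sqrt_le {κ C δ : ℝ} (hκ : 0 < κ) (hC : 0 < C) (hδ : 0 < δ) :
    ∃ γ : ℝ, 0 < γ ∧ ∀ᶠ n : ℕ in atTop, ∀ t : ℕ, 1 / (2 * κ) * n * Real.log n + γ * n ≤ t →
      C * ((1 - κ / n) ^ t + 1 / n) * √n ≤ δ := by
  obtain ⟨γ, hγ0, hγ⟩ : ∃ γ, 0 < γ ∧ C * Real.exp (-(κ * γ)) ≤ δ / 2 := by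
    have hlim : Tendsto (fun γ ↦ C * Real.exp (-(κ * γ))) atTop (nhds 0) := by
      simpa using (Real.tendsto_exp_neg_atTop_nhds_zero.comp
        (tendsto_id.const_mul_atTop hκ)).const_mul C
    exact ((eventually_gt_atTop 0).and (hlim.eventually_le_const (half_pos hδ))).exists
  have hinv : ∀ᶠ n : ℕ in atTop, C * (1 / n * √n) ≤ δ / 2 := by
    have hlim : Tendsto (fun n : ℕ ↦ C * (√n)⁻¹) atTop (nhds 0) := by
      simpa using ((Real.tendsto_sqrt_atTop.comp tendsto_natCast_atTop_atTop).inv_tendsto_atTop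
        ).const_mul C
    filter_upwards [hlim.eventually_le_const (half_pos hδ)] with n hn
    rwa [one_div_mul_eq_div, Real.sqrt_div_self', one_div]
  refine ⟨γ, hγ0, ?_⟩
  filter_upwards [hinv, tendsto_natCast_atTop_atTop.eventually_ge_atTop κ] with n hn hκn t ht
  have := mul_le_mul_of_nonneg_left (one_sub_div_pow_mul_sqrt_le hκ hκn ht) hC.le
  linarith

theorem exists_eventually_glauberDist_le (hq : 1 < q) (hβ0 : 0 ≤ β) (hβ : β < betaS q)
    {ε : ℝ} (hε : 0 < ε) : ∃ γ : ℝ, 0 < γ ∧ ∀ᶠ n : ℕ in atTop, ∃ t : ℕ,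
      glauberDist q n β t ≤ ε ∧ (t : ℝ) ≤ alpha1 β q * n * Real.log n + γ * n := by
  have hκ := relaxationRate_pos hq hβ0 hβ
  have hα : alpha1 β q = 1 / (2 * relaxationRate q β) := rfl
  have hα0 : 0 < alpha1 β q := by rw [hα]; positivity
  obtain ⟨B, C, hB, hC, hdist⟩ := exists_glauberDist_le hq hβ0 hβ
  obtain ⟨δ, hδε, hδ⟩ : ∃ δ, B * (δ + √δ) ≤ ε ∧ 0 < δ := by
    have hlim : Tendsto (fun δ ↦ B * (δ + √δ)) (nhds 0) (nhds 0) := by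
      have : Continuous fun δ ↦ B * (δ + √δ) := by fun_prop
      simpa using this.tendsto 0
    exact ((hlim.mono_left nhdsWithin_le_nhds).eventually_le_const hε |>.and
      (eventually_mem_nhdsWithin (s := Set.Ioi (0 : ℝ)))).exists
  obtain ⟨γ, hγ0, hγ⟩ := exists_eventually_mul_sqrt_le hκ hC hδ
  refine ⟨γ + 2, by positivity, ?_⟩
  filter_upwards [hγ, eventually_ge_atTop 2] with n hsmall hn
  have hn1 : (1 : ℝ) ≤ n := by exact_mod_cast one_le_two.trans hn
  have := Real.log_nonneg hn1
  obtain ⟨s, hs⟩ : ∃ s : ℝ, s = alpha1 β q * n * Real.log n + γ * n := ⟨_, rfl⟩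
  refine ⟨⌈s⌉₊ + n, ?_, ?_⟩
  · have hmn := hsmall ⌈s⌉₊ (by rw [← hα, ← hs]; exact Nat.le_ceil s)
    have hm : C * ((1 - relaxationRate q β / n) ^ ⌈s⌉₊ + 1 / n) ≤ δ := by
      have hr := (one_sub_rate_mem_Ico hκ (relaxationRate_le_one hβ0) one_pos hn1).1
      rw [one_mul] at hr
      exact (le_mul_of_one_le_right (by positivity) (Real.one_le_sqrt.2 hn1)).trans hmn
    refine (hdist n ⌈s⌉₊ hn).trans (le_trans ?_ hδε)
    gcongr
  · have := (Nat.ceil_lt_add_one (hs ▸ by positivity : 0 ≤ s)).le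
    push_cast
    linarith

end UpperBound

/-! ### Lower bound on the mixing time -/

section Submartingale

lemma IsExpectation.map_max_zero_sq_le {M : Type*} {E : (M → ℝ) →ₗ[ℝ] ℝ} (hE : IsExpectation E)
    {g : M → ℝ} {x δ : ℝ} (hg : ∀ m, |g m - x| ≤ δ) :
    E (fun m ↦ max (g m) 0 ^ 2) ≤ max x 0 ^ 2 + 2 * max x 0 * (E g - x) + δ ^ 2 := by
  have hstep (m : M) :
      max (g m) 0 ^ 2 ≤ 2 * max x 0 * g m + (max x 0 ^ 2 - 2 * max x 0 * x + δ ^ 2) := by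
    have := max_add_zero_sq_le x (g m - x)
    rw [add_sub_cancel] at this
    linarith [sq_le_sq' (abs_le.1 (hg m)).1 (abs_le.1 (hg m)).2]
  refine (hE.monotone hstep).trans_eq ?_
  rw [hE.map_affine]
  ring

variable {V C : Type*} [Fintype V] [DecidableEq V] [Fintype C] {p : (V → C) → V → C → ℝ}
  {F : (V → C) → ℝ} {r D R δ : ℝ}

lemma IsUpdateRule.updateOp_max_sub_zero_sq_le [Nonempty V] (hp : IsUpdateRule p) (hr1 : r ≤ 1)
    (hD : 0 ≤ D) (hR : 0 ≤ R) (hF : ∀ σ, -R ≤ F σ)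
    (hdrift : ∀ σ, r * F σ - D ≤ updateOp p F σ)
    (hincr : ∀ σ v a, |F (update σ v a) - F σ| ≤ δ) {c : ℝ} (hc0 : 0 ≤ c) (hc1 : c ≤ 1)
    (σ : V → C) : updateOp p (fun τ ↦ max (r * c - F τ) 0 ^ 2) σ ≤
      r * max (c - F σ) 0 ^ 2 + (2 * (1 + R) * D + (δ + (1 - r)) ^ 2) := by
  have hE := hp.isExpectation_moveMean σ
  set x := c - F σ with hx
  have hstep (m : V × C) : |r * c - F (update σ m.1 m.2) - x| ≤ δ + (1 - r) := by
    have hdecay : 0 ≤ (1 - r) * c := mul_nonneg (by linarith) hc0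
    have hdecay' : (1 - r) * c ≤ 1 - r := mul_le_of_le_one_right (by linarith) hc1
    have := abs_le.1 (hincr σ m.1 m.2)
    rw [abs_le, hx]
    constructor <;> linarith
  have hmean : moveMean p σ (fun m ↦ r * c - F (update σ m.1 m.2)) - x ≤ D - (1 - r) * x := by
    have := hE.map_affine (-1) (r * c) fun m ↦ F (update σ m.1 m.2)
    have hsub : (fun m : V × C ↦ r * c - F (update σ m.1 m.2)) =
        fun m ↦ -1 * F (update σ m.1 m.2) + r * c := by ext; ring
    rw [hsub, this, ← updateOp_apply]
    linarith [hdrift σ]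
  have hmax : max x 0 * x = max x 0 ^ 2 := by
    rcases le_total 0 x with h | h <;> simp [h, sq]
  have : 0 ≤ max x 0 := le_max_right _ _
  have hmaxR : max x 0 ≤ 1 + R := max_le (by linarith [hF σ]) (by positivity)
  calc updateOp p (fun τ ↦ max (r * c - F τ) 0 ^ 2) σ
      ≤ max x 0 ^ 2 + 2 * max x 0 * (moveMean p σ (fun m ↦ r * c - F (update σ m.1 m.2)) - x) +
          (δ + (1 - r)) ^ 2 := hE.map_max_zero_sq_le hstep
    _ ≤ max x 0 ^ 2 + 2 * max x 0 * (D - (1 - r) * x) + (δ + (1 - r)) ^ 2 := by gcongr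
    _ = r * max x 0 ^ 2 - (1 - r) * max x 0 ^ 2 + 2 * max x 0 * D + (δ + (1 - r)) ^ 2 := by
        linear_combination -2 * (1 - r) * hmax
    _ ≤ r * max x 0 ^ 2 + (2 * (1 + R) * D + (δ + (1 - r)) ^ 2) := by
        have := mul_nonneg (sub_nonneg.2 hr1) (sq_nonneg (max x 0))
        have := mul_le_mul_of_nonneg_right hmaxR hD
        linarith

lemma IsUpdateRule.pow_updateOp_max_sub_zero_sq_le [Nonempty V] (hp : IsUpdateRule p) (hr0 : 0 ≤ r)
    (hr1 : r < 1) (hD : 0 ≤ D) (hR : 0 ≤ R) (hF : ∀ σ, -R ≤ F σ)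
    (hdrift : ∀ σ, r * F σ - D ≤ updateOp p F σ)
    (hincr : ∀ σ v a, |F (update σ v a) - F σ| ≤ δ) {b : ℝ} (hb0 : 0 ≤ b) (hb1 : b ≤ 1)
    {σ : V → C} (hbF : b ≤ F σ) (t : ℕ) :
    (updateOp p ^ t) (fun τ ↦ max (r ^ t * b - F τ) 0 ^ 2) σ ≤
      (2 * (1 + R) * D + (δ + (1 - r)) ^ 2) / (1 - r) := by
  have h1r : 0 < 1 - r := sub_pos.2 hr1
  set d := 2 * (1 + R) * D + (δ + (1 - r)) ^ 2
  induction t with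
  | zero =>
    rw [pow_zero, pow_zero, one_mul, Module.End.one_apply, max_eq_right (by linarith)]
    simp only [ne_eq, OfNat.ofNat_ne_zero, not_false_eq_true, zero_pow]
    positivity
  | succ t ih =>
    have hP := hp.isMarkov_updateOp.pow t
    calc (updateOp p ^ (t + 1)) (fun τ ↦ max (r ^ (t + 1) * b - F τ) 0 ^ 2) σ
        = (updateOp p ^ t) (updateOp p fun τ ↦ max (r * (r ^ t * b) - F τ) 0 ^ 2) σ := by
          rw [pow_succ, Module.End.mul_apply, pow_succ' r, mul_assoc]
      _ ≤ (updateOp p ^ t) (fun τ ↦ r * max (r ^ t * b - F τ) 0 ^ 2 + d) σ :=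
          hP.monotone (hp.updateOp_max_sub_zero_sq_le hr1.le hD hR hF hdrift hincr (by positivity)
            (mul_le_one₀ (pow_le_one₀ hr0 hr1.le) hb0 hb1)) σ
      _ = r * (updateOp p ^ t) (fun τ ↦ max (r ^ t * b - F τ) 0 ^ 2) σ + d :=
          hp.isMarkov_updateOp.pow_apply_affine t r d _ σ
      _ ≤ r * (d / (1 - r)) + d := by gcongr
      _ = d / (1 - r) := by field_simp; ring

end Submartingale

section TiltedDeviation

variable {q n : ℕ} {β A K : ℝ}

/-- The deviation of color `k` minus a multiple of the Lyapunov function, which absorbs the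
second-order terms in the drift of the deviation. -/
noncomputable def tiltedDeviation (A K : ℝ) (k : Fin q) (σ : Fin n → Fin q) : ℝ :=
  deviation σ k - A * lyapunovSum K σ

lemma tiltedDeviation_le (hA : 0 ≤ A) (k : Fin q) (σ : Fin n → Fin q) :
    tiltedDeviation A K k σ ≤ deviation σ k :=
  sub_le_self _ (mul_nonneg hA (lyapunovSum_nonneg K σ))

lemma neg_le_tiltedDeviation [NeZero n] (hA : 0 ≤ A) (hK : 0 ≤ K) (k : Fin q) (σ : Fin n → Fin q) :
    -(1 + A * (q * Real.exp K)) ≤ tiltedDeviation A K k σ := by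
  unfold tiltedDeviation
  linarith [(abs_le.1 (abs_deviation_le_one σ k)).1,
    mul_le_mul_of_nonneg_left (lyapunovSum_le hK σ) hA]

lemma exists_le_glauberOp_deviation (q : ℕ) [NeZero q] (hβ : 0 ≤ β) :
    ∃ C, 0 ≤ C ∧ ∀ (n : ℕ) [NeZero n] (k : Fin q) (σ : Fin n → Fin q),
      (1 - relaxationRate q β / n) * deviation σ k - C * (sqDeviation σ + 1 / n) / n ≤
        glauberOp q n β (fun τ ↦ deviation τ k) σ := by
  obtain ⟨C, hC, hlin⟩ := exists_abs_pottsRate_sub_linear_le hβ q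
  refine ⟨C, hC, fun n _ k σ ↦ ?_⟩
  have hn : (0 : ℝ) < n := by exact_mod_cast NeZero.pos n
  have hmean : 1 / (q : ℝ) + 2 * β / q * deviation σ k - C * (sqDeviation σ + 1 / n) ≤
      (∑ u, pottsRate β σ u k) / n := by
    rw [le_div_iff₀ hn, mul_comm]
    simpa using card_nsmul_le_sum univ (pottsRate β σ · k)
      (1 / (q : ℝ) + 2 * β / q * deviation σ k - C * (sqDeviation σ + 1 / n)) fun u _ ↦ by
        linarith [(abs_le.1 (hlin n σ u k)).1]
  have hupdate : (fun m : Fin n × Fin q ↦ deviation (update σ m.1 m.2) k) =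
      fun m ↦ 1 / n * countIncrement σ k m + deviation σ k := by
    ext m; rw [deviation_update]; ring
  rw [updateOp_apply, hupdate, ((isUpdateRule_pottsRate β).isExpectation_moveMean σ).map_affine,
    moveMean_countIncrement (isUpdateRule_pottsRate β), proportion_eq_add_deviation]
  have := mul_le_mul_of_nonneg_left hmean (by positivity : 0 ≤ 1 / (n : ℝ))
  have hrate : relaxationRate q β = 1 - 2 * β / q := rfl
  rw [hrate]
  linear_combination this

lemma exists_le_glauberOp_tiltedDeviation (hq : 1 < q) (hβ : 0 ≤ β) (hκ : 0 < relaxationRate q β)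
    (hK : IsLyapunovExponent q β K) :
    ∃ A D : ℝ, 0 ≤ A ∧ 0 ≤ D ∧ ∀ (n : ℕ) [NeZero n] (k : Fin q) (σ : Fin n → Fin q),
      (1 - relaxationRate q β / n) * tiltedDeviation A K k σ - D / n ^ 2 ≤
        glauberOp q n β (tiltedDeviation A K k) σ := by
  have : NeZero q := ⟨by omega⟩
  obtain ⟨c, hc, hdev⟩ := exists_le_glauberOp_deviation q hβ
  obtain ⟨C, hC, hlyap⟩ := exists_drift_lyapunovSum hq hβ hK
  obtain ⟨A, hA⟩ : ∃ A, A = 2 * c * q ^ 2 / relaxationRate q β := ⟨_, rfl⟩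
  have hA0 : 0 ≤ A := by rw [hA]; positivity
  refine ⟨A, c + A * C, hA0, by positivity, fun n _ k σ ↦ ?_⟩
  have hn : (n : ℝ) ≠ 0 := NeZero.ne _
  have hlinear : glauberOp q n β (tiltedDeviation A K k) σ =
      glauberOp q n β (fun τ ↦ deviation τ k) σ - A * glauberOp q n β (lyapunovSum K) σ := by
    have : tiltedDeviation A K k = (fun τ : Fin n → Fin q ↦ deviation τ k) - A • lyapunovSum K :=
      rfl
    rw [this, map_sub, map_smul, Pi.sub_apply, Pi.smul_apply, smul_eq_mul]
  have habsorb : c * sqDeviation σ / n ≤ A * (relaxationRate q β / 2 / n) * lyapunovSum K σ :=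
    calc c * sqDeviation σ / n ≤ c * (q ^ 2 * lyapunovSum K σ) / n := by
          gcongr
          exact sqDeviation_le hK.pos.le σ
      _ = A * (relaxationRate q β / 2 / n) * lyapunovSum K σ := by rw [hA]; field_simp
  rw [hlinear, tiltedDeviation]
  linear_combination hdev n k σ + mul_le_mul_of_nonneg_left (hlyap n σ) hA0 + habsorb

lemma exists_abs_lyapunov_sub_le (hK : 0 ≤ K) :
    ∃ L, 0 ≤ L ∧ ∀ a b : ℝ, |a| ≤ 1 → |b| ≤ 1 → |a - b| ≤ 1 →
      |lyapunov K a - lyapunov K b| ≤ L * |a - b| := by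
  set C := Real.exp K * (1 + 3 * K + 4 * (K ^ 2 * Real.exp K))
  have hone_sided {a b : ℝ} (ha : |a| ≤ 1) (hb : |b| ≤ 1) (hab : |a - b| ≤ 1) :
      lyapunov K a - lyapunov K b ≤ ((2 + K) * Real.exp K + C) * |a - b| := by
    have htaylor := lyapunov_add_le hK hb hab (by linarith [(abs_le.1 ha).2])
    rw [add_sub_cancel] at htaylor
    have hlinear : lyapunovDeriv K b * (a - b) ≤ (2 + K) * Real.exp K * |a - b| :=
      (mul_le_mul_of_nonneg_left (le_abs_self _) (lyapunovDeriv_nonneg hK b)).trans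
        (mul_le_mul_of_nonneg_right (lyapunovDeriv_le hK (abs_le.1 hb).2) (abs_nonneg _))
    have hquadratic : C * (a - b) ^ 2 ≤ C * |a - b| := by
      rw [← sq_abs, sq]
      exact mul_le_mul_of_nonneg_left (mul_le_of_le_one_left (abs_nonneg _) hab) (by positivity)
    linarith
  refine ⟨(2 + K) * Real.exp K + C, by positivity, fun a b ha hb hab ↦ abs_le'.2
    ⟨hone_sided ha hb hab, ?_⟩⟩
  rw [neg_sub, abs_sub_comm]
  exact hone_sided hb ha (abs_sub_comm a b ▸ hab)

lemma exists_abs_tiltedDeviation_update_sub_le (q : ℕ) (hA : 0 ≤ A) (hK : 0 ≤ K) :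
    ∃ δ, 0 ≤ δ ∧ ∀ (n : ℕ) [NeZero n] (k : Fin q) (σ : Fin n → Fin q) (v : Fin n) (a : Fin q),
      |tiltedDeviation A K k (update σ v a) - tiltedDeviation A K k σ| ≤ δ / n := by
  obtain ⟨L, hL, hlip⟩ := exists_abs_lyapunov_sub_le hK
  refine ⟨1 + A * (q * L), by positivity, fun n _ k σ v a ↦ ?_⟩
  have hn : (1 : ℝ) ≤ n := by exact_mod_cast NeZero.one_le
  have hdev (j) : |deviation (update σ v a) j - deviation σ j| ≤ 1 / n := by
    rw [deviation_update σ (v, a), add_sub_cancel_left, abs_div, Nat.abs_cast]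
    gcongr
    exact abs_countIncrement_le_one σ j (v, a)
  have hlyap (j) : |lyapunov K (deviation (update σ v a) j) - lyapunov K (deviation σ j)| ≤
      L * (1 / n) := by
    refine (hlip _ _ (abs_deviation_le_one _ j) (abs_deviation_le_one σ j)
      ((hdev j).trans (div_le_one_of_le₀ hn (by positivity)))).trans ?_
    gcongr
    exact hdev j
  have hsum : |lyapunovSum K (update σ v a) - lyapunovSum K σ| ≤ q * (L * (1 / n)) := by
    unfold lyapunovSum
    rw [← sum_sub_distrib]
    exact (abs_sum_le_sum_abs _ _).trans
      (by simpa using sum_le_card_nsmul univ _ _ fun j _ ↦ hlyap j)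
  calc |tiltedDeviation A K k (update σ v a) - tiltedDeviation A K k σ|
      = |(deviation (update σ v a) k - deviation σ k) -
          A * (lyapunovSum K (update σ v a) - lyapunovSum K σ)| := by
        unfold tiltedDeviation; ring_nf
    _ ≤ 1 / n + A * (q * (L * (1 / n))) := by
        refine (abs_sub _ _).trans ?_
        rw [abs_mul, abs_of_nonneg hA]
        gcongr
        exact hdev k
    _ = (1 + A * (q * L)) / n := by ring

lemma exists_pow_glauberOp_max_sub_deviation_le (hq : 1 < q) (hβ : 0 ≤ β)
    (hκ : 0 < relaxationRate q β) (hK : IsLyapunovExponent q β K) :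
    ∃ A D : ℝ, 0 ≤ A ∧ 0 ≤ D ∧ ∀ (n : ℕ) [NeZero n] (k : Fin q) (σ : Fin n → Fin q) (b : ℝ),
      0 ≤ b → b ≤ 1 → b ≤ tiltedDeviation A K k σ → ∀ t : ℕ,
      (glauberOp q n β ^ t)
        (fun τ ↦ max ((1 - relaxationRate q β / n) ^ t * b - deviation τ k) 0 ^ 2) σ ≤ D / n := by
  have : NeZero q := ⟨by omega⟩
  have hκ1 := relaxationRate_le_one (q := q) hβ
  obtain ⟨A, D, hA, hD, hdrift⟩ := exists_le_glauberOp_tiltedDeviation hq hβ hκ hK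
  obtain ⟨δ, hδ, hincr⟩ := exists_abs_tiltedDeviation_update_sub_le q hA hK.pos.le
  set κ := relaxationRate q β
  set R := 1 + A * (q * Real.exp K)
  refine ⟨A, (2 * (1 + R) * D + (δ + κ) ^ 2) / κ, hA, by positivity,
    fun n _ k σ b hb0 hb1 hbσ t ↦ ?_⟩
  have hn : (1 : ℝ) ≤ n := by exact_mod_cast NeZero.one_le
  obtain ⟨hr0, hr1⟩ := one_sub_rate_mem_Ico hκ hκ1 one_pos hn
  rw [one_mul] at hr0 hr1
  have hmono : (fun τ : Fin n → Fin q ↦ max ((1 - κ / n) ^ t * b - deviation τ k) 0 ^ 2) ≤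
      fun τ ↦ max ((1 - κ / n) ^ t * b - tiltedDeviation A K k τ) 0 ^ 2 := fun τ ↦ by
    dsimp only
    gcongr
    exact tiltedDeviation_le hA k τ
  calc _ ≤ (glauberOp q n β ^ t)
        (fun τ ↦ max ((1 - κ / n) ^ t * b - tiltedDeviation A K k τ) 0 ^ 2) σ :=
        ((isMarkov_glauberOp β).pow t).monotone hmono σ
    _ ≤ (2 * (1 + R) * (D / n ^ 2) + (δ / n + (1 - (1 - κ / n))) ^ 2) / (1 - (1 - κ / n)) :=
        (isUpdateRule_pottsRate β).pow_updateOp_max_sub_zero_sq_le hr0 hr1 (by positivity)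
          (by positivity) (neg_le_tiltedDeviation hA hK.pos.le k) (hdrift n k) (hincr n k)
          hb0 hb1 hbσ t
    _ = (2 * (1 + R) * D + (δ + κ) ^ 2) / κ / n := by
        rw [sub_sub_cancel]; field_simp

end TiltedDeviation

section StartingConfiguration

variable {q n : ℕ}

/-- The configuration in which the first `c` sites have color `0`, the next `c` sites color `1`,
and so on, with all the remaining sites having the last color. -/
def blockConfig (q n c : ℕ) [NeZero q] (v : Fin n) : Fin q :=
  ⟨min (v / c) (q - 1), by have := NeZero.pos q; omega⟩

lemma colorCount_blockConfig [NeZero q] {c : ℕ} (hc : 0 < c) (hcn : c * q ≤ n) {k : Fin q}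
    (hk : k.val < q - 1) : colorCount univ (blockConfig q n c) k = c := by
  have hcolor (v : Fin n) : blockConfig q n c v = k ↔ (v : ℕ) / c = k := by
    rw [blockConfig, Fin.ext_iff]
    dsimp only
    omega
  have hblock : (range n).filter (fun w ↦ w / c = k.val) = Ico (k.val * c) (k.val * c + c) := by
    ext w
    have hkn : (k.val + 1) * c ≤ n := (Nat.mul_le_mul_right c (by omega)).trans (mul_comm c q ▸ hcn)
    rw [mem_filter, mem_range, mem_Ico, Nat.div_eq_iff hc]
    rw [add_one_mul] at hkn
    omega
  simp only [colorCount, hcolor]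
  rw [Fin.sum_univ_eq_sum_range (fun w : ℕ ↦ if w / c = k.val then (1 : ℝ) else 0) n, sum_boole,
    hblock, Nat.card_Ico, add_tsub_cancel_left]

lemma sum_eq_add_card_sub_one_mul {ι : Type*} [Fintype ι] {f : ι → ℝ} {a : ℝ}
    {k : ι} (h : ∀ j ≠ k, f j = a) : ∑ j, f j = f k + (Fintype.card ι - 1) * a := by
  classical
  have : 1 ≤ Fintype.card ι := Fintype.card_pos_iff.2 ⟨k⟩
  rw [← add_sum_erase univ _ (mem_univ k), sum_congr rfl fun j hj ↦ h j (ne_of_mem_erase hj),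
    sum_const, card_erase_of_mem (mem_univ k), card_univ, nsmul_eq_mul, Nat.cast_sub this,
    Nat.cast_one]

lemma deviation_sqDeviation_blockConfig [NeZero q] [NeZero n] {c : ℕ} (hc : 0 < c)
    (hcn : c * q ≤ n) {k : Fin q} (hk : k.val = q - 1) :
    deviation (blockConfig q n c) k = (q - 1) * (1 / q - c / n) ∧
      sqDeviation (blockConfig q n c) = (q - 1) * q * (1 / q - c / n) ^ 2 := by
  have hother (j) (hj : j ≠ k) : deviation (blockConfig q n c) j = c / n - 1 / q := by
    rw [deviation, proportion, colorCount_blockConfig hc hcn]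
    have := Fin.val_ne_of_ne hj
    omega
  have hlast : deviation (blockConfig q n c) k = (q - 1) * (1 / q - c / n) := by
    have := sum_eq_add_card_sub_one_mul hother
    rw [sum_deviation, Fintype.card_fin] at this
    linarith
  refine ⟨hlast, ?_⟩
  rw [sqDeviation, sum_eq_add_card_sub_one_mul fun j hj ↦ by rw [hother j hj], hlast,
    Fintype.card_fin]
  ring

lemma exists_block_size {q n : ℕ} {ρ : ℝ} (hq : 0 < q) (hρ0 : 0 < ρ) (hρq : ρ ≤ 1 / (2 * q))
    (hn : 1 / ρ ≤ n) : ∃ c : ℕ, 0 < c ∧ c * q ≤ n ∧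
      ρ ≤ 1 / q - c / (n : ℝ) ∧ 1 / q - c / (n : ℝ) ≤ 2 * ρ := by
  have hn0 : (0 : ℝ) < n := (one_div_pos.2 hρ0).trans_le hn
  have hnρ : 1 / (n : ℝ) ≤ ρ := (one_div_le hρ0 hn0).1 hn
  obtain ⟨s, hs⟩ : ∃ s : ℝ, s = 1 / q - ρ := ⟨_, rfl⟩
  have hsρ : ρ ≤ s := by
    have : 1 / (q : ℝ) = 1 / (2 * q) + 1 / (2 * q) := by field_simp; norm_num
    linarith
  have hfloor : (⌊n * s⌋₊ : ℝ) ≤ n * s := Nat.floor_le (mul_nonneg hn0.le (hρ0.le.trans hsρ))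
  have hlt := (Nat.lt_floor_add_one (n * s)).le
  rw [← le_div_iff₀' hn0, add_div] at hlt
  rw [← div_le_iff₀' hn0] at hfloor
  refine ⟨⌊n * s⌋₊, Nat.floor_pos.2 ?_, ?_, by linarith, by linarith⟩
  · rw [div_le_iff₀ hn0] at hnρ
    exact hnρ.trans (mul_comm ρ _ ▸ by gcongr)
  · have : (⌊n * s⌋₊ : ℝ) / n ≤ 1 / q := by linarith
    rw [div_le_div_iff₀ hn0 (by positivity), one_mul] at this
    exact_mod_cast this

lemma exists_eventually_le_tiltedDeviation (hq : 1 < q) {A K : ℝ} (hA : 0 ≤ A) (hK : 0 ≤ K) :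
    ∃ b : ℝ, 0 < b ∧ b ≤ 1 ∧
      ∀ᶠ n : ℕ in atTop, ∃ (k : Fin q) (σ : Fin n → Fin q), b ≤ tiltedDeviation A K k σ := by
  have : NeZero q := ⟨by omega⟩
  have hq2 : (2 : ℝ) ≤ q := by exact_mod_cast hq
  obtain ⟨M, hM⟩ : ∃ M, M = A * Real.exp K := ⟨_, rfl⟩
  have hM0 : 0 ≤ M := hM ▸ by positivity
  obtain ⟨ρ, hρ⟩ : ∃ ρ : ℝ, ρ = 1 / (4 * q * (M + 1)) := ⟨_, rfl⟩
  have hρ0 : 0 < ρ := by rw [hρ]; positivity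
  have hρM : ρ * (4 * q * (M + 1)) = 1 := by rw [hρ]; field_simp
  have hρq : ρ ≤ 1 / (2 * q) := by
    rw [le_div_iff₀ (by positivity)]
    nlinarith [mul_nonneg hρ0.le (mul_nonneg (by positivity : (0 : ℝ) ≤ q) hM0)]
  have hq' : 1 / (2 * (q : ℝ)) ≤ 1 := by rw [div_le_one (by positivity)]; linarith
  refine ⟨ρ / 2, half_pos hρ0, by linarith, ?_⟩
  filter_upwards [tendsto_natCast_atTop_atTop.eventually_ge_atTop (1 / ρ), eventually_ne_atTop 0]
    with n hn hn0
  have : NeZero n := ⟨hn0⟩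
  obtain ⟨c, hc, hcn, hd1, hd2⟩ := exists_block_size (by omega) hρ0 hρq hn
  obtain ⟨hdev, hsq⟩ := deviation_sqDeviation_blockConfig (k := ⟨q - 1, by omega⟩) hc hcn rfl
  refine ⟨⟨q - 1, by omega⟩, blockConfig q n c, ?_⟩
  have hlyap := mul_le_mul_of_nonneg_left
    (lyapunovSum_le_exp_mul_sqDeviation hK (blockConfig q n c)) hA
  rw [hsq, ← mul_assoc, ← hM] at hlyap
  rw [tiltedDeviation, hdev]
  set d := 1 / q - c / (n : ℝ)
  have hsmall : M * q * d ≤ 1 / 2 := by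
    have : M * q * d ≤ M * q * (2 * ρ) := by gcongr
    linarith [mul_pos hρ0 (by positivity : (0 : ℝ) < q)]
  have hqd : ρ ≤ (q - 1) * d := by nlinarith
  nlinarith [mul_le_mul_of_nonneg_left hsmall (hρ0.le.trans hqd)]

end StartingConfiguration

section LowerBound

variable {q n : ℕ} {β : ℝ}

lemma exp_neg_sub_le_one_sub {x : ℝ} (hx : x ≤ 1 / 2) :
    Real.exp (-x - 2 * x ^ 2) ≤ 1 - x := by
  have h1x : 0 < 1 - x := by linarith
  rw [← Real.le_log_iff_exp_le h1x]
  refine le_trans ?_ (Real.one_sub_inv_le_log_of_pos h1x)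
  rw [inv_eq_one_div, le_sub_iff_add_le, ← le_sub_iff_add_le', div_le_iff₀ h1x]
  nlinarith [mul_nonneg (sq_nonneg x) (by linarith : 0 ≤ 1 / 2 - x)]

lemma exp_le_mul_one_sub_div_pow_sq {κ γ : ℝ} (hκ : 0 < κ) (hκ1 : κ ≤ 1) (hγ : 0 ≤ γ)
    (hn : 2 ≤ n) {t : ℕ} (ht : (t : ℝ) ≤ 1 / (2 * κ) * n * Real.log n - γ * n) :
    Real.exp (2 * κ * γ - 2) ≤ n * ((1 - κ / n) ^ t) ^ 2 := by
  have hn2 : (2 : ℝ) ≤ n := by exact_mod_cast hn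
  have hn0 : (0 : ℝ) < n := by linarith
  obtain ⟨x, hx⟩ : ∃ x, x = κ / n := ⟨_, rfl⟩
  have hx0 : 0 < x := by rw [hx]; positivity
  have hx2 : x ≤ 1 / 2 := by rw [hx, div_le_iff₀ hn0]; linarith
  have hxn : x * n = κ := by rw [hx, div_mul_cancel₀ _ hn0.ne']
  have htime : 2 * x * t ≤ Real.log n - 2 * κ * γ := by
    have := mul_le_mul_of_nonneg_left ht (by positivity : 0 ≤ 2 * x)
    have hscale : 2 * x * (1 / (2 * κ) * n * Real.log n - γ * n) = Real.log n - 2 * κ * γ := by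
      rw [hx]; field_simp
    linarith
  have hsecond : 2 * x * t * (2 * x) ≤ 2 := by
    have hlog := (Real.log_le_sub_one_of_pos hn0)
    have : 2 * x * t ≤ n := by linarith [(by positivity : 0 ≤ 2 * κ * γ)]
    have := mul_le_mul_of_nonneg_right this (by positivity : 0 ≤ 2 * x)
    linarith
  rw [← hx]
  calc Real.exp (2 * κ * γ - 2)
      ≤ Real.exp (Real.log n + (2 * t : ℕ) * (-x - 2 * x ^ 2)) := by
        gcongr
        push_cast
        linarith
    _ = n * (Real.exp (-x - 2 * x ^ 2) ^ t) ^ 2 := by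
        rw [Real.exp_add, Real.exp_log hn0, Real.exp_nat_mul, mul_comm 2 t, pow_mul]
    _ ≤ n * ((1 - x) ^ t) ^ 2 := by
        gcongr
        exact exp_neg_sub_le_one_sub hx2

lemma abs_sum_sub_sum_le_tvDist {S : Type*} [Fintype S] (ν ν' : S → ℝ) (s : Finset S) :
    |∑ x ∈ s, ν x - ∑ x ∈ s, ν' x| ≤ tvDist ν ν' :=
  le_ciSup (f := fun s : Finset S ↦ |∑ x ∈ s, ν x - ∑ x ∈ s, ν' x|)
    (Set.finite_range _).bddAbove s

lemma pow_glauberOp_sub_pottsMean_le_glauberDist [NeZero q] [NeZero n] (β : ℝ) (t : ℕ)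
    (σ₀ : Fin n → Fin q) (p : (Fin n → Fin q) → Prop) [DecidablePred p] :
    (glauberOp q n β ^ t) (fun τ ↦ if p τ then 1 else 0) σ₀ -
      pottsMean q n β (fun τ ↦ if p τ then 1 else 0) ≤ glauberDist q n β t := by
  have htv := abs_sum_sub_sum_le_tvDist (fun τ ↦ (glauberKernel q n β ^ t) σ₀ τ)
    (pottsMeasure q n β) (univ.filter p)
  rw [← glauberKernel_pow_mulVec, pottsMean_apply]
  simp only [Matrix.mulVec, dotProduct, mul_ite, mul_one, mul_zero, ← sum_filter]
  exact (le_abs_self _).trans <| htv.trans <|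
    le_ciSup (f := fun σ₀ ↦ tvDist (fun τ ↦ (glauberKernel q n β ^ t) σ₀ τ) (pottsMeasure q n β))
      (Set.finite_range _).bddAbove σ₀

lemma IsExpectation.sq_mul_one_sub_le {A : Type*} {E E' : (A → ℝ) →ₗ[ℝ] ℝ} (hE : IsExpectation E)
    (hE' : IsExpectation E') (Y : A → ℝ) {s : ℝ} (hs : 0 ≤ s) :
    s ^ 2 * (1 - (E (fun a ↦ if s < Y a then 1 else 0) - E' fun a ↦ if s < Y a then 1 else 0)) ≤
      E (fun a ↦ max (2 * s - Y a) 0 ^ 2) + E' fun a ↦ Y a ^ 2 := by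
  have hbelow : E (fun a ↦ -s ^ 2 * (if s < Y a then 1 else 0) + s ^ 2) ≤
      E (fun a ↦ max (2 * s - Y a) 0 ^ 2) := hE.monotone fun a ↦ by
    dsimp only
    split_ifs with h
    · linarith [sq_nonneg (max (2 * s - Y a) 0)]
    · have : s ≤ max (2 * s - Y a) 0 := le_max_of_le_left (by linarith)
      linarith [pow_le_pow_left₀ hs this 2]
  have habove : E' (fun a ↦ s ^ 2 * (if s < Y a then 1 else 0) + 0) ≤ E' fun a ↦ Y a ^ 2 :=
    hE'.monotone fun a ↦ by
      dsimp only
      split_ifs with h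
      · linarith [pow_le_pow_left₀ hs h.le 2]
      · linarith [sq_nonneg (Y a)]
  rw [hE.map_affine] at hbelow
  rw [hE'.map_affine] at habove
  linarith

lemma exists_sq_mul_one_sub_glauberDist_le (hq : 1 < q) (hβ0 : 0 ≤ β) (hβ : β < betaS q) :
    ∃ b D : ℝ, 0 < b ∧ ∀ᶠ n : ℕ in atTop, ∀ t : ℕ,
      ((1 - relaxationRate q β / n) ^ t * b) ^ 2 * (1 - glauberDist q n β t) ≤ D / n := by
  have : NeZero q := ⟨by omega⟩
  have hκ := relaxationRate_pos hq hβ0 hβ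
  obtain ⟨K, hK⟩ := exists_isLyapunovExponent hq hκ fun _ ↦ Dfun_neg_of_lt_betaS hq hβ0 hβ
  obtain ⟨C, -, hmom⟩ := exists_pottsMean_sqDeviation_le hq hβ0 hβ
  obtain ⟨A, D, hA, -, hlow⟩ := exists_pow_glauberOp_max_sub_deviation_le hq hβ0 hκ hK
  obtain ⟨b, hb0, hb1, hstart⟩ := exists_eventually_le_tiltedDeviation hq hA hK.pos.le
  refine ⟨b / 2, D + C, by positivity, ?_⟩
  filter_upwards [hstart, eventually_ge_atTop 2] with n ⟨k, σ, hbσ⟩ hn t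
  have : NeZero n := ⟨by omega⟩
  obtain ⟨hr0, -⟩ := one_sub_rate_mem_Ico hκ (relaxationRate_le_one hβ0) one_pos
    (by exact_mod_cast NeZero.one_le : (1 : ℝ) ≤ n)
  rw [one_mul] at hr0
  set s := (1 - relaxationRate q β / n) ^ t * (b / 2) with hs
  have hE := ((isMarkov_glauberOp (q := q) (n := n) β).pow t).isExpectation σ
  have hE' := isExpectation_pottsMean (q := q) (n := n) β
  have hmoment : pottsMean q n β (fun τ ↦ deviation τ k ^ 2) ≤ C / n :=
    (hE'.monotone fun τ ↦ single_le_sum (f := fun j ↦ deviation τ j ^ 2)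
      (fun j _ ↦ sq_nonneg _) (mem_univ k)).trans (hmom n hn)
  have hlower := hlow n k σ b hb0.le hb1 hbσ t
  rw [show (1 - relaxationRate q β / n) ^ t * b = 2 * s by rw [hs]; ring] at hlower
  calc s ^ 2 * (1 - glauberDist q n β t)
      ≤ s ^ 2 * (1 - ((glauberOp q n β ^ t) (fun τ ↦ if s < deviation τ k then 1 else 0) σ -
          pottsMean q n β fun τ ↦ if s < deviation τ k then 1 else 0)) := by
        gcongr
        exact pow_glauberOp_sub_pottsMean_le_glauberDist β t σ (s < deviation · k)
    _ ≤ _ := hE.sq_mul_one_sub_le hE' (deviation · k) (by positivity)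
    _ ≤ D / n + C / n := add_le_add hlower hmoment
    _ = (D + C) / n := (add_div _ _ _).symm

theorem exists_eventually_lt_glauberDist (hq : 1 < q) (hβ0 : 0 ≤ β) (hβ : β < betaS q)
    {ε : ℝ} (hε : 0 < ε) : ∃ γ : ℝ, 0 < γ ∧ ∀ᶠ n : ℕ in atTop, ∀ t : ℕ,
      (t : ℝ) ≤ alpha1 β q * n * Real.log n - γ * n → 1 - ε < glauberDist q n β t := by
  have hκ := relaxationRate_pos hq hβ0 hβ
  have hκ1 := relaxationRate_le_one (q := q) hβ0
  obtain ⟨b, D, hb, hdist⟩ := exists_sq_mul_one_sub_glauberDist_le hq hβ0 hβ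
  obtain ⟨γ, hγ0, hγ⟩ : ∃ γ, 0 < γ ∧
      D / (b ^ 2 * ε) < Real.exp (2 * relaxationRate q β * γ - 2) := by
    have hlim : Tendsto (fun γ ↦ Real.exp (2 * relaxationRate q β * γ - 2)) atTop atTop :=
      Real.tendsto_exp_atTop.comp
        (tendsto_atTop_add_const_right _ (-2) (tendsto_id.const_mul_atTop (by positivity)))
    exact ((eventually_gt_atTop 0).and (hlim.eventually_gt_atTop _)).exists
  refine ⟨γ, hγ0, ?_⟩
  filter_upwards [hdist, eventually_ge_atTop 2] with n hn hn2 t ht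
  have hn0 : (0 : ℝ) < n := by exact_mod_cast zero_lt_two.trans_le hn2
  have hrate := hγ.trans_le (exp_le_mul_one_sub_div_pow_sq hκ hκ1 hγ0.le hn2 ht)
  rw [div_lt_iff₀ (by positivity)] at hrate
  by_contra! hle
  have hmul := mul_le_mul_of_nonneg_left (by linarith : ε ≤ 1 - glauberDist q n β t)
    (sq_nonneg ((1 - relaxationRate q β / n) ^ t * b))
  have := hmul.trans (hn t)
  rw [le_div_iff₀ hn0] at this
  linarith

end LowerBound

end CurieWeissPotts

theorem subcritical_cutoff_general (q : ℕ) (hq : 1 < q) (β : ℝ) (hβ0 : 0 ≤ β) (hβ : β < betaS q) :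
    ∀ ε ∈ Set.Ioo (0 : ℝ) 1, ∃ γ : ℝ, 0 < γ ∧
      ∀ᶠ n : ℕ in atTop,
        (mixingTime q n β ε : ℝ) ≤ alpha1 β q * n * Real.log n + γ * n ∧
        alpha1 β q * n * Real.log n - γ * n ≤ (mixingTime q n β (1 - ε) : ℝ) := by
  rintro ε ⟨hε0, hε1⟩
  obtain ⟨γ₁, hγ₁, hupper⟩ := CurieWeissPotts.exists_eventually_glauberDist_le hq hβ0 hβ hε0
  obtain ⟨γ₂, hγ₂, hlower⟩ := CurieWeissPotts.exists_eventually_lt_glauberDist hq hβ0 hβ hε0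
  obtain ⟨_, -, hmixes⟩ :=
    CurieWeissPotts.exists_eventually_glauberDist_le hq hβ0 hβ (sub_pos.2 hε1)
  refine ⟨γ₁ + γ₂, by positivity, ?_⟩
  filter_upwards [hupper, hlower, hmixes] with n ⟨t, ht, htn⟩ hfar ⟨t', ht', _⟩
  constructor
  · have hle : (mixingTime q n β ε : ℝ) ≤ t := by exact_mod_cast Nat.sInf_le ht
    linarith [(by positivity : 0 ≤ γ₂ * n)]
  · have hmem : glauberDist q n β (mixingTime q n β (1 - ε)) ≤ 1 - ε :=
      Nat.sInf_mem (s := {t | glauberDist q n β t ≤ 1 - ε}) ⟨t', ht'⟩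
    have := mt (hfar (mixingTime q n β (1 - ε))) hmem.not_gt
    linarith [(by positivity : 0 ≤ γ₁ * n)]

/-- **Theorem A (subcritical cutoff).** For `q ≥ 3` and `0 ≤ β < β_s(q)`,
the Glauber dynamics for the `q`-state Curie–Weiss Potts model exhibits cutoff at
time `α₁(β,q) n log n` with window of order `n`. -/
theorem subcritical_cutoff (q : ℕ) (hq : 3 ≤ q) (β : ℝ)
    (hβ0 : 0 ≤ β) (hβ : β < betaS q) :
    ∀ ε ∈ Set.Ioo (0 : ℝ) (1 / 2), ∃ γ : ℝ, 0 < γ ∧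
      ∀ᶠ n : ℕ in atTop,
        (mixingTime q n β ε : ℝ) ≤ alpha1 β q * n * Real.log n + γ * n ∧
        alpha1 β q * n * Real.log n - γ * n ≤ (mixingTime q n β (1 - ε) : ℝ) := by
  exact fun ε hε ↦ subcritical_cutoff_general q (by omega) β hβ0 hβ ε ⟨hε.1, by linarith [hε.2]⟩
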